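/- arXiv:2209.02171 — 2 statements merged into one kernel-verified Lean document; each statement's English description precedes it below -/
import Mathlib

section
/- Let F be a finite field with q elements of odd characteristic and let a₁, a₂, b₁, b₂ ∈ Fˣ satisfy a₁ ≠ a₂, b₁ ≠ b₂, a₁a₂b₁b₂ = 1, and a_i b_j ≠ 1 for all i, j ∈ {1,2}. Let C₁, C₂ be the conjugacy classes of diag(a₁,a₂) and diag(b₁,b₂) in GL₂(F) and let C₃ = C₄ be the regular unipotent conjugacy class. Then the number of quadruples (S₁, S₂, S₃, S₄) ∈ C₁ × C₂ × C₃ × C₄ with S₁S₂S₃S₄ = 1 equals (q³ − q)(q² + 2q − 1). -/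
open Classical in
theorem QC_mul {F : Type*} [Field F] [Fintype F] (k : F) :
    (((Finset.univ : Finset (F × F)).filter (fun p => p.1 * p.2 = k)).card : ℤ) =
      (Fintype.card F : ℤ) - 1 + if k = 0 then (Fintype.card F : ℤ) else 0 := by
  have h : ∀ y : F, (∑ z : F, if y * z = k then (1:ℤ) else 0) =
      if y = 0 then (if k = 0 then (Fintype.card F : ℤ) else 0) else 1 := by
    intro y
    split_ifs with h1 h2
    · subst h1 h2; simp
    · subst h1; simp [Ne.symm h2]
    · have : ∀ z, (y * z = k) ↔ z = k / y := by
        intro z; rw [eq_div_iff h1, mul_comm]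
      simp [this]
  rw [Finset.card_filter]
  push_cast
  rw [Fintype.sum_prod_type]
  simp only [h]
  rw [← Finset.add_sum_erase _ _ (Finset.mem_univ (0:F))]
  rw [Finset.sum_congr rfl (g := fun _ => (1:ℤ))]
  · have : 1 ≤ Fintype.card F := Fintype.card_pos
    simp [Finset.card_erase_of_mem]
    push_cast [this]; ring
  · intro x hx; simp at hx; simp [hx]

open Classical in
theorem QC_class {F : Type*} [Field F] [Fintype F] (a b : F) (hab : a ≠ b) :
    (((Finset.univ : Finset (F × F × F)).filter
      (fun p => p.1 * (a + b - p.1) - p.2.1 * p.2.2 = a * b)).card : ℤ) =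
      (Fintype.card F : ℤ) * (Fintype.card F + 1) := by
  rw [Finset.card_filter]
  push_cast
  rw [Fintype.sum_prod_type]
  have h : ∀ x : F, (∑ p : F × F, if x * (a + b - x) - p.1 * p.2 = a * b then (1:ℤ) else 0) =
      (Fintype.card F : ℤ) - 1 + ((if x = a then (Fintype.card F : ℤ) else 0) +
        (if x = b then (Fintype.card F : ℤ) else 0)) := by
    intro x
    have := QC_mul (x * (a + b - x) - a * b)
    rw [Finset.card_filter] at this
    push_cast at this
    have e : ∀ p : F × F, (x * (a + b - x) - p.1 * p.2 = a * b) ↔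
      (p.1 * p.2 = x * (a + b - x) - a * b) := by
      intro p; constructor <;> intro h <;> linear_combination -h
    simp only [e]
    rw [this]
    have e2 : x * (a + b - x) - a * b = 0 ↔ (x = a ∨ x = b) := by
      rw [← sub_eq_zero (a := x) (b := a), ← sub_eq_zero (a := x) (b := b), ← mul_eq_zero]
      constructor <;> intro h <;> linear_combination -h
    simp only [e2]
    by_cases h1 : x = a
    · subst h1; simp [hab]
    · simp [h1]
  simp only [h]
  simp [Finset.sum_add_distrib]
  ring

open Classical in
theorem QC_T {F : Type*} [Field F] [Fintype F] (a₁ a₂ b₁ b₂ : F)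
    (ha : a₁ ≠ a₂)
    (hprod : a₁ * a₂ * b₁ * b₂ = 1) (h11 : a₁ * b₁ ≠ 1) (h12 : a₁ * b₂ ≠ 1) :
    (((Finset.univ : Finset (F × F × F)).filter
      (fun p => p.1 * (b₁ + b₂ - p.1) - p.2.1 * p.2.2 = b₁ * b₂ ∧
        a₁ * p.1 + a₂ * (b₁ + b₂ - p.1) = 2)).card : ℤ) =
      (Fintype.card F : ℤ) - 1 := by
  have hs : a₁ - a₂ ≠ 0 := sub_ne_zero.mpr ha
  obtain ⟨x, hx⟩ : ∃ x, x = (2 - a₂ * (b₁ + b₂)) / (a₁ - a₂) := ⟨_, rfl⟩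
  have hx' : a₁ * x + a₂ * (b₁ + b₂ - x) = 2 := by rw [hx]; field_simp; ring
  have hk : x * (b₁ + b₂ - x) - b₁ * b₂ ≠ 0 := by
    intro h
    have : (x - b₁) * (x - b₂) = 0 := by linear_combination -h
    rcases mul_eq_zero.mp this with h | h
    · have : x = b₁ := by linear_combination h
      subst this
      have : (a₁ * x - 1) ^ 2 = 0 := by linear_combination (a₁ * x) * hx' - hprod
      have := pow_eq_zero_iff (two_ne_zero) |>.mp this
      exact h11 (by linear_combination this)
    · have : x = b₂ := by linear_combination h
      subst this
      have : (a₁ * x - 1) ^ 2 = 0 := by linear_combination (a₁ * x) * hx' - hprod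
      have := pow_eq_zero_iff (two_ne_zero) |>.mp this
      exact h12 (by linear_combination this)
  have := QC_mul (x * (b₁ + b₂ - x) - b₁ * b₂)
  rw [if_neg hk, add_zero] at this
  rw [← this]
  congr 1
  apply Finset.card_nbij' (fun p => p.2) (fun p => (x, p))
  · rintro ⟨x', y, z⟩ h
    simp at h ⊢
    have : x' = x := by
      have : (a₁ - a₂) * (x' - x) = 0 := by linear_combination h.2 - hx'
      have := (mul_eq_zero.mp this).resolve_left hs
      linear_combination this
    subst this
    linear_combination -h.1
  · rintro ⟨y, z⟩ h
    simp at h ⊢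
    exact ⟨by linear_combination -h, hx'⟩
  · rintro ⟨x', y, z⟩ h
    simp at h ⊢
    have : (a₁ - a₂) * (x' - x) = 0 := by linear_combination h.2 - hx'
    have := (mul_eq_zero.mp this).resolve_left hs
    linear_combination -this
  · rintro ⟨y, z⟩ h
    rfl

open Classical in
theorem QC_E0 {F : Type*} [Field F] [Fintype F] (a b : F) (hab : a ≠ b) :
    (((Finset.univ : Finset (F × F × F)).filter
      (fun p => p.1 * (a + b - p.1) - p.2.1 * p.2.2 = a * b ∧ p.2.2 = 0)).card : ℤ) =
      2 * (Fintype.card F : ℤ) := by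
  have : ((Finset.univ : Finset (F × F × F)).filter
      (fun p => p.1 * (a + b - p.1) - p.2.1 * p.2.2 = a * b ∧ p.2.2 = 0)) =
      ({a, b} : Finset F) ×ˢ ((Finset.univ : Finset F) ×ˢ ({0} : Finset F)) := by
    ext ⟨x, y, z⟩
    simp only [Finset.mem_filter, Finset.mem_univ, true_and, Finset.mem_product,
      Finset.mem_insert, Finset.mem_singleton]
    constructor
    · rintro ⟨h, rfl⟩
      refine ⟨?_, rfl⟩
      rw [← sub_eq_zero (a := x) (b := a), ← sub_eq_zero (a := x) (b := b), ← mul_eq_zero]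
      linear_combination -h
    · rintro ⟨rfl | rfl, rfl⟩ <;> exact ⟨by ring, rfl⟩
  rw [this]
  simp [Finset.card_product, Finset.card_pair hab]

open Classical in
theorem QC_E0' {F : Type*} [Field F] [Fintype F] (a b : F) (hab : a ≠ b) :
    (((Finset.univ : Finset (F × F × F)).filter
      (fun p => p.1 * (a + b - p.1) - p.2.1 * p.2.2 = a * b ∧ p.2.1 = 0)).card : ℤ) =
      2 * (Fintype.card F : ℤ) := by
  rw [← QC_E0 a b hab]
  congr 1
  apply Finset.card_nbij' (fun p => (p.1, p.2.2, p.2.1)) (fun p => (p.1, p.2.2, p.2.1))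
  · rintro ⟨x, y, z⟩ h
    simp at h ⊢
    exact ⟨by linear_combination h.1, h.2⟩
  · rintro ⟨x, y, z⟩ h
    simp at h ⊢
    exact ⟨by linear_combination h.1, h.2⟩
  · intro p _; rfl
  · intro p _; rfl

open Classical in
theorem QC_Em {F : Type*} [Field F] [Fintype F] (a₁ a₂ s d m : F)
    (ha0' : a₂ ≠ 0) (ha : a₁ ≠ a₂) (hd : d ≠ 0) (hm : m ≠ 0) :
    (((Finset.univ : Finset (F × F × F)).filter
      (fun p => p.1 * (s - p.1) - p.2.1 * p.2.2 = d ∧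
        a₂ * p.2.2 + a₂ * (s - p.1) * m - m * (a₁ * p.1 + a₁ * p.2.1 * m) = 0)).card : ℤ) =
      (Fintype.card F : ℤ) - 1 := by
  have hs : a₁ - a₂ ≠ 0 := sub_ne_zero.mpr ha
  have h1 : ((Finset.univ.erase (0:F)).card : ℤ) = (Fintype.card F : ℤ) - 1 := by
    have : 1 ≤ Fintype.card F := Fintype.card_pos
    simp [Finset.card_erase_of_mem]
    push_cast [this]; ring
  rw [← h1]
  congr 1
  apply Finset.card_nbij' (fun p => p.1 + p.2.1 * m)
    (fun p => (p - (s - p - d / p) * a₂ / (a₁ - a₂), (s - p - d / p) * a₂ / ((a₁ - a₂) * m),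
      a₁ / a₂ * m * p - (s - (p - (s - p - d / p) * a₂ / (a₁ - a₂))) * m))
  · rintro ⟨x, y, z⟩ h
    simp at h ⊢
    intro h0
    apply hd
    have : a₂ * d = 0 := by linear_combination (-a₂) * h.1 - y * h.2 + (a₂ * (s-x) - y * m * a₁) * h0
    exact (mul_eq_zero.mp this).resolve_left ha0'
  · intro p hp
    simp at hp ⊢
    constructor
    · field_simp; ring
    · field_simp; ring
  · rintro ⟨x, y, z⟩ h
    simp at h ⊢
    obtain ⟨h, h'⟩ := h
    have hp : x + y * m ≠ 0 := by
      intro h0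
      apply hd
      have : a₂ * d = 0 := by linear_combination (-a₂) * h - y * h' + (a₂ * (s-x) - y * m * a₁) * h0
      exact (mul_eq_zero.mp this).resolve_left ha0'
    have key : (s - (x + y * m) - d / (x + y * m)) * a₂ = y * m * (a₁ - a₂) := by
      have : d / (x + y * m) = s - x - a₁ / a₂ * m * y := by
        rw [div_eq_iff hp]
        field_simp
        linear_combination (-a₂) * h - y * h'
      rw [this]; field_simp; ring
    rw [key]
    refine ⟨?_, ?_, ?_⟩
    · field_simp; ring
    · field_simp
    · field_simp; linear_combination -h'
  · intro p hp
    simp at hp ⊢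
    field_simp; ring

open Classical in
/-- counting nonzero nilpotents `N` with prescribed `tr (M N)`, by lines -/
theorem QC_nilp {F : Type*} [Field F] [Fintype F] (α β γ δ k : F) :
    ((Finset.univ : Finset (F × F × F)).filter
      (fun p => p.1 ^ 2 + p.2.1 * p.2.2 = 0 ∧ p ≠ 0 ∧
        α * p.1 + β * p.2.2 + γ * p.2.1 - δ * p.1 = k)).card =
    ((Finset.univ : Finset (F × F)).filter
      (fun p => p.2 ≠ 0 ∧ p.2 * (γ + δ * p.1 - p.1 * (α + β * p.1)) = k)).card +
    ((Finset.univ : Finset F).filter (fun t => t ≠ 0 ∧ t * β = k)).card := by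
  rw [← Finset.card_filter_add_card_filter_not (fun p : F × F × F => p.2.1 ≠ 0)]
  congr 1
  · apply Finset.card_nbij' (fun p => (- p.1 / p.2.1, p.2.1))
      (fun p => (- p.2 * p.1, p.2, - p.2 * p.1 ^ 2))
    · rintro ⟨u, v, t⟩ h
      simp at h ⊢
      obtain ⟨⟨h1, h2, h3⟩, h4⟩ := h
      refine ⟨h4, ?_⟩
      field_simp
      linear_combination v * h3 - β * h1
    · rintro ⟨m, c⟩ h
      simp at h ⊢
      refine ⟨⟨by ring, fun _ h' => absurd h' h.1, by linear_combination h.2⟩, h.1⟩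
    · rintro ⟨u, v, t⟩ h
      simp at h ⊢
      obtain ⟨⟨h1, h2, h3⟩, h4⟩ := h
      refine ⟨by field_simp, ?_⟩
      field_simp
      linear_combination -h1
    · rintro ⟨m, c⟩ h
      simp at h ⊢
      have := h.1
      field_simp
  · apply Finset.card_nbij' (fun p => p.2.2) (fun t => (0, 0, t))
    · rintro ⟨u, v, t⟩ h
      simp at h ⊢
      obtain ⟨⟨h1, h2, h3⟩, h4⟩ := h
      subst h4
      have h5 : u = 0 := by simpa using h1
      subst h5
      refine ⟨h2 rfl rfl, by linear_combination h3⟩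
    · intro t h
      simp at h ⊢
      exact ⟨h.1, by linear_combination h.2⟩
    · rintro ⟨u, v, t⟩ h
      simp at h ⊢
      obtain ⟨⟨h1, h2, h3⟩, h4⟩ := h
      subst h4
      have h5 : u = 0 := by simpa using h1
      simp [h5]
    · intro t h
      rfl

open Classical in
theorem QC_scal {F : Type*} [Field F] [Fintype F] (Q k : F) :
    (((Finset.univ : Finset F).filter (fun t => t ≠ 0 ∧ t * Q = k)).card : ℤ) =
    if k = 0 then (if Q = 0 then (Fintype.card F : ℤ) - 1 else 0)
      else (1 - if Q = 0 then (1:ℤ) else 0) := by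
  have h1 : ((Finset.univ.filter (fun t : F => t ≠ 0)).card : ℤ) = (Fintype.card F : ℤ) - 1 := by
    have : 1 ≤ Fintype.card F := Fintype.card_pos
    rw [Finset.filter_ne']
    simp [Finset.card_erase_of_mem]
    push_cast [this]; ring
  split_ifs with hk hQ hQ
  · subst hk hQ
    simpa using h1
  · subst hk
    simp [hQ]
  · subst hQ
    simp [Ne.symm hk]
  · have : (Finset.univ.filter (fun t : F => t ≠ 0 ∧ t * Q = k)) = {k / Q} := by
      ext t
      simp only [Finset.mem_filter, Finset.mem_univ, true_and, Finset.mem_singleton]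
      rw [eq_div_iff hQ]
      constructor
      · exact fun h => h.2
      · rintro rfl
        exact ⟨fun h => hk (by simp [h]), rfl⟩
    rw [this]; simp

open Classical in
/-- number of eigenlines -/
noncomputable def QC_eig {F : Type*} [Field F] [Fintype F] (α β γ δ : F) : ℤ :=
  (∑ m : F, if γ + δ * m - m * (α + β * m) = 0 then (1:ℤ) else 0) + if β = 0 then (1:ℤ) else 0

open Classical in
theorem QC_nilp2 {F : Type*} [Field F] [Fintype F] (α β γ δ k : F) :
    (((Finset.univ : Finset (F × F × F)).filter
      (fun p => p.1 ^ 2 + p.2.1 * p.2.2 = 0 ∧ p ≠ 0 ∧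
        α * p.1 + β * p.2.2 + γ * p.2.1 - δ * p.1 = k)).card : ℤ) =
    if k = 0 then ((Fintype.card F : ℤ) - 1) * QC_eig α β γ δ
      else (Fintype.card F : ℤ) + 1 - QC_eig α β γ δ := by
  rw [QC_nilp]
  push_cast
  rw [QC_scal]
  rw [Finset.card_filter]
  push_cast
  rw [Fintype.sum_prod_type]
  have h : ∀ m : F, (∑ c : F, if c ≠ 0 ∧ c * (γ + δ * m - m * (α + β * m)) = k
      then (1:ℤ) else 0) =
      if k = 0 then (if γ + δ * m - m * (α + β * m) = 0 then (Fintype.card F : ℤ) - 1 else 0)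
        else (1 - if γ + δ * m - m * (α + β * m) = 0 then (1:ℤ) else 0) := by
    intro m
    have := QC_scal (γ + δ * m - m * (α + β * m)) k
    rw [Finset.card_filter] at this
    push_cast at this
    exact this
  simp only [h]
  unfold QC_eig
  split_ifs with hk hb hb
  · rw [mul_add, Finset.mul_sum]; simp
  · rw [mul_add, Finset.mul_sum]; simp
  · rw [Finset.sum_sub_distrib]; simp
  · rw [Finset.sum_sub_distrib]; simp; ring

theorem QC_eig_unip {F : Type*} [Field F] [Fintype F] (α β γ δ : F)
    (hd : α * δ - β * γ = 1) (ht : α + δ = 2) (h1 : ¬ (α = 1 ∧ β = 0 ∧ γ = 0 ∧ δ = 1)) :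
    QC_eig α β γ δ = 1 := by
  classical
  have hδ : δ = 2 - α := by linear_combination ht
  subst hδ
  unfold QC_eig
  by_cases hb : β = 0
  · subst hb
    have : (α - 1) ^ 2 = 0 := by linear_combination -hd
    have := pow_eq_zero_iff (two_ne_zero) |>.mp this
    have : α = 1 := by linear_combination this
    subst this
    have hg : γ ≠ 0 := fun h => h1 ⟨rfl, rfl, h, by ring⟩
    have : ∀ m : F, ¬ (γ + (2 - 1) * m - m * (1 + 0 * m) = 0) := by
      intro m h; apply hg; linear_combination h
    simp only [this]; simp
  · have : ∀ m : F, (γ + (2 - α) * m - m * (α + β * m) = 0) ↔ m = (1 - α) / β := by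
      intro m
      rw [eq_div_iff hb]
      constructor
      · intro h
        have : (β * m + α - 1) ^ 2 = 0 := by linear_combination -β * h - hd
        have := pow_eq_zero_iff (two_ne_zero) |>.mp this
        linear_combination this
      · intro h
        have : β * (γ + (2 - α) * m - m * (α + β * m)) = 0 := by
          linear_combination -hd - (β * m + α - 1) * h
        exact (mul_eq_zero.mp this).resolve_left hb
    simp [this, hb]

open Classical in
/-- Number of regular unipotents `S` with `M S` regular unipotent. -/
theorem QC_n {F : Type*} [Field F] [Fintype F] (α β γ δ : F)
    (hd : α * δ - β * γ = 1) (h1 : ¬ (α = 1 ∧ β = 0 ∧ γ = 0 ∧ δ = 1)) :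
    (((Finset.univ : Finset (F × F × F)).filter
      (fun p => (p.1 ^ 2 + p.2.1 * p.2.2 = 0 ∧ p ≠ 0 ∧
        α * p.1 + β * p.2.2 + γ * p.2.1 - δ * p.1 = 2 - (α + δ)) ∧
        ¬ (p = (δ - 1, - β, - γ) ∧ α + δ = 2))).card : ℤ) =
    (Fintype.card F : ℤ) + 1 - QC_eig α β γ δ - 2 * if α + δ = 2 then (1:ℤ) else 0 := by
  by_cases ht : α + δ = 2
  · have hmem : ((δ - 1, - β, - γ) : F × F × F) ∈ (Finset.univ : Finset (F × F × F)).filter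
      (fun p => (p.1 ^ 2 + p.2.1 * p.2.2 = 0 ∧ p ≠ 0 ∧
        α * p.1 + β * p.2.2 + γ * p.2.1 - δ * p.1 = 2 - (α + δ))) := by
      simp
      refine ⟨by linear_combination -hd + δ * ht, fun h2 h3 h4 => h1 ⟨?_, h3, h4, ?_⟩, ?_⟩
      · linear_combination ht - h2
      · linear_combination h2
      · linear_combination 2 * hd - δ * ht
    simp only [ht, and_true]
    rw [ht] at hmem
    rw [← Finset.filter_filter, Finset.filter_ne', Finset.card_erase_of_mem hmem, Nat.cast_sub,
      QC_nilp2, QC_eig_unip _ _ _ _ hd ht h1]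
    · simp; ring
    · rw [Nat.succ_le_iff, Finset.card_pos]
      exact ⟨_, hmem⟩
  · simp only [ht, and_false, not_false_eq_true, and_true]
    rw [QC_nilp2]
    have : ¬ (2 - (α + δ) = 0) := fun h => ht (by linear_combination -h)
    simp [this]

open Classical in
theorem QC_total {F : Type*} [Field F] [Fintype F] (a₁ a₂ b₁ b₂ : F)
    (ha0 : a₁ ≠ 0) (ha0' : a₂ ≠ 0)
    (ha : a₁ ≠ a₂) (hb : b₁ ≠ b₂) (hd : b₁ * b₂ ≠ 0)
    (hprod : a₁ * a₂ * b₁ * b₂ = 1) (h11 : a₁ * b₁ ≠ 1) (h12 : a₁ * b₂ ≠ 1) :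
    (∑ p ∈ (Finset.univ : Finset (F × F × F)).filter
      (fun p => p.1 * (b₁ + b₂ - p.1) - p.2.1 * p.2.2 = b₁ * b₂),
      ((Fintype.card F : ℤ) + 1 - QC_eig (a₁ * p.1) (a₁ * p.2.1) (a₂ * p.2.2)
        (a₂ * (b₁ + b₂ - p.1)) -
        2 * if a₁ * p.1 + a₂ * (b₁ + b₂ - p.1) = 2 then (1:ℤ) else 0)) =
    ((Fintype.card F : ℤ) - 1) * ((Fintype.card F : ℤ) ^ 2 + 2 * Fintype.card F - 1) := by
  rw [Finset.sum_sub_distrib, Finset.sum_sub_distrib, ← Finset.mul_sum]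
  unfold QC_eig
  rw [Finset.sum_add_distrib (g := fun p : F × F × F => if a₁ * p.2.1 = 0 then (1:ℤ) else 0),
    Finset.sum_comm]
  have c : ∀ P : F × F × F → Prop, (∑ p ∈ (Finset.univ : Finset (F × F × F)).filter
      (fun p => p.1 * (b₁ + b₂ - p.1) - p.2.1 * p.2.2 = b₁ * b₂), if P p then (1:ℤ) else 0) =
      (((Finset.univ : Finset (F × F × F)).filter
      (fun p => p.1 * (b₁ + b₂ - p.1) - p.2.1 * p.2.2 = b₁ * b₂ ∧ P p)).card : ℤ) := by
    intro P
    rw [← Finset.filter_filter, Finset.card_filter]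
    push_cast
    rfl
  simp only [c]
  rw [QC_T a₁ a₂ b₁ b₂ ha hprod h11 h12]
  have e0 := QC_E0' b₁ b₂ hb
  have e1 := QC_E0 b₁ b₂ hb
  have e2 := QC_Em a₁ a₂ (b₁ + b₂) (b₁ * b₂)
  rw [← Finset.add_sum_erase _ _ (Finset.mem_univ (0:F))]
  rw [Finset.sum_congr (s₁ := Finset.univ.erase (0:F)) rfl
    (g := fun _ => (Fintype.card F : ℤ) - 1)]
  · rw [Finset.sum_const, Finset.sum_const, nsmul_eq_mul, nsmul_eq_mul, QC_class b₁ b₂ hb]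
    have h1 : ((Finset.univ.erase (0:F)).card : ℤ) = (Fintype.card F : ℤ) - 1 := by
      have : 1 ≤ Fintype.card F := Fintype.card_pos
      simp [Finset.card_erase_of_mem]
      push_cast [this]; ring
    rw [h1]
    simp only [mul_eq_zero, ha0, false_or, mul_zero, zero_mul, add_zero, sub_zero, ha0']
    rw [e0, e1]
    ring
  · intro m hm
    simp at hm
    exact e2 m ha0' ha hd hm

theorem QC_isConj_of {F : Type*} [Field F] (A X P : Matrix (Fin 2) (Fin 2) F)
    (hP : P.det ≠ 0) (h : P * A = X * P) : IsConj A X := by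
  have hu : IsUnit P := (Matrix.isUnit_iff_isUnit_det P).mpr (isUnit_iff_ne_zero.mpr hP)
  obtain ⟨c, rfl⟩ := hu
  exact ⟨c, h⟩

theorem QC_conj_inv {F : Type*} [Field F] {A X : Matrix (Fin 2) (Fin 2) F}
    (h : IsConj A X) : X.trace = A.trace ∧ X.det = A.det := by
  obtain ⟨c, h⟩ := h
  have hX : X = c * A * (c⁻¹ : (Matrix (Fin 2) (Fin 2) F)ˣ) := by
    rw [Units.eq_mul_inv_iff_mul_eq]; exact h.symm
  rw [hX]
  constructor
  · rw [Matrix.trace_mul_comm, ← mul_assoc]; simp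
  · rw [Matrix.det_mul, Matrix.det_mul, mul_right_comm, ← Matrix.det_mul]; simp

theorem QC_ss {F : Type*} [Field F] (a b : F) (hab : a ≠ b) (x y z w : F) :
    IsConj (Matrix.diagonal ![a, b]) !![x, y; z, w] ↔ x + w = a + b ∧ x * w - y * z = a * b := by
  constructor
  · intro h
    have := QC_conj_inv h
    simpa [Matrix.trace_fin_two, Matrix.det_fin_two] using this
  · rintro ⟨h1, h2⟩
    have hab' : b - a ≠ 0 := sub_ne_zero.mpr hab.symm
    by_cases hy : y = 0
    · by_cases hz : z = 0
      · subst hy hz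
        have : (x - a) * (x - b) = 0 := by linear_combination x * h1 - h2
        rcases mul_eq_zero.mp this with h | h
        · have hx : x = a := by linear_combination h
          have hw : w = b := by linear_combination h1 - h
          subst hx hw
          have : (!![x, 0; 0, w] : Matrix (Fin 2) (Fin 2) F) = Matrix.diagonal ![x, w] := by
            ext i j; fin_cases i <;> fin_cases j <;> simp
          rw [this]
        · have hx : x = b := by linear_combination h
          have hw : w = a := by linear_combination h1 - h
          subst hx hw
          apply QC_isConj_of _ _ !![0, 1; 1, 0]
          · simp [Matrix.det_fin_two]
          · ext i j; fin_cases i <;> fin_cases j <;> simp [Matrix.mul_apply, Fin.sum_univ_two]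
      · apply QC_isConj_of _ _ !![a - w, b - w; z, z]
        · simp only [Matrix.det_fin_two_of]
          have : (a - w) * z - (b - w) * z = - ((b - a) * z) := by ring
          rw [this]
          exact neg_ne_zero.mpr (mul_ne_zero hab' hz)
        · ext i j; fin_cases i <;> fin_cases j <;>
            simp [Matrix.mul_apply, Fin.sum_univ_two]
          · linear_combination h2 - a * h1
          · linear_combination h2 - b * h1
          · ring
          · ring
    · apply QC_isConj_of _ _ !![y, y; a - x, b - x]
      · simp only [Matrix.det_fin_two_of]
        have : y * (b - x) - y * (a - x) = y * (b - a) := by ring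
        rw [this]
        exact mul_ne_zero hy hab'
      · ext i j; fin_cases i <;> fin_cases j <;>
            simp [Matrix.mul_apply, Fin.sum_univ_two]
        · ring
        · ring
        · linear_combination h2 - a * h1
        · linear_combination h2 - b * h1

theorem QC_un {F : Type*} [Field F] (x y z w : F) :
    IsConj (!![1, 1; 0, 1] : Matrix (Fin 2) (Fin 2) F) !![x, y; z, w] ↔
      x + w = 2 ∧ x * w - y * z = 1 ∧ ¬ (x = 1 ∧ y = 0 ∧ z = 0 ∧ w = 1) := by
  constructor
  · intro h
    have h' := QC_conj_inv h
    simp only [Matrix.trace_fin_two_of, Matrix.det_fin_two_of] at h'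
    refine ⟨by rw [h'.1]; norm_num, by rw [h'.2]; ring, ?_⟩
    rintro ⟨rfl, rfl, rfl, rfl⟩
    rw [← Matrix.one_fin_two, isConj_comm, isConj_one_right] at h
    have := congrFun (congrFun h 0) 1
    simp at this
  · rintro ⟨h1, h2, h3⟩
    have hw : w = 2 - x := by linear_combination h1
    subst hw
    by_cases hy : y = 0
    · subst hy
      have : (x - 1) ^ 2 = 0 := by linear_combination -h2
      have := pow_eq_zero_iff (two_ne_zero) |>.mp this
      have : x = 1 := by linear_combination this
      subst this
      have hz : z ≠ 0 := fun h => h3 ⟨rfl, rfl, h, by ring⟩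
      apply QC_isConj_of _ _ !![0, 1; z, 0]
      · simpa [Matrix.det_fin_two] using hz
      · ext i j; fin_cases i <;> fin_cases j <;>
          simp [Matrix.mul_apply, Fin.sum_univ_two]
        · ring
    · apply QC_isConj_of _ _ !![y, 0; 1 - x, 1]
      · simpa [Matrix.det_fin_two] using hy
      · ext i j; fin_cases i <;> fin_cases j <;>
          simp [Matrix.mul_apply, Fin.sum_univ_two]
        · ring
        · linear_combination h2
        · ring

theorem QC_ss' {F : Type*} [Field F] (a b : F) (hab : a ≠ b) (X : Matrix (Fin 2) (Fin 2) F) :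
    IsConj (Matrix.diagonal ![a, b]) X ↔
      X 0 0 + X 1 1 = a + b ∧ X 0 0 * X 1 1 - X 0 1 * X 1 0 = a * b := by
  rw [← QC_ss a b hab, ← Matrix.eta_fin_two X]

theorem QC_un' {F : Type*} [Field F] (X : Matrix (Fin 2) (Fin 2) F) :
    IsConj (!![1, 1; 0, 1] : Matrix (Fin 2) (Fin 2) F) X ↔
      X 0 0 + X 1 1 = 2 ∧ X 0 0 * X 1 1 - X 0 1 * X 1 0 = 1 ∧
        ¬ (X 0 0 = 1 ∧ X 0 1 = 0 ∧ X 1 0 = 0 ∧ X 1 1 = 1) := by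
  rw [← QC_un, ← Matrix.eta_fin_two X]

theorem QC_cardC {F : Type*} [Field F] [Fintype F] (a b : F) (hab : a ≠ b) :
    (Nat.card {X : Matrix (Fin 2) (Fin 2) F // IsConj (Matrix.diagonal ![a, b]) X} : ℤ) =
      (Fintype.card F : ℤ) * (Fintype.card F + 1) := by
  classical
  rw [← QC_class a b hab, ← Fintype.card_subtype, ← Nat.card_eq_fintype_card]
  congr 1
  refine Nat.card_congr ⟨fun X => ⟨(X.1 0 0, X.1 0 1, X.1 1 0), ?_⟩,
    fun p => ⟨!![p.1.1, p.1.2.1; p.1.2.2, a + b - p.1.1], ?_⟩, ?_, ?_⟩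
  · have := (QC_ss' a b hab X.1).mp X.2
    linear_combination this.2 - X.1 0 0 * this.1
  · rw [QC_ss a b hab]
    exact ⟨by ring, p.2⟩
  · rintro ⟨X, hX⟩
    have := (QC_ss' a b hab X).mp hX
    ext i j; fin_cases i <;> fin_cases j <;> simp
    linear_combination -this.1
  · rintro ⟨⟨x, y, z⟩, hp⟩
    simp

/-- triples completing `S` -/
def QC_Fib {F : Type*} [Field F] (b₁ b₂ : F) (S : Matrix (Fin 2) (Fin 2) F) : Type _ :=
  {y : Matrix (Fin 2) (Fin 2) F × Matrix (Fin 2) (Fin 2) F × Matrix (Fin 2) (Fin 2) F //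
    IsConj (Matrix.diagonal ![b₁, b₂]) y.1 ∧
    IsConj (!![1, 1; 0, 1] : Matrix (Fin 2) (Fin 2) F) y.2.1 ∧
    IsConj (!![1, 1; 0, 1] : Matrix (Fin 2) (Fin 2) F) y.2.2 ∧
    S * y.1 * y.2.1 * y.2.2 = 1}

theorem QC_isConj_conj {M : Type*} [Monoid M] (c : Mˣ) {A X : M} (h : IsConj A X) :
    IsConj A (c * X * (c⁻¹ : Mˣ)) := by
  refine h.trans ⟨c, ?_⟩
  simp [SemiconjBy, mul_assoc]

theorem QC_fib_conj {F : Type*} [Field F] (b₁ b₂ : F) (D S : Matrix (Fin 2) (Fin 2) F)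
    (h : IsConj D S) : Nat.card (QC_Fib b₁ b₂ S) = Nat.card (QC_Fib b₁ b₂ D) := by
  obtain ⟨c, h⟩ := h
  have hS : S = c * D * (c⁻¹ : (Matrix (Fin 2) (Fin 2) F)ˣ) := by
    rw [Units.eq_mul_inv_iff_mul_eq]; exact h.symm
  subst hS
  have key : ∀ (g : (Matrix (Fin 2) (Fin 2) F)ˣ) (A B C E : Matrix (Fin 2) (Fin 2) F),
      A * B * C * E = 1 → (g * A * (g⁻¹ : (Matrix (Fin 2) (Fin 2) F)ˣ)) *
      (g * B * (g⁻¹ : (Matrix (Fin 2) (Fin 2) F)ˣ)) *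
      (g * C * (g⁻¹ : (Matrix (Fin 2) (Fin 2) F)ˣ)) *
      (g * E * (g⁻¹ : (Matrix (Fin 2) (Fin 2) F)ˣ)) = 1 := by
    intro g A B C E h
    have : (g * A * (g⁻¹ : (Matrix (Fin 2) (Fin 2) F)ˣ)) *
      (g * B * (g⁻¹ : (Matrix (Fin 2) (Fin 2) F)ˣ)) *
      (g * C * (g⁻¹ : (Matrix (Fin 2) (Fin 2) F)ˣ)) *
      (g * E * (g⁻¹ : (Matrix (Fin 2) (Fin 2) F)ˣ)) =
      g * (A * B * C * E) * (g⁻¹ : (Matrix (Fin 2) (Fin 2) F)ˣ) := by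
      simp only [mul_assoc, Units.inv_mul_cancel_left]
    rw [this, h]; simp
  have c2 : ∀ X : Matrix (Fin 2) (Fin 2) F, (c⁻¹ : (Matrix (Fin 2) (Fin 2) F)ˣ) *
      (c * X * (c⁻¹ : (Matrix (Fin 2) (Fin 2) F)ˣ)) *
      ((c⁻¹)⁻¹ : (Matrix (Fin 2) (Fin 2) F)ˣ) = X := by
    intro X; simp only [mul_assoc, Units.inv_mul_cancel_left, Units.mul_inv, mul_one]
  have c3 : ∀ X : Matrix (Fin 2) (Fin 2) F, c *
      ((c⁻¹ : (Matrix (Fin 2) (Fin 2) F)ˣ) * X * ((c⁻¹)⁻¹ : (Matrix (Fin 2) (Fin 2) F)ˣ)) *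
      ((c⁻¹) : (Matrix (Fin 2) (Fin 2) F)ˣ) = X := by
    intro X; simp only [mul_assoc, Units.mul_inv_cancel_left, inv_inv, Units.mul_inv, mul_one]
  refine Nat.card_congr ⟨
    fun y => ⟨((c⁻¹ : (Matrix (Fin 2) (Fin 2) F)ˣ) * y.1.1 *
        ((c⁻¹)⁻¹ : (Matrix (Fin 2) (Fin 2) F)ˣ),
      (c⁻¹ : (Matrix (Fin 2) (Fin 2) F)ˣ) * y.1.2.1 * ((c⁻¹)⁻¹ : (Matrix (Fin 2) (Fin 2) F)ˣ),
      (c⁻¹ : (Matrix (Fin 2) (Fin 2) F)ˣ) * y.1.2.2 * ((c⁻¹)⁻¹ : (Matrix (Fin 2) (Fin 2) F)ˣ)),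
      QC_isConj_conj _ y.2.1, QC_isConj_conj _ y.2.2.1, QC_isConj_conj _ y.2.2.2.1, ?_⟩,
    fun y => ⟨(c * y.1.1 * (c⁻¹ : (Matrix (Fin 2) (Fin 2) F)ˣ),
      c * y.1.2.1 * (c⁻¹ : (Matrix (Fin 2) (Fin 2) F)ˣ),
      c * y.1.2.2 * (c⁻¹ : (Matrix (Fin 2) (Fin 2) F)ˣ)),
      QC_isConj_conj _ y.2.1, QC_isConj_conj _ y.2.2.1, QC_isConj_conj _ y.2.2.2.1,
      key c _ _ _ _ y.2.2.2.2⟩, ?_, ?_⟩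
  · have := key c⁻¹ _ _ _ _ y.2.2.2.2
    rw [c2] at this
    exact this
  · intro y
    apply Subtype.ext
    simp only [c3]
  · intro y
    apply Subtype.ext
    simp only [c2]

theorem QC_entry {F : Type*} [Field F] (α β γ δ u v t : F) (hd : α * δ - β * γ = 1)
    (S4 : Matrix (Fin 2) (Fin 2) F) :
    (IsConj (!![1, 1; 0, 1] : Matrix (Fin 2) (Fin 2) F) !![1 + u, v; t, 1 - u] ∧
      IsConj (!![1, 1; 0, 1] : Matrix (Fin 2) (Fin 2) F) S4 ∧
      !![α, β; γ, δ] * !![1 + u, v; t, 1 - u] * S4 = 1) ↔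
    (((u, v, t) : F × F × F).1 ^ 2 + ((u, v, t) : F × F × F).2.1 * ((u, v, t) : F × F × F).2.2 = 0
      ∧ ((u, v, t) : F × F × F) ≠ 0 ∧
        α * u + β * t + γ * v - δ * u = 2 - (α + δ)) ∧
        ¬ (((u, v, t) : F × F × F) = (δ - 1, - β, - γ) ∧ α + δ = 2) ∧
      S4 = (!![α, β; γ, δ] * !![1 + u, v; t, 1 - u]).adjugate := by
  have hW : u ^ 2 + v * t = 0 → (!![α, β; γ, δ] * !![1 + u, v; t, 1 - u]).det = 1 := by
    intro h
    rw [Matrix.det_mul, Matrix.det_fin_two_of, Matrix.det_fin_two_of, hd]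
    linear_combination -h
  have hS : u ^ 2 + v * t = 0 → (!![α, β; γ, δ] * !![1 + u, v; t, 1 - u] * S4 = 1 ↔
      S4 = (!![α, β; γ, δ] * !![1 + u, v; t, 1 - u]).adjugate) := by
    intro h
    have h := hW h
    constructor
    · intro h'
      have : (!![α, β; γ, δ] * !![1 + u, v; t, 1 - u]).adjugate *
        (!![α, β; γ, δ] * !![1 + u, v; t, 1 - u] * S4) = S4 := by
        rw [← mul_assoc, Matrix.adjugate_mul, h]; simp
      rw [h'] at this
      simpa using this.symm
    · rintro rfl
      rw [Matrix.mul_adjugate, h]; simp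
  have hadj : (!![α, β; γ, δ] * !![1 + u, v; t, 1 - u]).adjugate =
      !![γ * v + δ * (1 - u), -(α * v + β * (1 - u)); -(γ * (1 + u) + δ * t),
        α * (1 + u) + β * t] := by
    rw [Matrix.adjugate_fin_two]
    simp [Matrix.mul_apply, Fin.sum_univ_two]
  rw [QC_un]
  constructor
  · rintro ⟨⟨h1, h2, h3⟩, h4, h5⟩
    have h2' : u ^ 2 + v * t = 0 := by linear_combination -h2
    have h6 := (hS h2').mp h5
    refine ⟨⟨h2', ?_, ?_⟩, ?_, h6⟩
    · intro h
      simp at h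
      apply h3
      simp [h]
    · rw [h6, hadj, QC_un] at h4
      linear_combination h4.1
    · rintro ⟨h, h'⟩
      simp at h
      obtain ⟨rfl, rfl, rfl⟩ := h
      rw [h6, hadj, QC_un] at h4
      apply h4.2.2
      refine ⟨?_, ?_, ?_, ?_⟩
      · linear_combination hd - δ * h'
      · linear_combination β * h'
      · ring
      · linear_combination hd
  · rintro ⟨⟨h1, h2, h3⟩, h4, h5⟩
    simp only at h1
    refine ⟨⟨by ring, by linear_combination -h1, ?_⟩, ?_, (hS h1).mpr h5⟩
    · rintro ⟨h6, h7, h8, h9⟩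
      apply h2
      simp
      exact ⟨by linear_combination h6, h7, h8⟩
    · rw [h5, hadj, QC_un]
      have hdet := hW h1
      refine ⟨by linear_combination h3, ?_, ?_⟩
      · rw [Matrix.det_mul, Matrix.det_fin_two_of, Matrix.det_fin_two_of] at hdet
        linear_combination hdet
      · rintro ⟨e1, e2, e3, e4⟩
        -- `M S3 = 1`
        have f1 : 1 + u = δ := by
          linear_combination (-(1 + u)) * hd + δ * e4 + β * e3
        have f2 : v = - β := by
          linear_combination (- v) * hd - δ * e2 - β * e1
        have f3 : t = - γ := by
          linear_combination (- t) * hd - γ * e4 - α * e3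
        have f4 : 1 - u = α := by
          linear_combination (-(1 - u)) * hd + γ * e2 + α * e1
        apply h4
        refine ⟨?_, by linear_combination - f1 - f4⟩
        simp
        exact ⟨by linear_combination f1, f2, f3⟩

set_option maxHeartbeats 2000000 in
theorem QC_fibD {F : Type*} [Field F] [Fintype F] (a₁ a₂ b₁ b₂ : F)
    (ha0 : a₁ ≠ 0) (ha0' : a₂ ≠ 0)
    (ha : a₁ ≠ a₂) (hb : b₁ ≠ b₂) (hd : b₁ * b₂ ≠ 0)
    (hprod : a₁ * a₂ * b₁ * b₂ = 1) (h11 : a₁ * b₁ ≠ 1) (h12 : a₁ * b₂ ≠ 1) :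
    (Nat.card (QC_Fib b₁ b₂ (Matrix.diagonal ![a₁, a₂])) : ℤ) =
    ((Fintype.card F : ℤ) - 1) * ((Fintype.card F : ℤ) ^ 2 + 2 * Fintype.card F - 1) := by
  classical
  rw [← QC_total a₁ a₂ b₁ b₂ ha0 ha0' ha hb hd hprod h11 h12]
  have hdet : ∀ p : F × F × F, p.1 * (b₁ + b₂ - p.1) - p.2.1 * p.2.2 = b₁ * b₂ →
      (a₁ * p.1) * (a₂ * (b₁ + b₂ - p.1)) - (a₁ * p.2.1) * (a₂ * p.2.2) = 1 := by
    intro p hp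
    linear_combination a₁ * a₂ * hp + hprod
  have hn1 : ∀ p : F × F × F, p.1 * (b₁ + b₂ - p.1) - p.2.1 * p.2.2 = b₁ * b₂ →
      ¬ (a₁ * p.1 = 1 ∧ a₁ * p.2.1 = 0 ∧ a₂ * p.2.2 = 0 ∧ a₂ * (b₁ + b₂ - p.1) = 1) := by
    rintro ⟨x, y, z⟩ hp ⟨h1, h2, h3, h4⟩
    simp only at hp h1 h2 h3 h4
    have hy : y = 0 := (mul_eq_zero.mp h2).resolve_left ha0
    subst hy
    have : (x - b₁) * (x - b₂) = 0 := by linear_combination -hp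
    rcases mul_eq_zero.mp this with h | h
    · exact h11 (by linear_combination h1 - a₁ * h)
    · exact h12 (by linear_combination h1 - a₁ * h)
  have hM : ∀ x y z w : F, Matrix.diagonal ![a₁, a₂] * !![x, y; z, w] =
      !![a₁ * x, a₁ * y; a₂ * z, a₂ * w] := by
    intro x y z w
    ext i j; fin_cases i <;> fin_cases j <;> simp
  rw [Finset.sum_congr rfl (fun p hp =>
    (QC_n _ _ _ _ (hdet p (by simpa using hp)) (hn1 p (by simpa using hp))).symm)]
  rw [← Nat.cast_sum, ← Finset.card_sigma]
  congr 1
  rw [← Fintype.card_coe, ← Nat.card_eq_fintype_card]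
  symm
  apply Nat.card_eq_of_bijective (fun r => (⟨(
      !![r.1.1.1, r.1.1.2.1; r.1.1.2.2, b₁ + b₂ - r.1.1.1],
      !![1 + r.1.2.1, r.1.2.2.1; r.1.2.2.2, 1 - r.1.2.1],
      (!![a₁ * r.1.1.1, a₁ * r.1.1.2.1; a₂ * r.1.1.2.2, a₂ * (b₁ + b₂ - r.1.1.1)] *
      !![1 + r.1.2.1, r.1.2.2.1; r.1.2.2.2, 1 - r.1.2.1]).adjugate), by
      obtain ⟨⟨⟨x, y, z⟩, ⟨u, v, t⟩⟩, hr⟩ := r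
      rw [Finset.mem_sigma, Finset.mem_filter, Finset.mem_filter] at hr
      obtain ⟨⟨_, hr1⟩, _, hr2, hr3⟩ := hr
      refine ⟨(QC_ss _ _ hb _ _ _ _).mpr ⟨by ring, hr1⟩, ?_⟩
      have := (QC_entry _ _ _ _ u v t (hdet _ hr1) _).mpr ⟨hr2, hr3, rfl⟩
      refine ⟨this.1, this.2.1, ?_⟩
      rw [hM]
      exact this.2.2⟩ : QC_Fib b₁ b₂ (Matrix.diagonal ![a₁, a₂])))
  constructor
  · rintro ⟨⟨⟨x, y, z⟩, ⟨u, v, t⟩⟩, hr⟩ ⟨⟨⟨x', y', z'⟩, ⟨u', v', t'⟩⟩, hr'⟩ h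
    have h := Subtype.ext_iff.mp h
    simp only [Prod.mk.injEq] at h
    have e := h.1
    have e' := h.2.1
    have g1 := congrFun (congrFun e 0) 0
    have g2 := congrFun (congrFun e 0) 1
    have g3 := congrFun (congrFun e 1) 0
    have g4 := congrFun (congrFun e' 0) 0
    have g5 := congrFun (congrFun e' 0) 1
    have g6 := congrFun (congrFun e' 1) 0
    simp at g1 g2 g3 g4 g5 g6
    subst g1 g2 g3 g4 g5 g6
    rfl
  · rintro ⟨⟨S2, S3, S4⟩, h2, h3, h4, h5⟩
    simp only at h2 h3 h4 h5
    have k2 := (QC_ss' _ _ hb _).mp h2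
    have k3 := (QC_un' _).mp h3
    obtain ⟨x, y, z, e2, hr1⟩ : ∃ x y z : F, S2 = !![x, y; z, b₁ + b₂ - x] ∧
        x * (b₁ + b₂ - x) - y * z = b₁ * b₂ := by
      refine ⟨S2 0 0, S2 0 1, S2 1 0, ?_, ?_⟩
      · ext i j; fin_cases i <;> fin_cases j <;> simp
        linear_combination k2.1
      · linear_combination k2.2 - S2 0 0 * k2.1
    obtain ⟨u, v, t, e3⟩ : ∃ u v t : F, S3 = !![1 + u, v; t, 1 - u] := by
      refine ⟨S3 0 0 - 1, S3 0 1, S3 1 0, ?_⟩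
      ext i j; fin_cases i <;> fin_cases j <;> simp
      linear_combination k3.1
    clear k2 k3
    subst e2
    rw [e3] at h3 h5
    rw [hM] at h5
    have := (QC_entry _ _ _ _ u v t (hdet (x, y, z) hr1) S4).mp ⟨h3, h4, h5⟩
    refine ⟨⟨⟨(x, y, z), (u, v, t)⟩, ?_⟩, ?_⟩
    · rw [Finset.mem_sigma, Finset.mem_filter, Finset.mem_filter]
      exact ⟨⟨Finset.mem_univ _, hr1⟩, Finset.mem_univ _, this.1, this.2.1⟩
    · apply Subtype.ext
      simp only [Prod.mk.injEq]
      exact ⟨trivial, e3.symm, this.2.2.symm⟩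

/-- Genus 0, four punctures, `GL₂`, two generic regular semisimple classes and two regular
unipotent classes: the number of quadruples `(S₁,S₂,S₃,S₄) ∈ C₁ × C₂ × C₃ × C₄` with
`S₁S₂S₃S₄ = 1` is `(q³−q)(q²+2q−1)`. -/
theorem GL2_quadruple_count_two_ss_two_unipotent
    {F : Type*} [Field F] [Fintype F] (hchar : ringChar F ≠ 2)
    (q : ℕ) (hq : q = Fintype.card F)
    (a₁ a₂ b₁ b₂ : F)
    (ha0 : a₁ ≠ 0) (ha0' : a₂ ≠ 0) (hb0 : b₁ ≠ 0) (hb0' : b₂ ≠ 0)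
    (ha : a₁ ≠ a₂) (hb : b₁ ≠ b₂)
    (hprod : a₁ * a₂ * b₁ * b₂ = 1)
    (hgen : ∀ i j : Fin 2, ![a₁, a₂] i * ![b₁, b₂] j ≠ 1) :
    (Nat.card {x : Matrix (Fin 2) (Fin 2) F × Matrix (Fin 2) (Fin 2) F ×
        Matrix (Fin 2) (Fin 2) F × Matrix (Fin 2) (Fin 2) F //
        IsConj (Matrix.diagonal ![a₁, a₂]) x.1 ∧
        IsConj (Matrix.diagonal ![b₁, b₂]) x.2.1 ∧
        IsConj (!![1, 1; 0, 1] : Matrix (Fin 2) (Fin 2) F) x.2.2.1 ∧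
        IsConj (!![1, 1; 0, 1] : Matrix (Fin 2) (Fin 2) F) x.2.2.2 ∧
        x.1 * x.2.1 * x.2.2.1 * x.2.2.2 = 1} : ℤ) =
      ((q : ℤ) ^ 3 - q) * ((q : ℤ) ^ 2 + 2 * q - 1) := by
  classical
  have h11 : a₁ * b₁ ≠ 1 := by simpa using hgen 0 0
  have h12 : a₁ * b₂ ≠ 1 := by simpa using hgen 0 1
  have e : {x : Matrix (Fin 2) (Fin 2) F × Matrix (Fin 2) (Fin 2) F ×
        Matrix (Fin 2) (Fin 2) F × Matrix (Fin 2) (Fin 2) F //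
        IsConj (Matrix.diagonal ![a₁, a₂]) x.1 ∧
        IsConj (Matrix.diagonal ![b₁, b₂]) x.2.1 ∧
        IsConj (!![1, 1; 0, 1] : Matrix (Fin 2) (Fin 2) F) x.2.2.1 ∧
        IsConj (!![1, 1; 0, 1] : Matrix (Fin 2) (Fin 2) F) x.2.2.2 ∧
        x.1 * x.2.1 * x.2.2.1 * x.2.2.2 = 1} ≃
      Σ S : {X : Matrix (Fin 2) (Fin 2) F // IsConj (Matrix.diagonal ![a₁, a₂]) X},
        QC_Fib b₁ b₂ S.1 :=
    ⟨fun x => ⟨⟨x.1.1, x.2.1⟩, ⟨x.1.2, x.2.2⟩⟩, fun y => ⟨(y.1.1, y.2.1), y.1.2, y.2.2⟩,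
      fun x => rfl, fun y => rfl⟩
  haveI : ∀ S : {X : Matrix (Fin 2) (Fin 2) F // IsConj (Matrix.diagonal ![a₁, a₂]) X},
      Finite (QC_Fib b₁ b₂ S.1) := fun S => by unfold QC_Fib; infer_instance
  rw [Nat.card_congr e, Nat.card_sigma,
    Finset.sum_congr rfl (fun S _ => QC_fib_conj b₁ b₂ _ S.1 S.2), Finset.sum_const,
    Finset.card_univ, ← Nat.card_eq_fintype_card, smul_eq_mul]
  push_cast
  rw [QC_cardC a₁ a₂ ha, QC_fibD a₁ a₂ b₁ b₂ ha0 ha0' ha hb (mul_ne_zero hb0 hb0') hprod h11 h12,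
    hq]
  ring
end

section
/- Let F be a finite field with q elements whose characteristic is neither 2 nor 3, and let a₁,a₂,a₃, b₁,b₂,b₃ ∈ Fˣ be such that the a_i are pairwise distinct, the b_i are pairwise distinct, (a₁a₂a₃)(b₁b₂b₃) = 1, and a_i b_j ≠ 1 for all i, j ∈ {1,2,3}. Let C₁, C₂ be the conjugacy classes of diag(a₁,a₂,a₃) and diag(b₁,b₂,b₃) in GL₃(F) and let C₃ = C₄ be the regular unipotent conjugacy class. Then the number of quadruples (S₁, S₂, S₃, S₄) ∈ C₁ × C₂ × C₃ × C₄ with S₁S₂S₃S₄ = 1 equals (|GL₃(F)|/(q−1)) · (q²(q+1)²(q²+q+1)² − 9q²(q+1)² + 12q²). -/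
namespace GL3
open Matrix
open scoped Classical
noncomputable section
set_option linter.unusedSectionVars false
set_option linter.unusedSimpArgs false

variable {F : Type*} [Field F] [Fintype F]

/-- the group -/
abbrev G (F : Type*) [Field F] := (Matrix (Fin 3) (Fin 3) F)ˣ

/-- regular unipotent -/
def regU (M : Matrix (Fin 3) (Fin 3) F) : Prop := (M - 1) ^ 3 = 0 ∧ (M - 1) ^ 2 ≠ 0

def T (f : G F → ℤ) (g : G F) : ℤ := ∑ u : G F, if regU (u : Matrix (Fin 3) (Fin 3) F) then f (g * u) else 0

def Ind (f : G F → ℤ) (g : G F) : ℤ := ∑ p : G F, f (p⁻¹ * g * p)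

lemma conj_pow_sub (u p : G F) (k : ℕ) :
    (((p * u * p⁻¹ : G F) : Matrix (Fin 3) (Fin 3) F) - 1) ^ k =
      (p : Matrix (Fin 3) (Fin 3) F) * ((u : Matrix (Fin 3) (Fin 3) F) - 1) ^ k * ((p⁻¹ : G F) : Matrix (Fin 3) (Fin 3) F) := by
  have h : (((p * u * p⁻¹ : G F) : Matrix (Fin 3) (Fin 3) F) - 1) = (p : Matrix (Fin 3) (Fin 3) F) * ((u : Matrix (Fin 3) (Fin 3) F) - 1) * ((p⁻¹ : G F) : Matrix (Fin 3) (Fin 3) F) := by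
    rw [mul_sub, sub_mul, mul_one, Units.mul_inv]; simp
  rw [h, Units.conj_pow]

lemma regU_conj (u p : G F) :
    regU ((p * u * p⁻¹ : G F) : Matrix (Fin 3) (Fin 3) F) ↔ regU (u : Matrix (Fin 3) (Fin 3) F) := by
  have key : ∀ k, (((p * u * p⁻¹ : G F) : Matrix (Fin 3) (Fin 3) F) - 1) ^ k = 0 ↔
      ((u : Matrix (Fin 3) (Fin 3) F) - 1) ^ k = 0 := by
    intro k
    rw [conj_pow_sub, Units.mul_left_eq_zero, Units.mul_right_eq_zero]
  unfold regU
  rw [key, Ne, key]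

lemma T_conj (f : G F → ℤ) (g p : G F) :
    T f (g * p) = T (fun x => f (x * p)) g := by
  unfold T
  rw [← Equiv.sum_comp (MulAut.conj p).toEquiv
    (fun u : G F => if regU (u : Matrix (Fin 3) (Fin 3) F) then f (g * u * p) else 0)]
  apply Finset.sum_congr rfl
  intro u _
  simp only [MulEquiv.toEquiv_eq_coe, EquivLike.coe_coe, MulAut.conj_apply, regU_conj]
  congr 2
  group

lemma T_Ind (f : G F → ℤ) (g : G F) : T (Ind f) g = Ind (T f) g := by
  have : ∀ p : G F, T f (p⁻¹ * g * p) = ∑ u : G F, if regU (u : Matrix (Fin 3) (Fin 3) F) then f (p⁻¹ * (g * u) * p) else 0 := by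
    intro p
    rw [T_conj]
    unfold T
    simp only [mul_assoc]
  simp only [Ind, this]
  rw [Finset.sum_comm]
  unfold T
  apply Finset.sum_congr rfl
  intro u _
  split_ifs
  · rfl
  · simp

lemma T_sum (f f' : G F → ℤ) (g : G F) : T (fun x => f x + f' x) g = T f g + T f' g := by
  unfold T
  rw [← Finset.sum_add_distrib]
  apply Finset.sum_congr rfl
  intro u _
  split_ifs <;> simp

lemma T_smul (c : ℤ) (f : G F → ℤ) (g : G F) : T (fun x => c * f x) g = c * T f g := by
  unfold T
  rw [Finset.mul_sum]
  apply Finset.sum_congr rfl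
  intro u _
  split_ifs <;> simp

lemma Ind_sum (f f' : G F → ℤ) (g : G F) : Ind (fun x => f x + f' x) g = Ind f g + Ind f' g := by
  simp [Ind, Finset.sum_add_distrib]

lemma Ind_smul (c : ℤ) (f : G F → ℤ) (g : G F) : Ind (fun x => c * f x) g = c * Ind f g := by
  simp [Ind, Finset.mul_sum]

lemma Ind_conj (f : G F → ℤ) (g r : G F) : Ind f (r * g * r⁻¹) = Ind f g := by
  unfold Ind
  rw [← Equiv.sum_comp (Equiv.mulLeft r)]
  apply Finset.sum_congr rfl
  intro p _
  simp only [Equiv.coe_mulLeft]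
  congr 1
  group

/-- upper triangular element -/
def tri (a b c : Fˣ) (x y z : F) : G F where
  val := !![(a : F), x, z; 0, (b : F), y; 0, 0, (c : F)]
  inv := !![(a : F)⁻¹, -x * (a : F)⁻¹ * (b : F)⁻¹,
      (x * y * (b : F)⁻¹ - z) * (a : F)⁻¹ * (c : F)⁻¹;
      0, (b : F)⁻¹, -y * (b : F)⁻¹ * (c : F)⁻¹; 0, 0, (c : F)⁻¹]
  val_inv := by
    have ha := a.ne_zero
    have hb := b.ne_zero
    have hc := c.ne_zero
    ext i j
    fin_cases i <;> fin_cases j <;> simp [Matrix.mul_apply, Fin.sum_univ_three] <;> field_simp <;> ring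
  inv_val := by
    have ha := a.ne_zero
    have hb := b.ne_zero
    have hc := c.ne_zero
    ext i j
    fin_cases i <;> fin_cases j <;> simp [Matrix.mul_apply, Fin.sum_univ_three] <;> field_simp <;> ring

def up (g : G F) : Prop :=
  (g : Matrix (Fin 3) (Fin 3) F) 1 0 = 0 ∧ (g : Matrix (Fin 3) (Fin 3) F) 2 0 = 0 ∧
    (g : Matrix (Fin 3) (Fin 3) F) 2 1 = 0

def phi (θ : F → F → F → ℤ) (g : G F) : ℤ :=
  if up g then θ ((g : Matrix (Fin 3) (Fin 3) F) 0 0) ((g : Matrix (Fin 3) (Fin 3) F) 1 1)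
    ((g : Matrix (Fin 3) (Fin 3) F) 2 2) else 0

lemma up_iff (g : G F) : up g ↔ ∃ a b c x y z, g = tri a b c x y z := by
  constructor
  · rintro ⟨h1, h2, h3⟩
    have hdet : (g : Matrix (Fin 3) (Fin 3) F).det ≠ 0 := by
      have := (Matrix.isUnit_iff_isUnit_det _).1 g.isUnit
      exact this.ne_zero
    rw [Matrix.det_fin_three, h1, h2, h3] at hdet
    simp at hdet
    refine ⟨Units.mk0 _ hdet.1.1, Units.mk0 _ hdet.1.2, Units.mk0 _ hdet.2,
      (g : Matrix (Fin 3) (Fin 3) F) 0 1, (g : Matrix (Fin 3) (Fin 3) F) 1 2, (g : Matrix (Fin 3) (Fin 3) F) 0 2, ?_⟩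
    ext i j
    fin_cases i <;> fin_cases j <;> simp [tri, h1, h2, h3]
  · rintro ⟨a, b, c, x, y, z, rfl⟩
    simp [up, tri]

/-- sum over the Borel -/
lemma sum_up (f : G F → ℤ) :
    (∑ g : G F, if up g then f g else 0) =
      ∑ a : Fˣ, ∑ b : Fˣ, ∑ c : Fˣ, ∑ x : F, ∑ y : F, ∑ z : F, f (tri a b c x y z) := by
  have : (∑ a : Fˣ, ∑ b : Fˣ, ∑ c : Fˣ, ∑ x : F, ∑ y : F, ∑ z : F, f (tri a b c x y z)) =
      ∑ t : Fˣ × Fˣ × Fˣ × F × F × F, f (tri t.1 t.2.1 t.2.2.1 t.2.2.2.1 t.2.2.2.2.1 t.2.2.2.2.2) := by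
    simp only [Fintype.sum_prod_type]
  rw [this]
  symm
  rw [← Finset.sum_filter]
  apply Finset.sum_bij (fun t _ => tri t.1 t.2.1 t.2.2.1 t.2.2.2.1 t.2.2.2.2.1 t.2.2.2.2.2)
  · rintro ⟨a, b, c, x, y, z⟩ _
    rw [Finset.mem_filter]
    exact ⟨Finset.mem_univ _, (up_iff _).2 ⟨a, b, c, x, y, z, rfl⟩⟩
  · rintro ⟨a, b, c, x, y, z⟩ _ ⟨a', b', c', x', y', z'⟩ _ h
    have h' := congrArg (fun g : G F => (g : Matrix (Fin 3) (Fin 3) F)) h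
    have e := fun i j => congrFun (congrFun h' i) j
    have e1 := e 0 0
    have e2 := e 0 1
    have e3 := e 0 2
    have e4 := e 1 1
    have e5 := e 1 2
    have e6 := e 2 2
    simp [tri] at e1 e2 e3 e4 e5 e6
    simp [e2, e3, e5, Units.ext e1, Units.ext e4, Units.ext e6]
  · intro g hg
    rw [Finset.mem_filter] at hg
    obtain ⟨a, b, c, x, y, z, h⟩ := (up_iff g).1 hg.2
    exact ⟨(a, b, c, x, y, z), Finset.mem_univ _, h.symm⟩
  · intros; rfl

lemma T_phi (θ : F → F → F → ℤ) (g : G F) :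
    T (phi θ) g = ∑ a : Fˣ, ∑ b : Fˣ, ∑ c : Fˣ, θ a b c *
      ∑ x : F, ∑ y : F, ∑ z : F,
        if regU ((g⁻¹ * tri a b c x y z : G F) : Matrix (Fin 3) (Fin 3) F) then 1 else 0 := by
  have : T (phi θ) g = ∑ s : G F, if up s then
      (if regU ((g⁻¹ * s : G F) : Matrix (Fin 3) (Fin 3) F) then θ ((s : Matrix (Fin 3) (Fin 3) F) 0 0) ((s : Matrix (Fin 3) (Fin 3) F) 1 1)
    ((s : Matrix (Fin 3) (Fin 3) F) 2 2) else 0) else 0 := by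
    unfold T
    rw [← Equiv.sum_comp (Equiv.mulLeft g⁻¹)]
    apply Finset.sum_congr rfl
    intro u _
    simp only [Equiv.coe_mulLeft, phi, mul_inv_cancel_left]
    split_ifs <;> rfl
  rw [this, sum_up]
  simp only [Finset.mul_sum]
  refine Finset.sum_congr rfl fun a _ => Finset.sum_congr rfl fun b _ => Finset.sum_congr rfl fun c _ =>
    Finset.sum_congr rfl fun x _ => Finset.sum_congr rfl fun y _ => Finset.sum_congr rfl fun z _ => ?_
  simp [tri]

/-- reduction to a permutation matrix -/
lemma T_phi_bwv (θ : F → F → F → ℤ) (a b c : Fˣ) (x y z x' y' z' : F) (w : G F) :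
    T (phi θ) (tri a b c x y z * w * tri 1 1 1 x' y' z') =
      T (phi (fun t1 t2 t3 => θ (a * t1) (b * t2) (c * t3))) w := by
  rw [T_conj]
  unfold T
  apply Finset.sum_congr rfl
  intro u _
  congr 1
  rw [mul_assoc (tri a b c x y z)]
  generalize w * u = s
  have key : ∀ s : G F, up s → up (tri a b c x y z * s * tri 1 1 1 x' y' z') := by
    rintro s ⟨h1, h2, h3⟩
    simp [up, tri, Matrix.mul_apply, Matrix.vecMul, dotProduct, Fin.sum_univ_three, h1, h2, h3]
  by_cases h : up s
  · unfold phi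
    beta_reduce
    rw [if_pos h, if_pos (key s h)]
    obtain ⟨h1, h2, h3⟩ := h
    simp [tri, Matrix.mul_apply, Matrix.vecMul, dotProduct, Fin.sum_univ_three, h1, h2, h3]
  · unfold phi
    beta_reduce
    rw [if_neg h, if_neg]
    contrapose! h
    obtain ⟨a1, b1, c1, x1, y1, z1, h⟩ := (up_iff _).1 h
    have : s = (tri a b c x y z)⁻¹ * tri a1 b1 c1 x1 y1 z1 * (tri 1 1 1 x' y' z')⁻¹ := by
      rw [← h]; group
    rw [this]
    simp [up, tri, Matrix.mul_apply, Fin.sum_univ_three]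

end
end GL3

namespace GL3
open Matrix
open scoped Classical
noncomputable section
set_option linter.unusedSectionVars false
set_option linter.unusedSimpArgs false

variable {F : Type*} [Field F] [Fintype F]

lemma cube_zero_iff (h2 : (2 : F) ≠ 0) (a b c d e f g h i : F) :
    (!![a, b, c; d, e, f; g, h, i] : Matrix (Fin 3) (Fin 3) F) ^ 3 = 0 ↔
      a + e + i = 0 ∧ (a * e - b * d) + (a * i - c * g) + (e * i - f * h) = 0 ∧
      a * (e * i - f * h) - b * (d * i - f * g) + c * (d * h - e * g) = 0 := by
  set N : Matrix (Fin 3) (Fin 3) F := !![a, b, c; d, e, f; g, h, i] with hN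
  constructor
  · intro h3
    have hn : IsNilpotent N := ⟨3, h3⟩
    have t1 := (Matrix.isNilpotent_trace_of_isNilpotent hn).eq_zero
    have t2 := (Matrix.isNilpotent_trace_of_isNilpotent (hn.pow_succ 1)).eq_zero
    have t3 : N.det ^ 3 = 0 := by rw [← Matrix.det_pow, h3]; simp
    have t3' := pow_eq_zero_iff (n := 3) (by norm_num) |>.1 t3
    rw [Matrix.det_fin_three] at t3'
    simp [hN, Matrix.trace, Fin.sum_univ_three, pow_two, Matrix.mul_apply] at t1 t2 t3'
    refine ⟨t1, ?_, ?_⟩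
    · apply mul_left_cancel₀ h2
      linear_combination (a + e + i) * t1 - t2
    · linear_combination t3'
  · rintro ⟨h1, h2', h3⟩
    have hh : N ^ 3 = (a + e + i) • N ^ 2 - ((a * e - b * d) + (a * i - c * g) + (e * i - f * h)) • N
        + (a * (e * i - f * h) - b * (d * i - f * g) + c * (d * h - e * g)) • 1 := by
      ext i j
      fin_cases i <;> fin_cases j <;>
        simp [hN, pow_succ, Matrix.mul_apply, Fin.sum_univ_three] <;> ring
    rw [hh, h1, h2', h3]
    simp

lemma regU_iff (h2 : (2 : F) ≠ 0) (a b c d e f g h i : F) :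
    regU (!![a, b, c; d, e, f; g, h, i] : Matrix (Fin 3) (Fin 3) F) ↔
      (a + e + i = 3 ∧ (a * e - b * d) + (a * i - c * g) + (e * i - f * h) = 3 ∧
      a * (e * i - f * h) - b * (d * i - f * g) + c * (d * h - e * g) = 1) ∧
      (!![a - 1, b, c; d, e - 1, f; g, h, i - 1] : Matrix (Fin 3) (Fin 3) F) ^ 2 ≠ 0 := by
  have : (!![a, b, c; d, e, f; g, h, i] : Matrix (Fin 3) (Fin 3) F) - 1 =
      !![a - 1, b, c; d, e - 1, f; g, h, i - 1] := by
    ext i j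
    fin_cases i <;> fin_cases j <;> simp
  unfold regU
  rw [this, cube_zero_iff h2]
  apply and_congr _ Iff.rfl
  constructor
  · rintro ⟨h1, h2, h3⟩
    exact ⟨by linear_combination h1, by linear_combination h2 + 2 * h1,
      by linear_combination h3 + h2 + h1⟩
  · rintro ⟨h1, h2, h3⟩
    exact ⟨by linear_combination h1, by linear_combination h2 - 2 * h1,
      by linear_combination h3 - h2 + h1⟩

lemma sq_ne_iff (a b c d e f g h i : F) :
    (!![a, b, c; d, e, f; g, h, i] : Matrix (Fin 3) (Fin 3) F) ^ 2 ≠ 0 ↔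
      ¬ ((a * a + b * d + c * g = 0 ∧ a * b + b * e + c * h = 0 ∧ a * c + b * f + c * i = 0) ∧
       (d * a + e * d + f * g = 0 ∧ d * b + e * e + f * h = 0 ∧ d * c + e * f + f * i = 0) ∧
       (g * a + h * d + i * g = 0 ∧ g * b + h * e + i * h = 0 ∧ g * c + h * f + i * i = 0)) := by
  rw [Ne, not_iff_not, ← Matrix.ext_iff]
  simp [Fin.forall_fin_succ, pow_two, Matrix.mul_apply, Fin.sum_univ_three, add_assoc]

lemma reg_e (h2 : (2 : F) ≠ 0) (a b c : Fˣ) (x y z : F) :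
    regU (!![(a : F), x, z; 0, (b : F), y; 0, 0, (c : F)]) ↔ (a = 1 ∧ b = 1 ∧ c = 1) ∧ x ≠ 0 ∧ y ≠ 0 := by
  have h3 : regU (!![(a : F), x, z; 0, (b : F), y; 0, 0, (c : F)]) → (a : F) = 1 ∧ (b : F) = 1 ∧ (c : F) = 1 := by
    rintro ⟨h, -⟩
    have e1 := congrFun (congrFun h 0) 0
    have e2 := congrFun (congrFun h 1) 1
    have e3 := congrFun (congrFun h 2) 2
    simp [pow_succ, Matrix.mul_apply, Fin.sum_univ_three] at e1 e2 e3
    exact ⟨sub_eq_zero.1 e1, sub_eq_zero.1 e2, sub_eq_zero.1 e3⟩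
  simp only [Units.ext_iff, Units.val_one]
  constructor
  · intro h
    obtain ⟨ha, hb, hc⟩ := h3 h
    refine ⟨⟨ha, hb, hc⟩, ?_⟩
    rw [regU_iff h2, sq_ne_iff, ha, hb, hc] at h
    simp at h
    tauto
  · rintro ⟨⟨ha, hb, hc⟩, hx, hy⟩
    rw [regU_iff h2, sq_ne_iff, ha, hb, hc]
    simp [hx, hy]
    norm_num

lemma reg_s1 (h2 : (2 : F) ≠ 0) (a b c : Fˣ) (x y z : F) :
    regU (!![0, (b : F), y; (a : F), x, z; 0, 0, (c : F)]) ↔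
      (b = -a⁻¹ ∧ c = 1) ∧ x = 2 ∧ y ≠ b * z := by
  have ha := a.ne_zero
  have hb' : b = -a⁻¹ ↔ (a : F) * b = -1 := by
    rw [Units.ext_iff]; push_cast
    constructor
    · intro h; rw [h]; field_simp
    · intro h; field_simp; linear_combination h
  rw [regU_iff h2, hb', Units.ext_iff, Units.val_one, sq_ne_iff]
  constructor
  · rintro ⟨⟨e1, e2, e3⟩, h⟩
    have hc : (c : F) = 1 := by
      have : ((c : F) - 1) ^ 3 = 0 := by linear_combination e3 - c * e2 + c ^ 2 * e1
      exact sub_eq_zero.1 (pow_eq_zero_iff (by norm_num) |>.1 this)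
    rw [hc] at e1 e2 e3 h
    have hx : x = 2 := by linear_combination e1
    have hab : (a : F) * b = -1 := by linear_combination -e3
    refine ⟨⟨hab, hc⟩, hx, fun hy => h ?_⟩
    rw [hx, hy]
    refine ⟨⟨?_, ?_, ?_⟩, ⟨?_, ?_, ?_⟩, ?_, ?_, ?_⟩ <;> first
      | ring1
      | linear_combination hab
      | linear_combination z * hab
  · rintro ⟨⟨hab, hc⟩, hx, hy⟩
    rw [hc, hx]
    refine ⟨⟨by ring, by linear_combination -hab, by linear_combination -hab⟩, fun h => hy ?_⟩
    linear_combination -h.1.2.2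


lemma reg_s2 (h2 : (2 : F) ≠ 0) (a b c : Fˣ) (x y z : F) :
    regU (!![(a : F), x, z; 0, 0, (c : F); 0, (b : F), y]) ↔
      (a = 1 ∧ c = -b⁻¹) ∧ y = 2 ∧ x ≠ b * z := by
  have hb := b.ne_zero
  have hb' : c = -b⁻¹ ↔ (b : F) * c = -1 := by
    rw [Units.ext_iff]; push_cast
    constructor
    · intro h; rw [h]; field_simp
    · intro h; field_simp; linear_combination h
  rw [regU_iff h2, hb', Units.ext_iff, Units.val_one, sq_ne_iff]
  constructor
  · rintro ⟨⟨e1, e2, e3⟩, h⟩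
    have ha : (a : F) = 1 := by
      have : ((a : F) - 1) ^ 3 = 0 := by linear_combination e3 - a * e2 + a ^ 2 * e1
      exact sub_eq_zero.1 (pow_eq_zero_iff (by norm_num) |>.1 this)
    rw [ha] at e1 e2 e3 h
    have hy : y = 2 := by linear_combination e1
    have hbc : (b : F) * c = -1 := by linear_combination -e3
    refine ⟨⟨ha, hbc⟩, hy, fun hx => h ?_⟩
    rw [hy, hx]
    refine ⟨⟨?_, ?_, ?_⟩, ⟨?_, ?_, ?_⟩, ?_, ?_, ?_⟩ <;> first
      | ring1
      | linear_combination hbc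
      | linear_combination z * hbc
  · rintro ⟨⟨ha, hbc⟩, hy, hx⟩
    rw [ha, hy]
    refine ⟨⟨by ring, by linear_combination -hbc, by linear_combination -hbc⟩, fun h => hx ?_⟩
    linear_combination -h.1.2.1

lemma inv_aux (a b c : Fˣ) : c = (a * b)⁻¹ ↔ (a : F) * b * c = 1 := by
  rw [eq_inv_iff_mul_eq_one, Units.ext_iff]; push_cast
  rw [mul_comm]

lemma inv_aux' (a b c : Fˣ) : c = -(a * b)⁻¹ ↔ (a : F) * b * c = -1 := by
  rw [← neg_eq_iff_eq_neg, eq_inv_iff_mul_eq_one, Units.ext_iff]; push_cast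
  constructor <;> intro h <;> linear_combination -h

lemma reg_c1 (h2 : (2 : F) ≠ 0) (a b c : Fˣ) (x y z : F) :
    regU (!![0, (b : F), y; 0, 0, (c : F); (a : F), x, z]) ↔
      c = (a * b)⁻¹ ∧ z = 3 ∧ y = - (3 + c * x) * (a : F)⁻¹ := by
  have ha := a.ne_zero
  have hc := c.ne_zero
  rw [regU_iff h2, inv_aux, sq_ne_iff]
  constructor
  · rintro ⟨⟨e1, e2, e3⟩, h⟩
    refine ⟨by linear_combination e3, by linear_combination e1, ?_⟩
    field_simp
    linear_combination -e2
  · rintro ⟨e1, e2, e3⟩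
    have e3' : y * a = - (3 + c * x) := by rw [e3]; field_simp
    refine ⟨⟨by linear_combination e2, by linear_combination -e3', by linear_combination e1⟩, ?_⟩
    rintro ⟨-, ⟨h, -⟩, -⟩
    simp [ha, hc] at h

lemma reg_c2 (h2 : (2 : F) ≠ 0) (a b c : Fˣ) (x y z : F) :
    regU (!![0, 0, (c : F); (a : F), x, z; 0, (b : F), y]) ↔
      c = (a * b)⁻¹ ∧ y = 3 - x ∧ z = (x * (3 - x) - 3) * (b : F)⁻¹ := by
  have ha := a.ne_zero
  have hb := b.ne_zero
  rw [regU_iff h2, inv_aux, sq_ne_iff]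
  constructor
  · rintro ⟨⟨e1, e2, e3⟩, h⟩
    refine ⟨by linear_combination e3, by linear_combination e1, ?_⟩
    field_simp
    linear_combination -e2 + x * e1
  · rintro ⟨e1, e2, e3⟩
    have e3' : z * b = x * (3 - x) - 3 := by rw [e3]; field_simp
    refine ⟨⟨by linear_combination e2, by linear_combination -e3' + x * e2, by linear_combination e1⟩, ?_⟩
    rintro ⟨-, -, h, -⟩
    simp [ha, hb] at h

lemma reg_w (h2 : (2 : F) ≠ 0) (a b c : Fˣ) (x y z : F) :
    regU (!![0, 0, (c : F); 0, (b : F), y; (a : F), x, z]) ↔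
      c = -(a * b)⁻¹ ∧ z = 3 - b ∧ (b : F) * (x * y) = (1 - b) ^ 3 ∧ ¬ (x = 0 ∧ y = 0) := by
  have ha := a.ne_zero
  have hb := b.ne_zero
  have hc := c.ne_zero
  rw [regU_iff h2, inv_aux', sq_ne_iff]
  constructor
  · rintro ⟨⟨e1, e2, e3⟩, h⟩
    have e3' : (a : F) * b * c = -1 := by linear_combination -e3
    have e4 : (b : F) * (x * y) = (1 - b) ^ 3 := by linear_combination b * b * e1 - b * e2 - e3'
    refine ⟨e3', by linear_combination e1, e4, ?_⟩
    rintro ⟨rfl, rfl⟩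
    have hb1 : (b : F) = 1 := by
      have : (1 - (b : F)) ^ 3 = 0 := by rw [← e4]; ring
      exact (sub_eq_zero.1 (pow_eq_zero_iff (by norm_num) |>.1 this)).symm
    apply h
    rw [hb1] at e1 e3' ⊢
    have hz : z = 2 := by linear_combination e1
    rw [hz]
    refine ⟨⟨?_, ?_, ?_⟩, ⟨?_, ?_, ?_⟩, ?_, ?_, ?_⟩ <;> first
      | ring1
      | linear_combination e3'
  · rintro ⟨e1, e2, e3, h⟩
    refine ⟨⟨by linear_combination e2, ?_, by linear_combination -e1⟩, ?_⟩
    · apply mul_left_cancel₀ hb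
      linear_combination b * b * e2 - e1 - e3
    · rintro ⟨⟨-, k1, -⟩, ⟨k2, -⟩, -⟩
      simp only [mul_zero, zero_mul, add_zero, zero_add] at k1 k2
      apply h
      constructor
      · have : (c : F) * x = 0 := by linear_combination k1
        simpa [hc] using this
      · have : y * (a : F) = 0 := by linear_combination k2
        simpa [ha] using this

/-- counting lemmas -/
lemma cnt_ne (a : F) : (∑ x : F, if x ≠ a then (1 : ℤ) else 0) = (Fintype.card F : ℤ) - 1 := by
  have h : ∀ x : F, (if x ≠ a then (1 : ℤ) else 0) = 1 - if x = a then 1 else 0 := by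
    intro x; by_cases h : x = a <;> simp [h]
  simp [h]

lemma k_e (h2 : (2 : F) ≠ 0) (a b c : Fˣ) :
    (∑ x : F, ∑ y : F, ∑ z : F, if regU (!![(a : F), x, z; 0, (b : F), y; 0, 0, (c : F)]) then (1 : ℤ) else 0)
      = if a = 1 ∧ b = 1 ∧ c = 1 then (Fintype.card F : ℤ) * ((Fintype.card F : ℤ) - 1) ^ 2 else 0 := by
  simp only [reg_e h2]
  split_ifs with h
  · simp only [h, true_and, and_self]
    have : ∀ x y : F, (∑ z : F, if x ≠ 0 ∧ y ≠ 0 then (1 : ℤ) else 0) =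
        (Fintype.card F : ℤ) * ((if x ≠ 0 then 1 else 0) * if y ≠ 0 then 1 else 0) := by
      intro x y
      by_cases hx : x = 0 <;> by_cases hy : y = 0 <;> simp [hx, hy]
    simp only [this, ← Finset.mul_sum, cnt_ne, ← Finset.sum_mul]
    ring
  · simp [h]

lemma k_s1 (h2 : (2 : F) ≠ 0) (a b c : Fˣ) :
    (∑ x : F, ∑ y : F, ∑ z : F, if regU (!![0, (b : F), y; (a : F), x, z; 0, 0, (c : F)]) then (1 : ℤ) else 0)
      = if b = -a⁻¹ ∧ c = 1 then (Fintype.card F : ℤ) * ((Fintype.card F : ℤ) - 1) else 0 := by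
  simp only [reg_s1 h2]
  split_ifs with h
  · simp only [h, true_and, and_self]
    rw [Finset.sum_eq_single 2]
    · rw [Finset.sum_comm]
      simp only [true_and, cnt_ne]
      simp
      ring
    · intro x _ hx; simp [hx]
    · simp
  · simp [h]

lemma k_s2 (h2 : (2 : F) ≠ 0) (a b c : Fˣ) :
    (∑ x : F, ∑ y : F, ∑ z : F, if regU (!![(a : F), x, z; 0, 0, (c : F); 0, (b : F), y]) then (1 : ℤ) else 0)
      = if a = 1 ∧ c = -b⁻¹ then (Fintype.card F : ℤ) * ((Fintype.card F : ℤ) - 1) else 0 := by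
  simp only [reg_s2 h2]
  split_ifs with h
  · simp only [h, true_and, and_self]
    rw [Finset.sum_comm]
    rw [Finset.sum_eq_single 2]
    · rw [Finset.sum_comm]
      simp only [true_and, cnt_ne]
      simp
      ring
    · intro x _ hx; simp [hx]
    · simp
  · simp [h]

lemma k_c1 (h2 : (2 : F) ≠ 0) (a b c : Fˣ) :
    (∑ x : F, ∑ y : F, ∑ z : F, if regU (!![0, (b : F), y; 0, 0, (c : F); (a : F), x, z]) then (1 : ℤ) else 0)
      = if c = (a * b)⁻¹ then (Fintype.card F : ℤ) else 0 := by
  simp only [reg_c1 h2]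
  split_ifs with h
  · simp only [h, true_and, and_self, ite_and]
    simp
  · simp only [h, false_and, if_false, Finset.sum_const_zero]

lemma k_c2 (h2 : (2 : F) ≠ 0) (a b c : Fˣ) :
    (∑ x : F, ∑ y : F, ∑ z : F, if regU (!![0, 0, (c : F); (a : F), x, z; 0, (b : F), y]) then (1 : ℤ) else 0)
      = if c = (a * b)⁻¹ then (Fintype.card F : ℤ) else 0 := by
  simp only [reg_c2 h2]
  split_ifs with h
  · simp only [h, true_and, and_self, ite_and]
    rw [Finset.sum_congr rfl (g := fun _ => (1 : ℤ))]
    · simp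
    · intro x _
      rw [Finset.sum_eq_single (3 - x)]
      · simp
      · intro y _ hy; simp [hy]
      · simp
  · simp only [h, false_and, if_false, Finset.sum_const_zero]

lemma cnt_hyp (b : Fˣ) (k : F) :
    (∑ x : F, ∑ y : F, if (b : F) * (x * y) = k ∧ ¬ (x = 0 ∧ y = 0) then (1 : ℤ) else 0) =
      ((Fintype.card F : ℤ) - 1) * (if k = 0 then 2 else 1) := by
  have hb := b.ne_zero
  by_cases hk : k = 0
  · subst hk
    have : ∀ x y : F, (if (b : F) * (x * y) = 0 ∧ ¬ (x = 0 ∧ y = 0) then (1 : ℤ) else 0) =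
      (if x = 0 then 1 else 0) * (if y ≠ 0 then 1 else 0) + (if x ≠ 0 then 1 else 0) * (if y = 0 then 1 else 0) := by
      intro x y
      by_cases hx : x = 0 <;> by_cases hy : y = 0 <;> simp [hx, hy, hb]
    simp only [this, Finset.sum_add_distrib, ← Finset.mul_sum, cnt_ne, ← Finset.sum_mul]
    simp
    ring
  · have : ∀ x : F, (∑ y : F, if (b : F) * (x * y) = k ∧ ¬ (x = 0 ∧ y = 0) then (1 : ℤ) else 0) =
        if x ≠ 0 then 1 else 0 := by
      intro x
      by_cases hx : x = 0
      · simp [hx, Ne.symm hk]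
      · rw [Finset.sum_eq_single (k * (b : F)⁻¹ * x⁻¹)]
        · rw [if_pos hx, if_pos]
          refine ⟨by field_simp, fun h => hx h.1⟩
        · intro y _ hy
          rw [if_neg]
          rintro ⟨h, -⟩
          apply hy
          rw [← h]; field_simp
        · simp
    simp only [this, cnt_ne, hk]
    simp

lemma k_w (h2 : (2 : F) ≠ 0) (a b c : Fˣ) :
    (∑ x : F, ∑ y : F, ∑ z : F, if regU (!![0, 0, (c : F); 0, (b : F), y; (a : F), x, z]) then (1 : ℤ) else 0)
      = if c = -(a * b)⁻¹ then ((Fintype.card F : ℤ) - 1) * (if b = 1 then 2 else 1) else 0 := by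
  simp only [reg_w h2]
  split_ifs with h hb
  · simp only [h, true_and, and_self]
    have := cnt_hyp b ((1 - (b : F)) ^ 3)
    rw [if_pos (by simp [hb])] at this
    rw [← this]
    refine Finset.sum_congr rfl fun x _ => Finset.sum_congr rfl fun y _ => ?_
    rw [Finset.sum_eq_single (3 - (b : F))]
    · simp
    · intro y _ hy; simp [hy]
    · simp
  · simp only [h, true_and, and_self]
    have := cnt_hyp b ((1 - (b : F)) ^ 3)
    rw [if_neg] at this
    · rw [← this]
      refine Finset.sum_congr rfl fun x _ => Finset.sum_congr rfl fun y _ => ?_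
      rw [Finset.sum_eq_single (3 - (b : F))]
      · simp
      · intro y _ hy; simp [hy]
      · simp
    · intro h3
      apply hb
      rw [Units.ext_iff, Units.val_one]
      exact (sub_eq_zero.1 (pow_eq_zero_iff (by norm_num) |>.1 h3)).symm
  · simp only [h, false_and, if_false, Finset.sum_const_zero]

end
end GL3

namespace GL3
open Matrix
open scoped Classical
noncomputable section
set_option linter.unusedSectionVars false
set_option linter.unusedSimpArgs false

variable {F : Type*} [Field F] [Fintype F]

def wS1 : G F where
  val := !![0, 1, 0; 1, 0, 0; 0, 0, 1]
  inv := !![0, 1, 0; 1, 0, 0; 0, 0, 1]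
  val_inv := by ext i j; fin_cases i <;> fin_cases j <;> simp
  inv_val := by ext i j; fin_cases i <;> fin_cases j <;> simp

def wS2 : G F where
  val := !![1, 0, 0; 0, 0, 1; 0, 1, 0]
  inv := !![1, 0, 0; 0, 0, 1; 0, 1, 0]
  val_inv := by ext i j; fin_cases i <;> fin_cases j <;> simp
  inv_val := by ext i j; fin_cases i <;> fin_cases j <;> simp

def wC1 : G F where
  val := !![0, 0, 1; 1, 0, 0; 0, 1, 0]
  inv := !![0, 1, 0; 0, 0, 1; 1, 0, 0]
  val_inv := by ext i j; fin_cases i <;> fin_cases j <;> simp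
  inv_val := by ext i j; fin_cases i <;> fin_cases j <;> simp

def wC2 : G F where
  val := !![0, 1, 0; 0, 0, 1; 1, 0, 0]
  inv := !![0, 0, 1; 1, 0, 0; 0, 1, 0]
  val_inv := by ext i j; fin_cases i <;> fin_cases j <;> simp
  inv_val := by ext i j; fin_cases i <;> fin_cases j <;> simp

def wW : G F where
  val := !![0, 0, 1; 0, 1, 0; 1, 0, 0]
  inv := !![0, 0, 1; 0, 1, 0; 1, 0, 0]
  val_inv := by ext i j; fin_cases i <;> fin_cases j <;> simp
  inv_val := by ext i j; fin_cases i <;> fin_cases j <;> simp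

lemma T_e (h2 : (2 : F) ≠ 0) (θ : F → F → F → ℤ) :
    T (phi θ) 1 = (Fintype.card F : ℤ) * ((Fintype.card F : ℤ) - 1) ^ 2 * θ 1 1 1 := by
  have hm : ∀ (a b c : Fˣ) (x y z : F), (((1 : G F)⁻¹ * tri a b c x y z : G F) : Matrix (Fin 3) (Fin 3) F) =
      !![(a : F), x, z; 0, (b : F), y; 0, 0, (c : F)] := by
    intros; simp [tri]
  simp only [T_phi, hm, k_e h2, mul_ite, mul_zero, ite_and]
  simp [mul_comm]

lemma T_s1 (h2 : (2 : F) ≠ 0) (θ : F → F → F → ℤ) :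
    T (phi θ) wS1 = (Fintype.card F : ℤ) * ((Fintype.card F : ℤ) - 1) *
      ∑ t : Fˣ, θ t (-t⁻¹ : Fˣ) 1 := by
  have hm : ∀ (a b c : Fˣ) (x y z : F), (((wS1 : G F)⁻¹ * tri a b c x y z : G F) : Matrix (Fin 3) (Fin 3) F) =
      !![0, (b : F), y; (a : F), x, z; 0, 0, (c : F)] := by
    intros
    ext i j; fin_cases i <;> fin_cases j <;> simp [tri, wS1, Matrix.mul_apply, Fin.sum_univ_three]
  simp only [T_phi, hm, k_s1 h2, mul_ite, mul_zero, ite_and, Finset.mul_sum]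
  simp [mul_comm]

lemma T_s2 (h2 : (2 : F) ≠ 0) (θ : F → F → F → ℤ) :
    T (phi θ) wS2 = (Fintype.card F : ℤ) * ((Fintype.card F : ℤ) - 1) *
      ∑ t : Fˣ, θ 1 t (-t⁻¹ : Fˣ) := by
  have hm : ∀ (a b c : Fˣ) (x y z : F), (((wS2 : G F)⁻¹ * tri a b c x y z : G F) : Matrix (Fin 3) (Fin 3) F) =
      !![(a : F), x, z; 0, 0, (c : F); 0, (b : F), y] := by
    intros
    ext i j; fin_cases i <;> fin_cases j <;> simp [tri, wS2, Matrix.mul_apply, Fin.sum_univ_three]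
  simp only [T_phi, hm, k_s2 h2, mul_ite, mul_zero, ite_and, Finset.mul_sum]
  rw [Finset.sum_eq_single 1]
  · simp [mul_comm]
  · intro a _ ha; simp [ha]
  · simp

lemma T_c1 (h2 : (2 : F) ≠ 0) (θ : F → F → F → ℤ) :
    T (phi θ) wC1 = (Fintype.card F : ℤ) * ∑ t : Fˣ, ∑ s : Fˣ, θ t s ((t * s)⁻¹ : Fˣ) := by
  have hm : ∀ (a b c : Fˣ) (x y z : F), (((wC1 : G F)⁻¹ * tri a b c x y z : G F) : Matrix (Fin 3) (Fin 3) F) =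
      !![0, (b : F), y; 0, 0, (c : F); (a : F), x, z] := by
    intros
    ext i j; fin_cases i <;> fin_cases j <;> simp [tri, wC1, Matrix.mul_apply, Fin.sum_univ_three]
  simp only [T_phi, hm, k_c1 h2, mul_ite, mul_zero, ite_and, Finset.mul_sum]
  simp [mul_comm]

lemma T_c2 (h2 : (2 : F) ≠ 0) (θ : F → F → F → ℤ) :
    T (phi θ) wC2 = (Fintype.card F : ℤ) * ∑ t : Fˣ, ∑ s : Fˣ, θ t s ((t * s)⁻¹ : Fˣ) := by
  have hm : ∀ (a b c : Fˣ) (x y z : F), (((wC2 : G F)⁻¹ * tri a b c x y z : G F) : Matrix (Fin 3) (Fin 3) F) =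
      !![0, 0, (c : F); (a : F), x, z; 0, (b : F), y] := by
    intros
    ext i j; fin_cases i <;> fin_cases j <;> simp [tri, wC2, Matrix.mul_apply, Fin.sum_univ_three]
  simp only [T_phi, hm, k_c2 h2, mul_ite, mul_zero, ite_and, Finset.mul_sum]
  simp [mul_comm]

lemma T_w (h2 : (2 : F) ≠ 0) (θ : F → F → F → ℤ) :
    T (phi θ) wW = ((Fintype.card F : ℤ) - 1) * ((∑ t : Fˣ, ∑ s : Fˣ, θ t s (-(t * s)⁻¹ : Fˣ))
      + ∑ t : Fˣ, θ t 1 (-t⁻¹ : Fˣ)) := by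
  have hm : ∀ (a b c : Fˣ) (x y z : F), (((wW : G F)⁻¹ * tri a b c x y z : G F) : Matrix (Fin 3) (Fin 3) F) =
      !![0, 0, (c : F); 0, (b : F), y; (a : F), x, z] := by
    intros
    ext i j; fin_cases i <;> fin_cases j <;> simp [tri, wW, Matrix.mul_apply, Fin.sum_univ_three]
  simp only [T_phi, hm, k_w h2]
  rw [← Finset.sum_add_distrib, Finset.mul_sum]
  refine Finset.sum_congr rfl fun t _ => ?_
  have : ∀ s : Fˣ, (∑ c : Fˣ, θ t s c * if c = -(t * s)⁻¹ then ((Fintype.card F : ℤ) - 1) * (if s = 1 then 2 else 1) else 0)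
      = ((Fintype.card F : ℤ) - 1) * (θ t s (-(t * s)⁻¹ : Fˣ) + if s = 1 then θ t 1 (-t⁻¹ : Fˣ) else 0) := by
    intro s
    rw [Finset.sum_eq_single (-(t * s)⁻¹)]
    · rw [if_pos rfl]
      split_ifs with h
      · subst h
        simp only [mul_one, Units.val_one]
        ring
      · ring
    · intro c _ hc; rw [if_neg hc, mul_zero]
    · simp
  simp only [this, ← Finset.mul_sum, Finset.sum_add_distrib]
  simp

/-- Bruhat decomposition -/
lemma bruhat {P : G F → Prop}
    (h1 : ∀ a b c x y z x' y' z', P (tri a b c x y z * 1 * tri 1 1 1 x' y' z'))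
    (hs1 : ∀ a b c x y z x' y' z', P (tri a b c x y z * wS1 * tri 1 1 1 x' y' z'))
    (hs2 : ∀ a b c x y z x' y' z', P (tri a b c x y z * wS2 * tri 1 1 1 x' y' z'))
    (hc1 : ∀ a b c x y z x' y' z', P (tri a b c x y z * wC1 * tri 1 1 1 x' y' z'))
    (hc2 : ∀ a b c x y z x' y' z', P (tri a b c x y z * wC2 * tri 1 1 1 x' y' z'))
    (hw : ∀ a b c x y z x' y' z', P (tri a b c x y z * wW * tri 1 1 1 x' y' z'))
    (g : G F) : P g := by
  have hdet : (g : Matrix (Fin 3) (Fin 3) F).det ≠ 0 :=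
    ((Matrix.isUnit_iff_isUnit_det _).1 g.isUnit).ne_zero
  rw [Matrix.det_fin_three] at hdet
  obtain ⟨M, hM⟩ : ∃ M : Matrix (Fin 3) (Fin 3) F, M = (g : Matrix (Fin 3) (Fin 3) F) := ⟨_, rfl⟩
  rw [← hM] at hdet
  by_cases h20 : M 2 0 = 0
  · by_cases h21 : M 2 1 = 0
    · by_cases h10 : M 1 0 = 0
      · have : up g := by rw [hM] at *; exact ⟨h10, h20, h21⟩
        obtain ⟨a, b, c, x, y, z, h⟩ := (up_iff g).1 this
        have := h1 a b c x y z 0 0 0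
        convert this
        rw [h]
        ext i j
        fin_cases i <;> fin_cases j <;> simp [tri, Matrix.mul_apply, Fin.sum_univ_three]
      · have hc : M 2 2 ≠ 0 := by rintro h; apply hdet; rw [h20, h21, h]; ring
        have ha : M 0 1 - M 0 0 * (M 1 1 / M 1 0) ≠ 0 := by
          intro h; apply hdet; rw [h20, h21]
          field_simp at h
          linear_combination (-M 2 2) * h
        convert hs1 (Units.mk0 _ ha) (Units.mk0 _ h10) (Units.mk0 _ hc) (M 0 0) (M 1 2) (M 0 2) (M 1 1 / M 1 0) 0 0
        ext i j
        rw [← hM]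
        fin_cases i <;> fin_cases j <;> simp [tri, wS1, Matrix.mul_apply, Fin.sum_univ_three, h20, h21] <;> field_simp
    · by_cases h10 : M 1 0 = 0
      · have ha : M 0 0 ≠ 0 := by rintro h; apply hdet; rw [h20, h10, h]; ring
        have hb : M 1 2 - M 1 1 * (M 2 2 / M 2 1) ≠ 0 := by
          intro h; apply hdet; rw [h20, h10]
          field_simp at h
          linear_combination (-M 0 0) * h
        convert hs2 (Units.mk0 _ ha) (Units.mk0 _ hb) (Units.mk0 _ h21) (M 0 2 - M 0 1 * (M 2 2 / M 2 1)) (M 1 1) (M 0 1) 0 (M 2 2 / M 2 1) 0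
        ext i j
        rw [← hM]
        fin_cases i <;> fin_cases j <;> simp [tri, wS2, Matrix.mul_apply, Fin.sum_univ_three, h20, h10] <;> field_simp
      · have ha : M 0 2 - M 0 0 * ((M 1 2 - M 1 1 * (M 2 2 / M 2 1)) / M 1 0) - M 0 1 * (M 2 2 / M 2 1) ≠ 0 := by
          intro h; apply hdet; rw [h20]
          field_simp at h
          linear_combination h
        convert hc1 (Units.mk0 _ ha) (Units.mk0 _ h10) (Units.mk0 _ h21) (M 0 0) (M 1 1) (M 0 1) 0 (M 2 2 / M 2 1) ((M 1 2 - M 1 1 * (M 2 2 / M 2 1)) / M 1 0)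
        ext i j
        rw [← hM]
        fin_cases i <;> fin_cases j <;> simp [tri, wC1, Matrix.mul_apply, Fin.sum_univ_three, h20] <;> field_simp <;> ring
  · by_cases hm : M 1 1 - M 1 0 * (M 2 1 / M 2 0) = 0
    · have hm' := hm
      field_simp at hm'
      have hb : M 1 2 - M 1 0 * (M 2 2 / M 2 0) ≠ 0 := by
        intro h; apply hdet
        field_simp at h
        apply mul_left_cancel₀ h20
        linear_combination (M 0 0 * M 2 2 - M 0 2 * M 2 0) * hm' + (M 0 1 * M 2 0 - M 0 0 * M 2 1) * h
      have ha : M 0 1 - M 0 0 * (M 2 1 / M 2 0) ≠ 0 := by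
        intro h; apply hdet
        field_simp at h
        apply mul_left_cancel₀ h20
        linear_combination (M 0 0 * M 2 2 - M 0 2 * M 2 0) * hm' + (M 1 2 * M 2 0 - M 1 0 * M 2 2) * h
      convert hc2 (Units.mk0 _ ha) (Units.mk0 _ hb) (Units.mk0 _ h20) (M 0 2 - M 0 0 * (M 2 2 / M 2 0)) (M 1 0) (M 0 0)
        (M 2 1 / M 2 0) 0 (M 2 2 / M 2 0)
      ext i j
      rw [← hM]
      fin_cases i <;> fin_cases j <;> simp [tri, wC2, Matrix.mul_apply, Fin.sum_univ_three] <;> field_simp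
      linear_combination hm'
    · have ha : M 0 2 - M 0 0 * (M 2 2 / M 2 0) - (M 0 1 - M 0 0 * (M 2 1 / M 2 0)) *
          ((M 1 2 - M 1 0 * (M 2 2 / M 2 0)) / (M 1 1 - M 1 0 * (M 2 1 / M 2 0))) ≠ 0 := by
        intro h; apply hdet
        have k1 : M 2 1 = M 2 1 / M 2 0 * M 2 0 := by field_simp
        have k2 : M 2 2 = M 2 2 / M 2 0 * M 2 0 := by field_simp
        rw [sub_eq_zero, ← mul_div_assoc (M 0 1 - _), eq_div_iff hm] at h
        generalize M 2 1 / M 2 0 = k at h k1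
        generalize M 2 2 / M 2 0 = l at h k2
        rw [k1, k2]
        linear_combination (-M 2 0) * h
      have hy : (M 1 1 - M 1 0 * (M 2 1 / M 2 0)) * ((M 1 2 - M 1 0 * (M 2 2 / M 2 0)) / (M 1 1 - M 1 0 * (M 2 1 / M 2 0)))
          = M 1 2 - M 1 0 * (M 2 2 / M 2 0) := by
        rw [mul_div_cancel₀]; exact hm
      convert hw (Units.mk0 _ ha) (Units.mk0 _ hm) (Units.mk0 _ h20) (M 0 1 - M 0 0 * (M 2 1 / M 2 0)) (M 1 0) (M 0 0)
        (M 2 1 / M 2 0) ((M 1 2 - M 1 0 * (M 2 2 / M 2 0)) / (M 1 1 - M 1 0 * (M 2 1 / M 2 0))) (M 2 2 / M 2 0)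
      ext i j
      rw [← hM]
      fin_cases i <;> fin_cases j <;> simp [tri, wW, Matrix.mul_apply, Fin.sum_univ_three, hy] <;> try field_simp

end
end GL3

namespace GL3
open Matrix
open scoped Classical
noncomputable section
set_option linter.unusedSectionVars false
set_option linter.unusedSimpArgs false

variable {F : Type*} [Field F] [Fintype F]

/-- zero mean condition -/
def ZM (θ : F → F → F → ℤ) : Prop :=
  (∀ c e : Fˣ, ∑ t : Fˣ, θ c t (e * t⁻¹ : Fˣ) = 0) ∧
  (∀ c e : Fˣ, ∑ t : Fˣ, θ t c (e * t⁻¹ : Fˣ) = 0) ∧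
  (∀ c e : Fˣ, ∑ t : Fˣ, θ t (e * t⁻¹ : Fˣ) c = 0)

lemma ZM.shift {θ : F → F → F → ℤ} (h : ZM θ) (a b c : Fˣ) :
    ZM (fun t1 t2 t3 => θ (a * t1) (b * t2) (c * t3)) := by
  obtain ⟨h1, h2, h3⟩ := h
  refine ⟨?_, ?_, ?_⟩
  · intro k e
    refine Eq.trans ?_ (h1 (a * k) (c * e * b))
    rw [← Equiv.sum_comp (Equiv.mulLeft b) (fun t : Fˣ => θ (a * k : Fˣ) t (c * e * b * t⁻¹ : Fˣ))]
    refine Finset.sum_congr rfl fun t _ => ?_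
    simp [mul_inv, mul_assoc]
  · intro k e
    refine Eq.trans ?_ (h2 (b * k) (c * e * a))
    rw [← Equiv.sum_comp (Equiv.mulLeft a) (fun t : Fˣ => θ t (b * k : Fˣ) (c * e * a * t⁻¹ : Fˣ))]
    refine Finset.sum_congr rfl fun t _ => ?_
    simp [mul_inv, mul_assoc]
  · intro k e
    refine Eq.trans ?_ (h3 (c * k) (b * e * a))
    rw [← Equiv.sum_comp (Equiv.mulLeft a) (fun t : Fˣ => θ t (b * e * a * t⁻¹ : Fˣ) (c * k : Fˣ))]
    refine Finset.sum_congr rfl fun t _ => ?_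
    simp [mul_inv, mul_assoc]

lemma claim1 (h2 : (2 : F) ≠ 0) (θ : F → F → F → ℤ) (hθ : ZM θ) (g : G F) :
    T (phi θ) g = (Fintype.card F : ℤ) * ((Fintype.card F : ℤ) - 1) ^ 2 * phi θ g := by
  induction g using bruhat with
  | h1 a b c x y z x' y' z' =>
    rw [T_phi_bwv, T_e h2]
    simp [phi, up, tri, Matrix.mul_apply, Fin.sum_univ_three]
  | hs1 a b c x y z x' y' z' =>
    rw [T_phi_bwv, T_s1 h2]
    have h := (hθ.shift a b c).2.2 1 (-1)
    simp only [neg_one_mul, Units.val_one] at h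
    rw [h]
    simp [phi, up, tri, wS1, Matrix.mul_apply, Fin.sum_univ_three]
  | hs2 a b c x y z x' y' z' =>
    rw [T_phi_bwv, T_s2 h2]
    have h := (hθ.shift a b c).1 1 (-1)
    simp only [neg_one_mul, Units.val_one] at h
    rw [h]
    simp [phi, up, tri, wS2, Matrix.mul_apply, Fin.sum_univ_three]
  | hc1 a b c x y z x' y' z' =>
    rw [T_phi_bwv, T_c1 h2]
    have h := fun t => (hθ.shift a b c).1 t t⁻¹
    simp only [← mul_inv] at h
    rw [Finset.sum_eq_zero fun t _ => h t]
    simp [phi, up, tri, wC1, Matrix.mul_apply, Fin.sum_univ_three]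
  | hc2 a b c x y z x' y' z' =>
    rw [T_phi_bwv, T_c2 h2]
    have h := fun t => (hθ.shift a b c).1 t t⁻¹
    simp only [← mul_inv] at h
    rw [Finset.sum_eq_zero fun t _ => h t]
    simp [phi, up, tri, wC2, Matrix.mul_apply, Fin.sum_univ_three]
  | hw a b c x y z x' y' z' =>
    rw [T_phi_bwv, T_w h2]
    have h := fun t => (hθ.shift a b c).1 t (-t⁻¹)
    have h' := (hθ.shift a b c).2.1 1 (-1)
    simp only [neg_mul, ← mul_inv, one_mul, Units.val_one] at h h'
    rw [Finset.sum_eq_zero fun t _ => h t, h']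
    simp [phi, up, tri, wW, Matrix.mul_apply, Fin.sum_univ_three]

lemma det_tri (a b c : Fˣ) (x y z : F) : (tri a b c x y z : Matrix (Fin 3) (Fin 3) F).det = a * b * c := by
  simp [tri, Matrix.det_fin_three]

lemma claim2 (h2 : (2 : F) ≠ 0) (d : F) (g : G F) :
    T (phi fun t1 t2 t3 => if t1 * t2 * t3 = d then 1 else 0) g =
      (Fintype.card F : ℤ) * ((Fintype.card F : ℤ) - 1) ^ 2 *
        if (g : Matrix (Fin 3) (Fin 3) F).det = d then 1 else 0 := by
  have hc : (Fintype.card Fˣ : ℤ) = (Fintype.card F : ℤ) - 1 := by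
    rw [Fintype.card_units, Nat.cast_sub Fintype.card_pos]; simp
  have k1 : ∀ a b c t : F, t ≠ 0 → a * t * (b * t⁻¹) * c = a * b * c := by
    intros; field_simp
  have k2 : ∀ a b c t : F, t ≠ 0 → a * (b * t) * (c * t⁻¹) = a * b * c := by
    intros; field_simp
  have k3 : ∀ a b c t s : F, t ≠ 0 → s ≠ 0 → a * t * (b * s) * (c * (s⁻¹ * t⁻¹)) = a * b * c := by
    intros; field_simp
  have k5 : ∀ a b c t : F, t ≠ 0 → a * t * b * (c * t⁻¹) = a * b * c := by
    intros; field_simp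
  induction g using bruhat with
  | h1 a b c x y z x' y' z' =>
    rw [T_phi_bwv, T_e h2]
    simp [det_tri]
  | hs1 a b c x y z x' y' z' =>
    rw [T_phi_bwv, T_s1 h2]
    have : (wS1 : G F).val.det = -1 := by simp [wS1, Matrix.det_fin_three]
    simp [det_tri, this, k1, hc]
    split_ifs <;> ring
  | hs2 a b c x y z x' y' z' =>
    rw [T_phi_bwv, T_s2 h2]
    have : (wS2 : G F).val.det = -1 := by simp [wS2, Matrix.det_fin_three]
    simp [det_tri, this, k2, hc]
    split_ifs <;> ring
  | hc1 a b c x y z x' y' z' =>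
    rw [T_phi_bwv, T_c1 h2]
    have : (wC1 : G F).val.det = 1 := by simp [wC1, Matrix.det_fin_three]
    simp [det_tri, this, k3, hc]
    split_ifs <;> ring
  | hc2 a b c x y z x' y' z' =>
    rw [T_phi_bwv, T_c2 h2]
    have : (wC2 : G F).val.det = 1 := by simp [wC2, Matrix.det_fin_three]
    simp [det_tri, this, k3, hc]
    split_ifs <;> ring
  | hw a b c x y z x' y' z' =>
    rw [T_phi_bwv, T_w h2]
    have : (wW : G F).val.det = -1 := by simp [wW, Matrix.det_fin_three]
    simp [det_tri, this, k3, k5, hc]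
    split_ifs <;> ring

def psi (d : F) (ξ : F → ℤ) (g : G F) : ℤ :=
  if (g : Matrix (Fin 3) (Fin 3) F) 1 0 = 0 ∧ (g : Matrix (Fin 3) (Fin 3) F) 2 0 = 0 ∧
    (g : Matrix (Fin 3) (Fin 3) F).det = d then ξ ((g : Matrix (Fin 3) (Fin 3) F) 0 0) else 0

lemma claim3 (h2 : (2 : F) ≠ 0) (d : F) (ξ : F → ℤ) (hξ : ∑ t : Fˣ, ξ t = 0) (g : G F) :
    T (phi fun t1 t2 t3 => if t1 * t2 * t3 = d then ξ t1 else 0) g =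
      (Fintype.card F : ℤ) * ((Fintype.card F : ℤ) - 1) ^ 2 * psi d ξ g := by
  have hc : (Fintype.card Fˣ : ℤ) = (Fintype.card F : ℤ) - 1 := by
    rw [Fintype.card_units, Nat.cast_sub Fintype.card_pos]; simp
  have hs : ∀ a : Fˣ, ∑ t : Fˣ, ξ (a * t) = 0 := by
    intro a
    rw [← hξ, ← Equiv.sum_comp (Equiv.mulLeft a) (fun t : Fˣ => ξ t)]
    simp
  have hs' : ∀ (a : Fˣ) (p : Prop), (∑ t : Fˣ, if p then ξ (a * t) else 0) = 0 := by
    intro a p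
    by_cases h : p <;> simp [h, hs]
  have k1 : ∀ a b c t : F, t ≠ 0 → a * t * (b * t⁻¹) * c = a * b * c := by
    intros; field_simp
  have k2 : ∀ a b c t : F, t ≠ 0 → a * (b * t) * (c * t⁻¹) = a * b * c := by
    intros; field_simp
  have k3 : ∀ a b c t s : F, t ≠ 0 → s ≠ 0 → a * t * (b * s) * (c * (s⁻¹ * t⁻¹)) = a * b * c := by
    intros; field_simp
  have k5 : ∀ a b c t : F, t ≠ 0 → a * t * b * (c * t⁻¹) = a * b * c := by
    intros; field_simp
  induction g using bruhat with
  | h1 a b c x y z x' y' z' =>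
    rw [T_phi_bwv, T_e h2]
    have e10 : ((tri a b c x y z * 1 * tri 1 1 1 x' y' z' : G F) : Matrix (Fin 3) (Fin 3) F) 1 0 = 0 := by
      simp [tri, Matrix.mul_apply, Fin.sum_univ_three]
    have e20 : ((tri a b c x y z * 1 * tri 1 1 1 x' y' z' : G F) : Matrix (Fin 3) (Fin 3) F) 2 0 = 0 := by
      simp [tri, Matrix.mul_apply, Fin.sum_univ_three]
    have e00 : ((tri a b c x y z * 1 * tri 1 1 1 x' y' z' : G F) : Matrix (Fin 3) (Fin 3) F) 0 0 = a := by
      simp [tri, Matrix.mul_apply, Fin.sum_univ_three]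
    rw [psi, e10, e20, e00]
    simp [det_tri]
  | hs1 a b c x y z x' y' z' =>
    rw [T_phi_bwv, T_s1 h2]
    have e10 : ((tri a b c x y z * wS1 * tri 1 1 1 x' y' z' : G F) : Matrix (Fin 3) (Fin 3) F) 1 0 ≠ 0 := by
      simp [tri, wS1, Matrix.mul_apply, Fin.sum_univ_three]
    rw [psi, if_neg (fun h => e10 h.1)]
    simp [k1, hs']
  | hs2 a b c x y z x' y' z' =>
    rw [T_phi_bwv, T_s2 h2]
    have : (wS2 : G F).val.det = -1 := by simp [wS2, Matrix.det_fin_three]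
    have e10 : ((tri a b c x y z * wS2 * tri 1 1 1 x' y' z' : G F) : Matrix (Fin 3) (Fin 3) F) 1 0 = 0 := by
      simp [tri, wS2, Matrix.mul_apply, Fin.sum_univ_three]
    have e20 : ((tri a b c x y z * wS2 * tri 1 1 1 x' y' z' : G F) : Matrix (Fin 3) (Fin 3) F) 2 0 = 0 := by
      simp [tri, wS2, Matrix.mul_apply, Fin.sum_univ_three]
    have e00 : ((tri a b c x y z * wS2 * tri 1 1 1 x' y' z' : G F) : Matrix (Fin 3) (Fin 3) F) 0 0 = a := by
      simp [tri, wS2, Matrix.mul_apply, Fin.sum_univ_three]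
    rw [psi, e10, e20, e00]
    simp [det_tri, this, k2, hc]
    split_ifs <;> ring
  | hc1 a b c x y z x' y' z' =>
    rw [T_phi_bwv, T_c1 h2, Finset.sum_comm]
    have e10 : ((tri a b c x y z * wC1 * tri 1 1 1 x' y' z' : G F) : Matrix (Fin 3) (Fin 3) F) 1 0 ≠ 0 := by
      simp [tri, wC1, Matrix.mul_apply, Fin.sum_univ_three]
    rw [psi, if_neg (fun h => e10 h.1)]
    simp [k3, hs']
  | hc2 a b c x y z x' y' z' =>
    rw [T_phi_bwv, T_c2 h2, Finset.sum_comm]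
    have e10 : ((tri a b c x y z * wC2 * tri 1 1 1 x' y' z' : G F) : Matrix (Fin 3) (Fin 3) F) 2 0 ≠ 0 := by
      simp [tri, wC2, Matrix.mul_apply, Fin.sum_univ_three]
    rw [psi, if_neg (fun h => e10 h.2.1)]
    simp [k3, hs']
  | hw a b c x y z x' y' z' =>
    rw [T_phi_bwv, T_w h2, Finset.sum_comm]
    have e10 : ((tri a b c x y z * wW * tri 1 1 1 x' y' z' : G F) : Matrix (Fin 3) (Fin 3) F) 2 0 ≠ 0 := by
      simp [tri, wW, Matrix.mul_apply, Fin.sum_univ_three]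
    rw [psi, if_neg (fun h => e10 h.2.1)]
    simp [k3, k5, hs']

end
end GL3

namespace GL3
open Matrix
open scoped Classical
noncomputable section
set_option linter.unusedSectionVars false
set_option linter.unusedSimpArgs false

variable {F : Type*} [Field F] [Fintype F]

def psi0 (ξ : F → ℤ) (g : G F) : ℤ :=
  if (g : Matrix (Fin 3) (Fin 3) F) 1 0 = 0 ∧ (g : Matrix (Fin 3) (Fin 3) F) 2 0 = 0 then
    ξ ((g : Matrix (Fin 3) (Fin 3) F) 0 0) else 0

lemma det_ne (g : G F) : (g : Matrix (Fin 3) (Fin 3) F).det ≠ 0 :=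
  ((Matrix.isUnit_iff_isUnit_det _).1 g.isUnit).ne_zero

lemma par_left (h x : G F) (h1 : (h : Matrix (Fin 3) (Fin 3) F) 1 0 = 0)
    (h2 : (h : Matrix (Fin 3) (Fin 3) F) 2 0 = 0) :
    (((h * x : G F) : Matrix (Fin 3) (Fin 3) F) 1 0 = 0 ∧
      ((h * x : G F) : Matrix (Fin 3) (Fin 3) F) 2 0 = 0) ↔
    ((x : Matrix (Fin 3) (Fin 3) F) 1 0 = 0 ∧ (x : Matrix (Fin 3) (Fin 3) F) 2 0 = 0) := by
  have hd := det_ne h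
  rw [Matrix.det_fin_three, h1, h2] at hd
  have hd' : (h : Matrix (Fin 3) (Fin 3) F) 1 1 * (h : Matrix (Fin 3) (Fin 3) F) 2 2 -
      (h : Matrix (Fin 3) (Fin 3) F) 1 2 * (h : Matrix (Fin 3) (Fin 3) F) 2 1 ≠ 0 := by
    intro h'; apply hd; linear_combination (h : Matrix (Fin 3) (Fin 3) F) 0 0 * h'
  simp only [Units.val_mul, Matrix.mul_apply, Fin.sum_univ_three, h1, h2]
  constructor
  · rintro ⟨e1, e2⟩
    constructor
    · apply mul_left_cancel₀ hd'
      linear_combination (h : Matrix (Fin 3) (Fin 3) F) 2 2 * e1 - (h : Matrix (Fin 3) (Fin 3) F) 1 2 * e2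
    · apply mul_left_cancel₀ hd'
      linear_combination (h : Matrix (Fin 3) (Fin 3) F) 1 1 * e2 - (h : Matrix (Fin 3) (Fin 3) F) 2 1 * e1
  · rintro ⟨e1, e2⟩
    rw [e1, e2]; simp

lemma psi0_left (ξ : F → ℤ) (h x : G F) (h1 : (h : Matrix (Fin 3) (Fin 3) F) 1 0 = 0)
    (h2 : (h : Matrix (Fin 3) (Fin 3) F) 2 0 = 0) :
    psi0 ξ (h * x) = psi0 (fun t => ξ ((h : Matrix (Fin 3) (Fin 3) F) 0 0 * t)) x := by
  unfold psi0
  by_cases hx : (x : Matrix (Fin 3) (Fin 3) F) 1 0 = 0 ∧ (x : Matrix (Fin 3) (Fin 3) F) 2 0 = 0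
  · rw [if_pos hx, if_pos ((par_left h x h1 h2).2 hx)]
    simp [Matrix.mul_apply, Fin.sum_univ_three, hx.1, hx.2]
  · rw [if_neg hx, if_neg (fun h' => hx ((par_left h x h1 h2).1 h'))]

lemma psi0_right (ξ : F → ℤ) (x : G F) (b c : Fˣ) (X Y Z : F) :
    psi0 ξ (x * tri 1 b c X Y Z) = psi0 ξ x := by
  simp [psi0, tri, Matrix.mul_apply, Fin.sum_univ_three]

lemma T_psi0_left (ξ : F → ℤ) (h x : G F) (h1 : (h : Matrix (Fin 3) (Fin 3) F) 1 0 = 0)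
    (h2 : (h : Matrix (Fin 3) (Fin 3) F) 2 0 = 0) :
    T (psi0 ξ) (h * x) = T (psi0 (fun t => ξ ((h : Matrix (Fin 3) (Fin 3) F) 0 0 * t))) x := by
  unfold T
  refine Finset.sum_congr rfl fun u _ => ?_
  rw [mul_assoc, psi0_left ξ h _ h1 h2]

lemma T_psi0_right (ξ : F → ℤ) (x : G F) (b c : Fˣ) (X Y Z : F) :
    T (psi0 ξ) (x * tri 1 b c X Y Z) = T (psi0 ξ) x := by
  rw [T_conj]
  simp only [psi0_right]

lemma exists_scale (g : G F) (hg : ¬ ((g : Matrix (Fin 3) (Fin 3) F) 1 0 = 0 ∧ (g : Matrix (Fin 3) (Fin 3) F) 2 0 = 0))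
    (k : Fˣ) : ∃ X Z : F,
      ((g * tri 1 k k X 0 Z * g⁻¹ : G F) : Matrix (Fin 3) (Fin 3) F) 0 0 = k ∧
      ((g * tri 1 k k X 0 Z * g⁻¹ : G F) : Matrix (Fin 3) (Fin 3) F) 1 0 = 0 ∧
      ((g * tri 1 k k X 0 Z * g⁻¹ : G F) : Matrix (Fin 3) (Fin 3) F) 2 0 = 0 := by
  obtain ⟨v, hv⟩ : ∃ v : Matrix (Fin 3) (Fin 3) F, v = ((g⁻¹ : G F) : Matrix (Fin 3) (Fin 3) F) := ⟨_, rfl⟩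
  have hgv : (g : Matrix (Fin 3) (Fin 3) F) * v = 1 := by rw [hv]; simp
  have e : ∀ i, ((g : Matrix (Fin 3) (Fin 3) F) * v) i 0 = (1 : Matrix (Fin 3) (Fin 3) F) i 0 := by
    intro i; rw [hgv]
  simp only [Matrix.mul_apply, Fin.sum_univ_three] at e
  have e0 := e 0
  have e1 := e 1
  have e2 := e 2
  simp at e0 e1 e2
  have hX : ∃ X Z : F, X * v 1 0 + Z * v 2 0 = (k - 1) * v 0 0 := by
    by_cases h1 : v 1 0 = 0
    · by_cases h2 : v 2 0 = 0
      · exfalso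
        rw [h1, h2] at e0 e1 e2
        simp at e0 e1 e2
        have h0 : v 0 0 ≠ 0 := by rintro h; rw [h] at e0; simp at e0
        apply hg
        constructor
        · simpa [h0] using e1
        · simpa [h0] using e2
      · exact ⟨0, (k - 1) * v 0 0 / v 2 0, by field_simp; ring⟩
    · exact ⟨(k - 1) * v 0 0 / v 1 0, 0, by field_simp; ring⟩
  obtain ⟨X, Z, hX⟩ := hX
  refine ⟨X, Z, ?_⟩
  have key : ∀ i, ((g * tri 1 k k X 0 Z * g⁻¹ : G F) : Matrix (Fin 3) (Fin 3) F) i 0 =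
      k * (1 : Matrix (Fin 3) (Fin 3) F) i 0 := by
    intro i
    rw [← e i, mul_assoc, Units.val_mul, Units.val_mul, ← hv]
    simp [Matrix.mul_apply, Fin.sum_univ_three, tri, Matrix.vecMul, dotProduct]
    linear_combination (g : Matrix (Fin 3) (Fin 3) F) i 0 * hX
  rw [key, key, key]
  simp

lemma T_psi0_zero (ξ : F → ℤ) (hξ : ∑ t : Fˣ, ξ t = 0) (g : G F)
    (hg : ¬ ((g : Matrix (Fin 3) (Fin 3) F) 1 0 = 0 ∧ (g : Matrix (Fin 3) (Fin 3) F) 2 0 = 0)) :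
    T (psi0 ξ) g = 0 := by
  have key : ∀ k : Fˣ, T (psi0 ξ) g = T (psi0 fun t => ξ (k * t)) g := by
    intro k
    obtain ⟨X, Z, h0, h1, h2⟩ := exists_scale g hg k
    rw [← T_psi0_right ξ g k k X 0 Z, ← h0, ← T_psi0_left ξ _ _ h1 h2]
    congr 1
    group
  have hs : ∀ a : Fˣ, ∑ k : Fˣ, ξ (k * a) = 0 := by
    intro a
    rw [← hξ, ← Equiv.sum_comp (Equiv.mulRight a) (fun t : Fˣ => ξ t)]
    simp
  have hsum : ∑ k : Fˣ, T (psi0 ξ) g = 0 := by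
    rw [Finset.sum_congr rfl fun k _ => key k]
    unfold T
    rw [Finset.sum_comm]
    refine Finset.sum_eq_zero fun u _ => ?_
    by_cases hu : regU (u : Matrix (Fin 3) (Fin 3) F)
    · simp only [if_pos hu, psi0]
      by_cases hx : ((g * u : G F) : Matrix (Fin 3) (Fin 3) F) 1 0 = 0 ∧ ((g * u : G F) : Matrix (Fin 3) (Fin 3) F) 2 0 = 0
      · simp only [if_pos hx]
        have h00 : ((g * u : G F) : Matrix (Fin 3) (Fin 3) F) 0 0 ≠ 0 := by
          intro h
          apply det_ne (g * u)
          rw [Matrix.det_fin_three, h, hx.1, hx.2]; ring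
        exact hs (Units.mk0 _ h00)
      · simp only [if_neg hx]; simp
    · simp [hu]
  rw [Finset.sum_const, Finset.card_univ] at hsum
  simpa using hsum

/-- element of the parabolic, outside the Borel -/
def par (a s δ : Fˣ) (x z k l : F) : G F where
  val := !![(a : F), x, z; 0, k, (k * l - δ) / s; 0, s, l]
  inv := !![(a : F)⁻¹, (z * s - x * l) / (a * δ), (x * ((k * l - δ) / s) - z * k) / (a * δ);
    0, l / δ, - ((k * l - δ) / s) / δ; 0, - s / δ, k / δ]
  val_inv := by
    have ha := a.ne_zero
    have hs := s.ne_zero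
    have hδ := δ.ne_zero
    ext i j
    fin_cases i <;> fin_cases j <;> simp [Matrix.mul_apply, Fin.sum_univ_three] <;> field_simp <;> ring
  inv_val := by
    have ha := a.ne_zero
    have hs := s.ne_zero
    have hδ := δ.ne_zero
    ext i j
    fin_cases i <;> fin_cases j <;> simp [Matrix.mul_apply, Fin.sum_univ_three] <;> field_simp <;> ring

lemma sum_par (f : G F → ℤ) :
    (∑ g : G F, if (g : Matrix (Fin 3) (Fin 3) F) 1 0 = 0 ∧ (g : Matrix (Fin 3) (Fin 3) F) 2 0 = 0 then f g else 0) =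
      (∑ g : G F, if up g then f g else 0) +
      ∑ a : Fˣ, ∑ s : Fˣ, ∑ δ : Fˣ, ∑ x : F, ∑ k : F, ∑ l : F, ∑ z : F, f (par a s δ x z k l) := by
  have h1 : ∀ g : G F, (if (g : Matrix (Fin 3) (Fin 3) F) 1 0 = 0 ∧ (g : Matrix (Fin 3) (Fin 3) F) 2 0 = 0 then f g else 0)
      = (if up g then f g else 0) + if ((g : Matrix (Fin 3) (Fin 3) F) 1 0 = 0 ∧ (g : Matrix (Fin 3) (Fin 3) F) 2 0 = 0 ∧
          (g : Matrix (Fin 3) (Fin 3) F) 2 1 ≠ 0) then f g else 0 := by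
    intro g
    unfold up
    by_cases h1 : (g : Matrix (Fin 3) (Fin 3) F) 1 0 = 0 <;>
    by_cases h2 : (g : Matrix (Fin 3) (Fin 3) F) 2 0 = 0 <;>
    by_cases h3 : (g : Matrix (Fin 3) (Fin 3) F) 2 1 = 0 <;> simp [h1, h2, h3]
  rw [Finset.sum_congr rfl fun g _ => h1 g, Finset.sum_add_distrib]
  congr 1
  have : (∑ a : Fˣ, ∑ s : Fˣ, ∑ δ : Fˣ, ∑ x : F, ∑ k : F, ∑ l : F, ∑ z : F, f (par a s δ x z k l)) =
      ∑ t : Fˣ × Fˣ × Fˣ × F × F × F × F,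
        f (par t.1 t.2.1 t.2.2.1 t.2.2.2.1 t.2.2.2.2.2.2 t.2.2.2.2.1 t.2.2.2.2.2.1) := by
    simp only [Fintype.sum_prod_type]
  rw [this]
  symm
  rw [← Finset.sum_filter]
  apply Finset.sum_bij (fun t _ => par t.1 t.2.1 t.2.2.1 t.2.2.2.1 t.2.2.2.2.2.2 t.2.2.2.2.1 t.2.2.2.2.2.1)
  · rintro ⟨a, s, δ, x, k, l, z⟩ _
    rw [Finset.mem_filter]
    exact ⟨Finset.mem_univ _, by simp [par]⟩
  · rintro ⟨a, s, δ, x, k, l, z⟩ _ ⟨a', s', δ', x', k', l', z'⟩ _ h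
    have h' := congrArg (fun g : G F => (g : Matrix (Fin 3) (Fin 3) F)) h
    have e := fun i j => congrFun (congrFun h' i) j
    have e1 := e 0 0
    have e2 := e 0 1
    have e3 := e 0 2
    have e4 := e 1 1
    have e5 := e 1 2
    have e6 := e 2 1
    have e7 := e 2 2
    simp [par] at e1 e2 e3 e4 e5 e6 e7
    have e8 := Units.ext e6
    subst e8 e7 e4
    have hs := s.ne_zero
    field_simp at e5
    have e9 : (δ : F) = δ' := by linear_combination -e5
    simp [e2, e3, Units.ext e1, Units.ext e9]
  · intro g hg
    rw [Finset.mem_filter] at hg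
    obtain ⟨-, g1, g2, g3⟩ := hg
    have hd := det_ne g
    rw [Matrix.det_fin_three, g1, g2] at hd
    have hd' : (g : Matrix (Fin 3) (Fin 3) F) 1 1 * (g : Matrix (Fin 3) (Fin 3) F) 2 2 -
      (g : Matrix (Fin 3) (Fin 3) F) 1 2 * (g : Matrix (Fin 3) (Fin 3) F) 2 1 ≠ 0 := by
      intro h'; apply hd; linear_combination (g : Matrix (Fin 3) (Fin 3) F) 0 0 * h'
    have h0 : (g : Matrix (Fin 3) (Fin 3) F) 0 0 ≠ 0 := by
      intro h'; apply hd; rw [h']; ring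
    refine ⟨(Units.mk0 _ h0, Units.mk0 _ g3, Units.mk0 _ hd', (g : Matrix (Fin 3) (Fin 3) F) 0 1, (g : Matrix (Fin 3) (Fin 3) F) 1 1,
      (g : Matrix (Fin 3) (Fin 3) F) 2 2, (g : Matrix (Fin 3) (Fin 3) F) 0 2), Finset.mem_univ _, ?_⟩
    ext i j
    fin_cases i <;> fin_cases j <;> simp [par, g1, g2]
    field_simp
  · intros; rfl

lemma reg_par (h2 : (2 : F) ≠ 0) (a s δ : Fˣ) (x z k l : F) :
    regU (par a s δ x z k l : Matrix (Fin 3) (Fin 3) F) ↔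
      a = 1 ∧ δ = 1 ∧ l = 2 - k ∧ z ≠ - (x * (k - 1)) / s := by
  have ha := a.ne_zero
  have hs := s.ne_zero
  have hδ := δ.ne_zero
  have e : (s : F) * ((k * l - δ) / s) = k * l - δ := by field_simp
  unfold par
  simp only
  rw [regU_iff h2, sq_ne_iff, Units.ext_iff, Units.ext_iff, Units.val_one]
  generalize hr : (k * l - δ) / (s : F) = r at *
  constructor
  · rintro ⟨⟨e1, e2, e3⟩, e4⟩
    have h3 : ((a : F) - 1) ^ 3 = 0 := by
      linear_combination (-(a:F)) * e2 + (a : F)^2 * e1 + e3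
    have h1 : (a : F) = 1 := by
      have := pow_eq_zero_iff (three_ne_zero) |>.1 h3
      linear_combination this
    have hd : (δ : F) = 1 := by rw [h1] at e3; linear_combination e3 + e
    have hl : l = 2 - k := by linear_combination e1 - h1
    refine ⟨h1, hd, hl, ?_⟩
    intro hz
    apply e4
    have hz' : z * s = - (x * (k - 1)) := by rw [hz]; field_simp
    have hr' : r = - (k - 1) ^ 2 / s := by rw [← hr, hd, hl]; congr 1; ring
    rw [h1, hl, hr', hz]
    refine ⟨⟨?_, ?_, ?_⟩, ⟨?_, ?_, ?_⟩, ⟨?_, ?_, ?_⟩⟩ <;> field_simp <;> ring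
  · rintro ⟨h1, hd, hl, hz⟩
    subst hl
    rw [h1]
    rw [hd] at e
    refine ⟨⟨?_, ?_, ?_⟩, ?_⟩
    · ring
    · linear_combination -e
    · linear_combination -e
    · rintro ⟨⟨-, e4, -⟩, -⟩
      apply hz
      field_simp
      linear_combination e4

lemma m1 (h2 : (2 : F) ≠ 0) :
    (∑ u : G F, if (u : Matrix (Fin 3) (Fin 3) F) 1 0 = 0 ∧ (u : Matrix (Fin 3) (Fin 3) F) 2 0 = 0 then
      (if regU (u : Matrix (Fin 3) (Fin 3) F) then (1 : ℤ) else 0) else 0) =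
      (Fintype.card F : ℤ) * ((Fintype.card F : ℤ) - 1) ^ 2 * ((Fintype.card F : ℤ) + 1) := by
  have hc : (Fintype.card Fˣ : ℤ) = (Fintype.card F : ℤ) - 1 := by
    rw [Fintype.card_units, Nat.cast_sub Fintype.card_pos]; simp
  rw [sum_par]
  have h1 : (∑ g : G F, if up g then (if regU (g : Matrix (Fin 3) (Fin 3) F) then (1 : ℤ) else 0) else 0) =
      (Fintype.card F : ℤ) * ((Fintype.card F : ℤ) - 1) ^ 2 := by
    have := T_e h2 (fun _ _ _ => 1)
    rw [mul_one] at this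
    rw [← this]
    unfold T
    refine Finset.sum_congr rfl fun u _ => ?_
    rw [one_mul, phi]
    split_ifs <;> rfl
  rw [h1]
  simp only [reg_par h2, ite_and, Finset.sum_ite_irrel, Finset.sum_ite_eq', Finset.sum_ite_eq, Finset.sum_const_zero,
    Finset.mem_univ, if_true, cnt_ne]
  simp [hc]
  ring

end
end GL3

namespace GL3
open Matrix
open scoped Classical
noncomputable section
set_option linter.unusedSectionVars false
set_option linter.unusedSimpArgs false

variable {F : Type*} [Field F] [Fintype F]

lemma card_units' : (Fintype.card Fˣ : ℤ) = (Fintype.card F : ℤ) - 1 := by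
    rw [Fintype.card_units, Nat.cast_sub Fintype.card_pos]; simp

lemma regU_det (u : Matrix (Fin 3) (Fin 3) F) (h2 : (2 : F) ≠ 0) (h : regU u) : u.det = 1 := by
  rw [Matrix.eta_fin_three u, regU_iff h2] at h
  rw [Matrix.det_fin_three]
  linear_combination h.1.2.2

lemma regU_par (u : Matrix (Fin 3) (Fin 3) F) (h : regU u) (h1 : u 1 0 = 0) (h2 : u 2 0 = 0) : u 0 0 = 1 := by
  have e := congrFun (congrFun h.1 0) 0
  simp [pow_succ, Matrix.mul_apply, Fin.sum_univ_three, h1, h2] at e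
  linear_combination e

lemma T_psi0 (h2 : (2 : F) ≠ 0) (ξ : F → ℤ) (hξ : ∑ t : Fˣ, ξ t = 0) (g : G F) :
    T (psi0 ξ) g = (Fintype.card F : ℤ) * ((Fintype.card F : ℤ) - 1) ^ 2 * ((Fintype.card F : ℤ) + 1) * psi0 ξ g := by
  by_cases hg : (g : Matrix (Fin 3) (Fin 3) F) 1 0 = 0 ∧ (g : Matrix (Fin 3) (Fin 3) F) 2 0 = 0
  · rw [← mul_one g, T_psi0_left ξ g 1 hg.1 hg.2, mul_one, ← m1 h2, Finset.sum_mul]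
    unfold T
    refine Finset.sum_congr rfl fun u _ => ?_
    rw [one_mul]
    unfold psi0
    by_cases hr : regU (u : Matrix (Fin 3) (Fin 3) F)
    · by_cases hu : (u : Matrix (Fin 3) (Fin 3) F) 1 0 = 0 ∧ (u : Matrix (Fin 3) (Fin 3) F) 2 0 = 0
      · rw [if_pos hr, if_pos hu, if_pos hu, if_pos hr, if_pos hg, regU_par _ hr hu.1 hu.2]; simp
      · rw [if_pos hr, if_neg hu, if_neg hu, zero_mul]
    · simp [hr]
  · rw [T_psi0_zero ξ hξ g hg, psi0, if_neg hg, mul_zero]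

lemma psi_eq (d : F) (ξ : F → ℤ) (g : G F) :
    psi d ξ g = if (g : Matrix (Fin 3) (Fin 3) F).det = d then psi0 ξ g else 0 := by
  unfold psi psi0
  split_ifs <;> simp_all

lemma claim4 (h2 : (2 : F) ≠ 0) (d : F) (ξ : F → ℤ) (hξ : ∑ t : Fˣ, ξ t = 0) (g : G F) :
    T (psi d ξ) g = (Fintype.card F : ℤ) * ((Fintype.card F : ℤ) - 1) ^ 2 * ((Fintype.card F : ℤ) + 1) * psi d ξ g := by
  have : T (psi d ξ) g = if (g : Matrix (Fin 3) (Fin 3) F).det = d then T (psi0 ξ) g else 0 := by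
    unfold T
    have h : ∀ u : G F, (if regU (u : Matrix (Fin 3) (Fin 3) F) then psi d ξ (g * u) else 0) =
        if (g : Matrix (Fin 3) (Fin 3) F).det = d then
          (if regU (u : Matrix (Fin 3) (Fin 3) F) then psi0 ξ (g * u) else 0) else 0 := by
      intro u
      by_cases hr : regU (u : Matrix (Fin 3) (Fin 3) F)
      · rw [if_pos hr, if_pos hr, psi_eq, Units.val_mul, Matrix.det_mul, regU_det _ h2 hr, mul_one]
      · simp [hr]
    rw [Finset.sum_congr rfl fun u _ => h u]
    split_ifs <;> simp
  rw [this, T_psi0 h2 ξ hξ, psi_eq]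
  split_ifs <;> simp

lemma card_B : (∑ g : G F, if up g then (1 : ℤ) else 0) =
    (Fintype.card F : ℤ) ^ 3 * ((Fintype.card F : ℤ) - 1) ^ 3 := by
  rw [sum_up]
  simp [card_units']
  ring

lemma card_P : (∑ g : G F, if (g : Matrix (Fin 3) (Fin 3) F) 1 0 = 0 ∧ (g : Matrix (Fin 3) (Fin 3) F) 2 0 = 0
      then (1 : ℤ) else 0) =
    (Fintype.card F : ℤ) ^ 3 * ((Fintype.card F : ℤ) - 1) ^ 3 * ((Fintype.card F : ℤ) + 1) := by
  rw [sum_par, card_B]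
  simp [card_units']
  ring

lemma card_G : (Fintype.card (G F) : ℤ) =
    (Fintype.card F : ℤ) ^ 3 * ((Fintype.card F : ℤ) - 1) ^ 3 * ((Fintype.card F : ℤ) + 1) *
     ((Fintype.card F : ℤ) ^ 2 + (Fintype.card F : ℤ) + 1) := by
  have h := Matrix.card_GL_field (𝔽 := F) 3
  have hq : 1 ≤ Fintype.card F := Fintype.card_pos
  rw [← Nat.card_eq_fintype_card]
  have h' : (Nat.card (GL (Fin 3) F) : ℤ) = _ := congrArg Nat.cast h
  refine Eq.trans h' ?_
  rw [Fin.prod_univ_three]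
  generalize Fintype.card F = q at *
  have e0 : ((q ^ 3 - q ^ ((0 : Fin 3) : ℕ) : ℕ) : ℤ) = (q : ℤ) ^ 3 - 1 := by
    rw [Nat.cast_sub (Nat.pow_le_pow_right hq (by simp))]; simp
  have e1 : ((q ^ 3 - q ^ ((1 : Fin 3) : ℕ) : ℕ) : ℤ) = (q : ℤ) ^ 3 - q := by
    rw [Nat.cast_sub (Nat.pow_le_pow_right hq (by simp))]; simp
  have e2 : ((q ^ 3 - q ^ ((2 : Fin 3) : ℕ) : ℕ) : ℤ) = (q : ℤ) ^ 3 - q ^ 2 := by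
    rw [Nat.cast_sub (Nat.pow_le_pow_right hq (by simp))]; simp
  rw [Nat.cast_mul, Nat.cast_mul, e0, e1, e2]
  ring

lemma q_ge : (2 : ℤ) ≤ Fintype.card F := by
  have := Fintype.one_lt_card (α := F)
  omega

lemma card_C3 (h2 : (2 : F) ≠ 0) : (∑ u : G F, if regU (u : Matrix (Fin 3) (Fin 3) F) then (1 : ℤ) else 0) =
    (Fintype.card F : ℤ) * ((Fintype.card F : ℤ) - 1) ^ 2 * ((Fintype.card F : ℤ) + 1) *
     ((Fintype.card F : ℤ) ^ 2 + (Fintype.card F : ℤ) + 1) := by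
  have e1 : ∑ d : F, ∑ g : G F, T (phi fun t1 t2 t3 => if t1 * t2 * t3 = d then 1 else 0) g =
      (∑ u : G F, if regU (u : Matrix (Fin 3) (Fin 3) F) then (1 : ℤ) else 0) *
      ((Fintype.card F : ℤ) ^ 3 * ((Fintype.card F : ℤ) - 1) ^ 3) := by
    rw [← card_B, Finset.sum_comm, Finset.sum_mul]
    unfold T
    have : ∀ g : G F, (∑ d : F, ∑ u : G F, if regU (u : Matrix (Fin 3) (Fin 3) F) then
        phi (fun t1 t2 t3 => if t1 * t2 * t3 = d then 1 else 0) (g * u) else 0) =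
        ∑ u : G F, if regU (u : Matrix (Fin 3) (Fin 3) F) then (if up (g * u) then 1 else 0) else 0 := by
      intro g
      rw [Finset.sum_comm]
      refine Finset.sum_congr rfl fun u _ => ?_
      by_cases hr : regU (u : Matrix (Fin 3) (Fin 3) F)
      · by_cases hu : up (g * u)
        · simp [hr, hu, phi]
        · simp [hr, hu, phi]
      · simp [hr]
    rw [Finset.sum_congr rfl fun g _ => this g, Finset.sum_comm]
    refine Finset.sum_congr rfl fun u _ => ?_
    by_cases hr : regU (u : Matrix (Fin 3) (Fin 3) F)
    · simp only [if_pos hr, one_mul]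
      exact Equiv.sum_comp (Equiv.mulRight u) (fun g : G F => if up g then (1 : ℤ) else 0)
    · simp [hr]
  simp only [claim2 h2] at e1
  rw [Finset.sum_comm] at e1
  simp only [← Finset.mul_sum, Finset.sum_ite_eq, Finset.mem_univ, if_true, Finset.sum_const, Finset.card_univ, card_G,
    nsmul_eq_mul] at e1
  have hq := q_ge (F := F)
  generalize (Fintype.card F : ℤ) = q at *
  have hne : q ^ 3 * (q - 1) ^ 3 ≠ 0 := by
    have : q ≠ 0 := by omega
    have : q - 1 ≠ 0 := by omega
    positivity
  apply mul_right_cancel₀ hne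
  rw [← e1]
  ring

end
end GL3

namespace GL3
open Matrix
open scoped Classical
noncomputable section
set_option linter.unusedSectionVars false
set_option linter.unusedSimpArgs false

variable {F : Type*} [Field F] [Fintype F]

lemma swap_abs (A : G F → G F) (θ θ' : F → F → F → ℤ)
    (h1 : ∀ b, up b → up ((A b)⁻¹ * b * A b))
    (h2 : ∀ b, up b → A ((A b)⁻¹ * b * A b) = (A b)⁻¹)
    (h3 : ∀ b, up b → phi θ b = phi θ' ((A b)⁻¹ * b * A b)) (g : G F) :
    Ind (phi θ) g = Ind (phi θ') g := by
  have hs : ∀ θ : F → F → F → ℤ, Ind (phi θ) g = ∑ p : G F with up (p⁻¹ * g * p), phi θ (p⁻¹ * g * p) := by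
    intro θ
    rw [Finset.sum_filter]
    refine Finset.sum_congr rfl fun p _ => ?_
    unfold phi
    split_ifs <;> rfl
  rw [hs, hs]
  have hb : ∀ p : G F, (p * A (p⁻¹ * g * p))⁻¹ * g * (p * A (p⁻¹ * g * p)) =
      (A (p⁻¹ * g * p))⁻¹ * (p⁻¹ * g * p) * A (p⁻¹ * g * p) := by
    intro p; group
  refine Finset.sum_nbij' (fun p => p * A (p⁻¹ * g * p)) (fun p => p * A (p⁻¹ * g * p)) ?_ ?_ ?_ ?_ ?_
  · intro p hp
    rw [Finset.mem_filter] at hp ⊢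
    refine ⟨Finset.mem_univ _, ?_⟩
    rw [hb]
    exact h1 _ hp.2
  · intro p hp
    rw [Finset.mem_filter] at hp ⊢
    refine ⟨Finset.mem_univ _, ?_⟩
    rw [hb]
    exact h1 _ hp.2
  · intro p hp
    rw [Finset.mem_filter] at hp
    beta_reduce
    rw [hb, h2 _ hp.2]
    group
  · intro p hp
    rw [Finset.mem_filter] at hp
    beta_reduce
    rw [hb, h2 _ hp.2]
    group
  · intro p hp
    rw [Finset.mem_filter] at hp
    rw [hb]
    exact h3 _ hp.2

def sA (c1 c2 e : F) : G F :=
  if h : c1 - c2 = 0 then 1 else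
  { val := !![-e, (e ^ 2 - 1) / (c1 - c2), 0; c1 - c2, -e, 0; 0, 0, 1]
    inv := !![-e, -((e ^ 2 - 1) / (c1 - c2)), 0; -(c1 - c2), -e, 0; 0, 0, 1]
    val_inv := by
      ext i j
      fin_cases i <;> fin_cases j <;> simp [Matrix.mul_apply, Fin.sum_univ_three] <;> field_simp <;> ring
    inv_val := by
      ext i j
      fin_cases i <;> fin_cases j <;> simp [Matrix.mul_apply, Fin.sum_univ_three] <;> field_simp <;> ring }

def sB (c1 c2 e : F) : G F :=
  if h : c1 - c2 = 0 then 1 else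
  { val := !![1, 0, 0; 0, -e, (e ^ 2 - 1) / (c1 - c2); 0, c1 - c2, -e]
    inv := !![1, 0, 0; 0, -e, -((e ^ 2 - 1) / (c1 - c2)); 0, -(c1 - c2), -e]
    val_inv := by
      ext i j
      fin_cases i <;> fin_cases j <;> simp [Matrix.mul_apply, Fin.sum_univ_three] <;> field_simp <;> ring
    inv_val := by
      ext i j
      fin_cases i <;> fin_cases j <;> simp [Matrix.mul_apply, Fin.sum_univ_three] <;> field_simp <;> ring }

lemma sA_inv (c1 c2 e : F) : (sA c1 c2 e)⁻¹ = sA c2 c1 e := by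
  unfold sA
  by_cases h : c1 - c2 = 0
  · have h' : c2 - c1 = 0 := by linear_combination -h
    rw [dif_pos h, dif_pos h']; simp
  · have h' : c2 - c1 ≠ 0 := by intro h'; apply h; linear_combination -h'
    rw [dif_neg h, dif_neg h']
    ext i j
    have hh : (e ^ 2 - 1) / (c2 - c1) = - ((e ^ 2 - 1) / (c1 - c2)) := by
      rw [← neg_sub c1 c2, div_neg]
    fin_cases i <;> fin_cases j <;> simp [hh]

lemma sB_inv (c1 c2 e : F) : (sB c1 c2 e)⁻¹ = sB c2 c1 e := by
  unfold sB
  by_cases h : c1 - c2 = 0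
  · have h' : c2 - c1 = 0 := by linear_combination -h
    rw [dif_pos h, dif_pos h']; simp
  · have h' : c2 - c1 ≠ 0 := by intro h'; apply h; linear_combination -h'
    rw [dif_neg h, dif_neg h']
    ext i j
    have hh : (e ^ 2 - 1) / (c2 - c1) = - ((e ^ 2 - 1) / (c1 - c2)) := by
      rw [← neg_sub c1 c2, div_neg]
    fin_cases i <;> fin_cases j <;> simp [hh]

lemma sA_conj (a b c : Fˣ) (x y z : F) : ∃ y' z', (sA (a : F) b x)⁻¹ * tri a b c x y z * sA (a : F) b x =
    tri b a c x y' z' := by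
  by_cases h : (a : F) - b = 0
  · have : a = b := Units.ext (by linear_combination h)
    subst this
    refine ⟨y, z, ?_⟩
    unfold sA
    rw [dif_pos h]; simp
  · refine ⟨-((a : F) - b) * z + - x * y, -x * z - ((x ^ 2 - 1) / ((a : F) - b)) * y, ?_⟩
    rw [mul_assoc, inv_mul_eq_iff_eq_mul]
    unfold sA
    rw [dif_neg h]
    ext i j
    fin_cases i <;> fin_cases j <;> simp [Matrix.mul_apply, Fin.sum_univ_three, tri, Matrix.vecMul, dotProduct] <;> field_simp <;> ring

lemma sB_conj (a b c : Fˣ) (x y z : F) : ∃ x' z', (sB (b : F) c y)⁻¹ * tri a b c x y z * sB (b : F) c y =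
    tri a c b x' y z' := by
  by_cases h : (b : F) - c = 0
  · have : b = c := Units.ext (by linear_combination h)
    subst this
    refine ⟨x, z, ?_⟩
    unfold sB
    rw [dif_pos h]; simp
  · refine ⟨((b : F) - c) * z + - x * y, -y * z + ((y ^ 2 - 1) / ((b : F) - c)) * x, ?_⟩
    rw [mul_assoc, inv_mul_eq_iff_eq_mul]
    unfold sB
    rw [dif_neg h]
    ext i j
    fin_cases i <;> fin_cases j <;> simp [Matrix.mul_apply, Fin.sum_univ_three, tri, Matrix.vecMul, dotProduct] <;> field_simp <;> ring

lemma phi_tri (θ : F → F → F → ℤ) (a b c : Fˣ) (x y z : F) : phi θ (tri a b c x y z) = θ a b c := by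
  simp [phi, up, tri]

lemma up_tri (a b c : Fˣ) (x y z : F) : up (tri a b c x y z) := by
  simp [up, tri]

lemma swapA (θ : F → F → F → ℤ) (g : G F) : Ind (phi θ) g = Ind (phi fun t1 t2 t3 => θ t2 t1 t3) g := by
  apply swap_abs (fun b => sA ((b : Matrix (Fin 3) (Fin 3) F) 0 0) ((b : Matrix (Fin 3) (Fin 3) F) 1 1)
    ((b : Matrix (Fin 3) (Fin 3) F) 0 1))
  all_goals
    intro b hb
    obtain ⟨a, b, c, x, y, z, rfl⟩ := (up_iff b).1 hb
    have e : ∀ (a b c : Fˣ) (x y z : F), sA ((tri a b c x y z : Matrix (Fin 3) (Fin 3) F) 0 0) ((tri a b c x y z : Matrix (Fin 3) (Fin 3) F) 1 1)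
      ((tri a b c x y z : Matrix (Fin 3) (Fin 3) F) 0 1) = sA (a : F) b x := by intros; simp [tri]
    obtain ⟨y', z', h⟩ := sA_conj a b c x y z
    beta_reduce
    rw [e, h]
  · apply up_tri
  · rw [e, sA_inv]
  · rw [phi_tri, phi_tri]

lemma swapB (θ : F → F → F → ℤ) (g : G F) : Ind (phi θ) g = Ind (phi fun t1 t2 t3 => θ t1 t3 t2) g := by
  apply swap_abs (fun b => sB ((b : Matrix (Fin 3) (Fin 3) F) 1 1) ((b : Matrix (Fin 3) (Fin 3) F) 2 2)
    ((b : Matrix (Fin 3) (Fin 3) F) 1 2))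
  all_goals
    intro b hb
    obtain ⟨a, b, c, x, y, z, rfl⟩ := (up_iff b).1 hb
    have e : ∀ (a b c : Fˣ) (x y z : F), sB ((tri a b c x y z : Matrix (Fin 3) (Fin 3) F) 1 1) ((tri a b c x y z : Matrix (Fin 3) (Fin 3) F) 2 2)
      ((tri a b c x y z : Matrix (Fin 3) (Fin 3) F) 1 2) = sB (b : F) c y := by intros; simp [tri]
    obtain ⟨x', z', h⟩ := sB_conj a b c x y z
    beta_reduce
    rw [e, h]
  · apply up_tri
  · rw [e, sB_inv]
  · rw [phi_tri, phi_tri]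

end
end GL3

namespace GL3
open Matrix
open scoped Classical
noncomputable section
set_option linter.unusedSectionVars false
set_option linter.unusedSimpArgs false

variable {F : Type*} [Field F] [Fintype F]

def dg (a b c : Fˣ) : G F := tri a b c 0 0 0

def dl (a t : F) : ℤ := if t = a then 1 else 0

def dlt (a b c : Fˣ) : F → F → F → ℤ := fun t1 t2 t3 => dl (a : F) t1 * dl (b : F) t2 * dl (c : F) t3

lemma conj_eq (p t h : G F) (hh : p⁻¹ * t * p = h) : (t : Matrix (Fin 3) (Fin 3) F) * p = p * (h : Matrix (Fin 3) (Fin 3) F) := by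
  rw [← hh, ← Units.val_mul, ← Units.val_mul]
  congr 1
  group

lemma up_conj_dg (a b c : Fˣ) (p : G F) (hp : up p) : ∃ x y z, p⁻¹ * dg a b c * p = tri a b c x y z := by
  obtain ⟨a', b', c', x, y, z, rfl⟩ := (up_iff p).1 hp
  have ha := a'.ne_zero
  have hb := b'.ne_zero
  have hc := c'.ne_zero
  have hu : up ((tri a' b' c' x y z)⁻¹ * dg a b c * tri a' b' c' x y z) := by
    simp [up, tri, dg, Matrix.mul_apply, Fin.sum_univ_three]
  obtain ⟨a1, b1, c1, x1, y1, z1, h1⟩ := (up_iff _).1 hu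
  have e := conj_eq _ _ _ h1
  have e0 := congrFun (congrFun e 0) 0
  have e1 := congrFun (congrFun e 1) 1
  have e2 := congrFun (congrFun e 2) 2
  simp [tri, dg, Matrix.mul_apply, Fin.sum_univ_three] at e0 e1 e2
  have f0 : a = a1 := Units.ext (mul_left_cancel₀ ha (by linear_combination e0))
  have f1 : b = b1 := Units.ext (mul_left_cancel₀ hb (by linear_combination e1))
  have f2 : c = c1 := Units.ext (mul_left_cancel₀ hc (by linear_combination e2))
  subst f0 f1 f2
  exact ⟨_, _, _, h1⟩

lemma up_of_conj (a b c : Fˣ) (hab : a ≠ b) (hac : a ≠ c) (hbc : b ≠ c) (p : G F) (x y z : F)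
    (h : p⁻¹ * dg a b c * p = tri a b c x y z) : up p := by
  have e := conj_eq _ _ _ h
  have e0 := congrFun (congrFun e 1) 0
  have e1 := congrFun (congrFun e 2) 0
  have e2 := congrFun (congrFun e 2) 1
  simp [tri, dg, Matrix.mul_apply, Fin.sum_univ_three] at e0 e1 e2
  have n1 : (b : F) - a ≠ 0 := by rw [sub_ne_zero]; exact fun h => hab (Units.ext h.symm)
  have n2 : (c : F) - a ≠ 0 := by rw [sub_ne_zero]; exact fun h => hac (Units.ext h.symm)
  have n3 : (c : F) - b ≠ 0 := by rw [sub_ne_zero]; exact fun h => hbc (Units.ext h.symm)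
  have f0 : (p : Matrix (Fin 3) (Fin 3) F) 1 0 = 0 := mul_left_cancel₀ n1 (by linear_combination e0)
  have f1 : (p : Matrix (Fin 3) (Fin 3) F) 2 0 = 0 := mul_left_cancel₀ n2 (by linear_combination e1)
  rw [f1] at e2
  have f2 : (p : Matrix (Fin 3) (Fin 3) F) 2 1 = 0 := mul_left_cancel₀ n3 (by linear_combination e2)
  exact ⟨f0, f1, f2⟩

lemma phi_dlt (a b c : Fˣ) (g : G F) : phi (dlt a b c) g = if ∃ x y z, g = tri a b c x y z then 1 else 0 := by
  by_cases hg : up g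
  · obtain ⟨a', b', c', x, y, z, rfl⟩ := (up_iff g).1 hg
    rw [phi_tri]
    by_cases h1 : a' = a
    · by_cases h2 : b' = b
      · by_cases h3 : c' = c
        · subst h1 h2 h3
          rw [if_pos ⟨_, _, _, rfl⟩]; simp [dlt, dl]
        · rw [if_neg]
          · simp [dlt, dl, Units.ext_iff.not.1 h3]
          · rintro ⟨x', y', z', h⟩
            have := congrArg (fun g : G F => (g : Matrix (Fin 3) (Fin 3) F) 2 2) h
            simp [tri] at this
            exact h3 (Units.ext this)
      · rw [if_neg]
        · simp [dlt, dl, Units.ext_iff.not.1 h2]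
        · rintro ⟨x', y', z', h⟩
          have := congrArg (fun g : G F => (g : Matrix (Fin 3) (Fin 3) F) 1 1) h
          simp [tri] at this
          exact h2 (Units.ext this)
    · rw [if_neg]
      · simp [dlt, dl, Units.ext_iff.not.1 h1]
      · rintro ⟨x', y', z', h⟩
        have := congrArg (fun g : G F => (g : Matrix (Fin 3) (Fin 3) F) 0 0) h
        simp [tri] at this
        exact h1 (Units.ext this)
  · rw [phi, if_neg hg, if_neg]
    rintro ⟨x, y, z, rfl⟩
    exact hg (up_tri _ _ _ _ _ _)

lemma E1 (a b c : Fˣ) (hab : a ≠ b) (hac : a ≠ c) (hbc : b ≠ c) :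
    Ind (phi (dlt a b c)) (dg a b c) = (Fintype.card F : ℤ) ^ 3 * ((Fintype.card F : ℤ) - 1) ^ 3 := by
  rw [← card_B]
  unfold Ind
  refine Finset.sum_congr rfl fun p _ => ?_
  rw [phi_dlt]
  refine if_congr ⟨?_, ?_⟩ rfl rfl
  · rintro ⟨x, y, z, h⟩
    exact up_of_conj a b c hab hac hbc p x y z h
  · exact up_conj_dg a b c p

lemma tri_conj (a b c : Fˣ) (hab : a ≠ b) (hac : a ≠ c) (hbc : b ≠ c) (x y z : F) :
    ∃ r : G F, tri a b c x y z = r * dg a b c * r⁻¹ := by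
  have n1 : (b : F) - a ≠ 0 := by rw [sub_ne_zero]; exact fun h => hab (Units.ext h.symm)
  have n2 : (c : F) - a ≠ 0 := by rw [sub_ne_zero]; exact fun h => hac (Units.ext h.symm)
  have n3 : (c : F) - b ≠ 0 := by rw [sub_ne_zero]; exact fun h => hbc (Units.ext h.symm)
  refine ⟨tri 1 1 1 (x / (b - a)) (y / (c - b)) ((x * (y / (c - b)) + z) / (c - a)), ?_⟩
  rw [eq_mul_inv_iff_mul_eq]
  ext i j
  fin_cases i <;> fin_cases j <;> simp [tri, dg, Matrix.mul_apply, Fin.sum_univ_three] <;> field_simp <;> ring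

lemma E1' (a b c : Fˣ) (hab : a ≠ b) (hac : a ≠ c) (hbc : b ≠ c) (g : G F) :
    Ind (phi (dlt a b c)) g = (Fintype.card F : ℤ) ^ 3 * ((Fintype.card F : ℤ) - 1) ^ 3 *
      if ∃ r : G F, g = r * dg a b c * r⁻¹ then 1 else 0 := by
  by_cases hg : ∃ r : G F, g = r * dg a b c * r⁻¹
  · rw [if_pos hg]
    obtain ⟨r, rfl⟩ := hg
    rw [Ind_conj, E1 a b c hab hac hbc, mul_one]
  · rw [if_neg hg, mul_zero]
    unfold Ind
    refine Finset.sum_eq_zero fun p _ => ?_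
    rw [phi_dlt, if_neg]
    rintro ⟨x, y, z, h⟩
    obtain ⟨r, hr⟩ := tri_conj a b c hab hac hbc x y z
    apply hg
    refine ⟨p * r, ?_⟩
    rw [hr] at h
    rw [show p * r * dg a b c * (p * r)⁻¹ = p * (r * dg a b c * r⁻¹) * p⁻¹ by group, ← h]
    group

lemma dlt_swapA (a b c : Fˣ) (g : G F) : Ind (phi (dlt a b c)) g = Ind (phi (dlt b a c)) g := by
  rw [swapA]
  congr 2
  funext t1 t2 t3
  simp only [dlt]; ring

lemma dlt_swapB (a b c : Fˣ) (g : G F) : Ind (phi (dlt a b c)) g = Ind (phi (dlt a c b)) g := by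
  rw [swapB]
  congr 2
  funext t1 t2 t3
  simp only [dlt]; ring

lemma diag_perm (b1 b2 b3 c1 c2 c3 : Fˣ) (p : G F) (x y z : F) (h : p⁻¹ * dg b1 b2 b3 * p = tri c1 c2 c3 x y z) :
    (c1 = b1 ∧ c2 = b2 ∧ c3 = b3) ∨ (c1 = b1 ∧ c2 = b3 ∧ c3 = b2) ∨ (c1 = b2 ∧ c2 = b1 ∧ c3 = b3) ∨
    (c1 = b2 ∧ c2 = b3 ∧ c3 = b1) ∨ (c1 = b3 ∧ c2 = b1 ∧ c3 = b2) ∨ (c1 = b3 ∧ c2 = b2 ∧ c3 = b1) := by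
  have e := conj_eq _ _ _ h
  have e0 := congrFun (congrFun e 0) 0
  have e1 := congrFun (congrFun e 1) 0
  have e2 := congrFun (congrFun e 2) 0
  simp [tri, dg, Matrix.mul_apply, Fin.sum_univ_three] at e0 e1 e2
  have hdet : (c1 : F) * c2 * c3 = b1 * b2 * b3 := by
    have := congrArg Matrix.det e
    rw [Matrix.det_mul, Matrix.det_mul, det_tri, dg, det_tri] at this
    exact mul_left_cancel₀ (det_ne p) (by linear_combination -this)
  have htr : (c1 : F) + c2 + c3 = b1 + b2 + b3 := by
    have := congrArg (fun g : G F => (g : Matrix (Fin 3) (Fin 3) F).trace) h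
    simp only [Units.val_mul] at this
    rw [mul_assoc, Matrix.trace_mul_comm, mul_assoc, Units.mul_inv, mul_one] at this
    simp [Matrix.trace, Fin.sum_univ_three, tri, dg] at this
    exact this.symm
  have key : ∀ u v w : Fˣ, c1 = u → (c1 : F) * c2 * c3 = u * v * w → (c1 : F) + c2 + c3 = u + v + w →
      (c2 = v ∧ c3 = w) ∨ (c2 = w ∧ c3 = v) := by
    rintro u v w rfl e1 e2
    have h2 : (c2 : F) * c3 = v * w := mul_left_cancel₀ c1.ne_zero (by linear_combination e1)
    have h3 : ((c2 : F) - v) * (c2 - w) = 0 := by linear_combination (c2 : F) * e2 - h2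
    rcases mul_eq_zero.1 h3 with h | h
    · left
      exact ⟨Units.ext (by linear_combination h), Units.ext (by linear_combination e2 - h)⟩
    · right
      exact ⟨Units.ext (by linear_combination h), Units.ext (by linear_combination e2 - h)⟩
  have hne : (p : Matrix (Fin 3) (Fin 3) F) 0 0 ≠ 0 ∨ (p : Matrix (Fin 3) (Fin 3) F) 1 0 ≠ 0 ∨ (p : Matrix (Fin 3) (Fin 3) F) 2 0 ≠ 0 := by
    by_contra! hh
    apply det_ne p
    rw [Matrix.det_fin_three, hh.1, hh.2.1, hh.2.2]; ring
  rcases hne with hn | hn | hn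
  · have hc : c1 = b1 := Units.ext (mul_left_cancel₀ hn (by linear_combination -e0))
    have := key b1 b2 b3 hc hdet htr
    rcases this with ⟨h2, h3⟩ | ⟨h2, h3⟩ <;> simp [hc, h2, h3]
  · have hc : c1 = b2 := Units.ext (mul_left_cancel₀ hn (by linear_combination -e1))
    have := key b2 b1 b3 hc (by rw [hdet]; ring) (by rw [htr]; ring)
    rcases this with ⟨h2, h3⟩ | ⟨h2, h3⟩ <;> simp [hc, h2, h3]
  · have hc : c1 = b3 := Units.ext (mul_left_cancel₀ hn (by linear_combination -e2))
    have := key b3 b1 b2 hc (by rw [hdet]; ring) (by rw [htr]; ring)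
    rcases this with ⟨h2, h3⟩ | ⟨h2, h3⟩ <;> simp [hc, h2, h3]

lemma E2 (b1 b2 b3 : Fˣ) (hab : b1 ≠ b2) (hac : b1 ≠ b3) (hbc : b2 ≠ b3) (θ : F → F → F → ℤ) (κ : ℤ)
    (k1 : θ b1 b2 b3 = κ) (k2 : θ b1 b3 b2 = κ) (k3 : θ b2 b1 b3 = κ) (k4 : θ b2 b3 b1 = κ)
    (k5 : θ b3 b1 b2 = κ) (k6 : θ b3 b2 b1 = κ) :
    Ind (phi θ) (dg b1 b2 b3) = κ * (6 * ((Fintype.card F : ℤ) ^ 3 * ((Fintype.card F : ℤ) - 1) ^ 3)) := by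
  have hab' : (b1 : F) ≠ b2 := fun h => hab (Units.ext h)
  have hac' : (b1 : F) ≠ b3 := fun h => hac (Units.ext h)
  have hbc' : (b2 : F) ≠ b3 := fun h => hbc (Units.ext h)
  have key : ∀ p : G F, phi θ (p⁻¹ * dg b1 b2 b3 * p) =
      κ * (phi (dlt b1 b2 b3) (p⁻¹ * dg b1 b2 b3 * p) + (phi (dlt b1 b3 b2) (p⁻¹ * dg b1 b2 b3 * p) +
       (phi (dlt b2 b1 b3) (p⁻¹ * dg b1 b2 b3 * p) + (phi (dlt b2 b3 b1) (p⁻¹ * dg b1 b2 b3 * p) +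
       (phi (dlt b3 b1 b2) (p⁻¹ * dg b1 b2 b3 * p) + phi (dlt b3 b2 b1) (p⁻¹ * dg b1 b2 b3 * p)))))) := by
    intro p
    by_cases hp : up (p⁻¹ * dg b1 b2 b3 * p)
    · obtain ⟨c1, c2, c3, x, y, z, h⟩ := (up_iff _).1 hp
      have hperm := diag_perm b1 b2 b3 c1 c2 c3 p x y z h
      rw [h]
      simp only [phi_tri]
      rcases hperm with ⟨rfl, rfl, rfl⟩ | ⟨rfl, rfl, rfl⟩ | ⟨rfl, rfl, rfl⟩ | ⟨rfl, rfl, rfl⟩ | ⟨rfl, rfl, rfl⟩ | ⟨rfl, rfl, rfl⟩ <;>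
      simp [dlt, dl, *, hab'.symm, hac'.symm, hbc'.symm]
    · simp only [phi, if_neg hp]; ring
  have : Ind (phi θ) (dg b1 b2 b3) = κ * (Ind (phi (dlt b1 b2 b3)) (dg b1 b2 b3) + (Ind (phi (dlt b1 b3 b2)) (dg b1 b2 b3) +
       (Ind (phi (dlt b2 b1 b3)) (dg b1 b2 b3) + (Ind (phi (dlt b2 b3 b1)) (dg b1 b2 b3) +
       (Ind (phi (dlt b3 b1 b2)) (dg b1 b2 b3) + Ind (phi (dlt b3 b2 b1)) (dg b1 b2 b3)))))) := by
    unfold Ind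
    rw [Finset.sum_congr rfl fun p _ => key p, ← Finset.mul_sum]
    simp only [Finset.sum_add_distrib]
  rw [this, dlt_swapB b1 b3 b2, dlt_swapA b2 b1 b3, dlt_swapB b2 b3 b1, dlt_swapA b2 b1 b3, dlt_swapA b3 b1 b2,
    dlt_swapB b1 b3 b2, dlt_swapA b3 b2 b1, dlt_swapB b2 b3 b1, dlt_swapA b2 b1 b3, E1 b1 b2 b3 hab hac hbc]
  ring

lemma E3 (b1 b2 b3 : Fˣ) (hab : b1 ≠ b2) (hac : b1 ≠ b3) (hbc : b2 ≠ b3) (d : F) (hd : (b1 : F) * b2 * b3 = d)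
    (ξ : F → ℤ) (κ : ℤ) (k1 : ξ b1 = κ) (k2 : ξ b2 = κ) (k3 : ξ b3 = κ) :
    Ind (psi d ξ) (dg b1 b2 b3) = κ * (3 * ((Fintype.card F : ℤ) ^ 3 * ((Fintype.card F : ℤ) - 1) ^ 3 * ((Fintype.card F : ℤ) + 1))) := by
  have n1 : (b1 : F) - b2 ≠ 0 := by rw [sub_ne_zero]; exact fun h => hab (Units.ext h)
  have n2 : (b1 : F) - b3 ≠ 0 := by rw [sub_ne_zero]; exact fun h => hac (Units.ext h)
  have n3 : (b2 : F) - b3 ≠ 0 := by rw [sub_ne_zero]; exact fun h => hbc (Units.ext h)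
  have key : ∀ p : G F, psi d ξ (p⁻¹ * dg b1 b2 b3 * p) =
      κ * ((if (p : Matrix (Fin 3) (Fin 3) F) 1 0 = 0 ∧ (p : Matrix (Fin 3) (Fin 3) F) 2 0 = 0 then 1 else 0) +
       ((if (p : Matrix (Fin 3) (Fin 3) F) 0 0 = 0 ∧ (p : Matrix (Fin 3) (Fin 3) F) 2 0 = 0 then 1 else 0) +
       (if (p : Matrix (Fin 3) (Fin 3) F) 1 0 = 0 ∧ (p : Matrix (Fin 3) (Fin 3) F) 0 0 = 0 then 1 else 0))) := by
    intro p
    have hne : (p : Matrix (Fin 3) (Fin 3) F) 0 0 ≠ 0 ∨ (p : Matrix (Fin 3) (Fin 3) F) 1 0 ≠ 0 ∨ (p : Matrix (Fin 3) (Fin 3) F) 2 0 ≠ 0 := by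
      by_contra! hh
      apply det_ne p
      rw [Matrix.det_fin_three, hh.1, hh.2.1, hh.2.2]; ring
    have hdd : ((p⁻¹ * dg b1 b2 b3 * p : G F) : Matrix (Fin 3) (Fin 3) F).det = d := by
      rw [Units.val_mul, Units.val_mul, Matrix.det_mul, Matrix.det_mul, mul_comm, ← mul_assoc, ← Matrix.det_mul,
        Units.mul_inv, Matrix.det_one, one_mul, dg, det_tri, hd]
    have e := conj_eq p (dg b1 b2 b3) _ rfl
    have hcol : ∀ β : F, (∀ i, ((dg b1 b2 b3 : G F) * (p : Matrix (Fin 3) (Fin 3) F)) i 0 = β * (p : Matrix (Fin 3) (Fin 3) F) i 0) →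
        ∀ i, ((p⁻¹ * dg b1 b2 b3 * p : G F) : Matrix (Fin 3) (Fin 3) F) i 0 = β * (1 : Matrix (Fin 3) (Fin 3) F) i 0 := by
      intro β h i
      rw [mul_assoc, Units.val_mul, Units.val_mul, Matrix.mul_apply]
      simp only [h]
      rw [← Units.inv_mul p, Matrix.mul_apply, Finset.mul_sum]
      exact Finset.sum_congr rfl fun j _ => by ring
    simp only [psi, hdd, and_true]
    generalize p⁻¹ * dg b1 b2 b3 * p = h at *
    by_cases hh : (h : Matrix (Fin 3) (Fin 3) F) 1 0 = 0 ∧ (h : Matrix (Fin 3) (Fin 3) F) 2 0 = 0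
    · rw [if_pos hh]
      have e0 := congrFun (congrFun e 0) 0
      have e1 := congrFun (congrFun e 1) 0
      have e2 := congrFun (congrFun e 2) 0
      simp [tri, dg, Matrix.mul_apply, Fin.sum_univ_three, hh.1, hh.2] at e0 e1 e2
      rcases hne with hn | hn | hn
      · have hc : (h : Matrix (Fin 3) (Fin 3) F) 0 0 = b1 := mul_left_cancel₀ hn (by linear_combination -e0)
        rw [hc] at e1 e2
        have z1 : (p : Matrix (Fin 3) (Fin 3) F) 1 0 = 0 := mul_left_cancel₀ n1 (by linear_combination -e1)
        have z2 : (p : Matrix (Fin 3) (Fin 3) F) 2 0 = 0 := mul_left_cancel₀ n2 (by linear_combination -e2)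
        simp [hc, z1, z2, hn, k1]
      · have hc : (h : Matrix (Fin 3) (Fin 3) F) 0 0 = b2 := mul_left_cancel₀ hn (by linear_combination -e1)
        rw [hc] at e0 e2
        have z1 : (p : Matrix (Fin 3) (Fin 3) F) 0 0 = 0 := mul_left_cancel₀ n1 (by linear_combination e0)
        have z2 : (p : Matrix (Fin 3) (Fin 3) F) 2 0 = 0 := mul_left_cancel₀ n3 (by linear_combination -e2)
        simp [hc, z1, z2, hn, k2]
      · have hc : (h : Matrix (Fin 3) (Fin 3) F) 0 0 = b3 := mul_left_cancel₀ hn (by linear_combination -e2)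
        rw [hc] at e0 e1
        have z1 : (p : Matrix (Fin 3) (Fin 3) F) 0 0 = 0 := mul_left_cancel₀ n2 (by linear_combination e0)
        have z2 : (p : Matrix (Fin 3) (Fin 3) F) 1 0 = 0 := mul_left_cancel₀ n3 (by linear_combination e1)
        simp [hc, z1, z2, hn, k3]
    · rw [if_neg hh, if_neg, if_neg, if_neg]
      · ring
      all_goals
        rintro ⟨z1, z2⟩
        apply hh
      · have := hcol b3 (by
          intro i; fin_cases i <;> simp [tri, dg, Matrix.mul_apply, Fin.sum_univ_three, z1, z2])
        rw [this 1, this 2]; simp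
      · have := hcol b2 (by
          intro i; fin_cases i <;> simp [tri, dg, Matrix.mul_apply, Fin.sum_univ_three, z1, z2])
        rw [this 1, this 2]; simp
      · have := hcol b1 (by
          intro i; fin_cases i <;> simp [tri, dg, Matrix.mul_apply, Fin.sum_univ_three, z1, z2])
        rw [this 1, this 2]; simp
  unfold Ind
  rw [Finset.sum_congr rfl fun p _ => key p, ← Finset.mul_sum]
  simp only [Finset.sum_add_distrib]
  have c2 := Equiv.sum_comp (Equiv.mulLeft (wS1 : G F)) (fun p : G F => if (p : Matrix (Fin 3) (Fin 3) F) 1 0 = 0 ∧ (p : Matrix (Fin 3) (Fin 3) F) 2 0 = 0 then (1 : ℤ) else 0)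
  have c3 := Equiv.sum_comp (Equiv.mulLeft (wW : G F)) (fun p : G F => if (p : Matrix (Fin 3) (Fin 3) F) 1 0 = 0 ∧ (p : Matrix (Fin 3) (Fin 3) F) 2 0 = 0 then (1 : ℤ) else 0)
  simp only [Equiv.coe_mulLeft, Units.val_mul, wS1, wW, Matrix.mul_apply, Fin.sum_univ_three] at c2 c3
  simp at c2 c3
  have c1 := card_P (F := F)
  simp at c1 ⊢
  left
  rw [c2, c3, c1]
  ring

end
end GL3

namespace GL3
open Matrix
open scoped Classical
noncomputable section
set_option linter.unusedSectionVars false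
set_option linter.unusedSimpArgs false

variable {F : Type*} [Field F] [Fintype F]

def tht (a b c : Fˣ) : F → F → F → ℤ := fun t1 t2 t3 => if t1 * t2 * t3 = a * b * c then
  ((Fintype.card F : ℤ) - 1) ^ 2 * dlt a b c t1 t2 t3
    - ((Fintype.card F : ℤ) - 1) * (dl (a : F) t1 + dl (b : F) t2 + dl (c : F) t3) + 2 else 0

def xi (a : Fˣ) : F → ℤ := fun t => ((Fintype.card F : ℤ) - 1) * dl (a : F) t - 1

lemma sum_dl (a : Fˣ) : ∑ t : Fˣ, dl (a : F) t = 1 := by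
  simp [dl, Units.val_inj]

lemma sum_dl_inv (a e : Fˣ) : ∑ t : Fˣ, dl (a : F) (e * t⁻¹ : Fˣ) = 1 := by
  rw [Finset.sum_eq_single (e * a⁻¹)]
  · simp [dl]
  · intro t _ h
    unfold dl
    rw [if_neg]
    intro h'
    apply h
    have := Units.ext h'
    rw [← this]; group; simp
  · simp

lemma sum_dl_dl (a b : Fˣ) : ∑ t : Fˣ, dl (a : F) t * dl (b : F) (a * b * t⁻¹ : Fˣ) = 1 := by
  rw [Finset.sum_eq_single a]
  · simp [dl]
  · intro t _ h
    unfold dl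
    rw [if_neg (fun h' => h (Units.ext h')), zero_mul]
  · simp

lemma sum_xi (a : Fˣ) : ∑ t : Fˣ, xi a t = 0 := by
  unfold xi
  rw [Finset.sum_sub_distrib, ← Finset.mul_sum, sum_dl, Finset.sum_const, Finset.card_univ, nsmul_eq_mul, card_units']
  ring

lemma zm_aux (a b c s e : Fˣ) (h : s * e = a * b * c) :
    ∑ t : Fˣ, (((Fintype.card F : ℤ) - 1) ^ 2 * (dl (a : F) s * dl (b : F) t * dl (c : F) (e * t⁻¹ : Fˣ))
    - ((Fintype.card F : ℤ) - 1) * (dl (a : F) s + dl (b : F) t + dl (c : F) (e * t⁻¹ : Fˣ)) + 2) = 0 := by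
  have k : dl (a : F) s * ∑ t : Fˣ, dl (b : F) t * dl (c : F) (e * t⁻¹ : Fˣ) = dl (a : F) s := by
    by_cases hs : s = a
    · subst hs
      have : e = b * c := by
        rw [mul_assoc] at h; exact mul_left_cancel h
      rw [this, sum_dl_dl, mul_one]
    · have : dl (a : F) s = 0 := by
        unfold dl; rw [if_neg (fun h' => hs (Units.ext h'))]
      rw [this, zero_mul]
  simp only [mul_assoc]
  rw [Finset.sum_add_distrib, Finset.sum_sub_distrib, ← Finset.mul_sum, ← Finset.mul_sum, ← Finset.mul_sum,
    k, Finset.sum_add_distrib, Finset.sum_add_distrib, sum_dl, sum_dl_inv]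
  simp only [Finset.sum_const, Finset.card_univ, nsmul_eq_mul, card_units']
  ring

lemma um1 (s t e : Fˣ) : s * t * (e * t⁻¹) = s * e := by
  rw [mul_comm e, mul_assoc, mul_inv_cancel_left]

lemma um2 (s t e : Fˣ) : t * s * (e * t⁻¹) = s * e := by
  rw [mul_comm t, um1]

lemma um3 (s t e : Fˣ) : t * (e * t⁻¹) * s = s * e := by
  rw [mul_comm _ s, ← mul_assoc, um1]

lemma zm_tht (a b c : Fˣ) : ZM (tht a b c) := by
  refine ⟨?_, ?_, ?_⟩
  · intro s e
    by_cases h : s * e = a * b * c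
    · rw [← zm_aux a b c s e h]
      refine Finset.sum_congr rfl fun t _ => ?_
      unfold tht
      rw [if_pos, dlt]
      rw [← Units.val_mul, ← Units.val_mul, ← Units.val_mul, ← Units.val_mul, ← h]
      rw [um1]
    · refine Finset.sum_eq_zero fun t _ => ?_
      unfold tht
      rw [if_neg]
      intro h'
      apply h
      rw [← Units.val_mul, ← Units.val_mul, ← Units.val_mul, ← Units.val_mul] at h'
      rw [← um1 s t e, Units.ext h']
  · intro s e
    by_cases h : s * e = b * a * c
    · rw [← zm_aux b a c s e h]
      refine Finset.sum_congr rfl fun t _ => ?_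
      unfold tht
      rw [if_pos, dlt]
      · ring
      rw [← Units.val_mul, ← Units.val_mul, ← Units.val_mul, ← Units.val_mul, mul_comm a b, ← h]
      rw [um2]
    · refine Finset.sum_eq_zero fun t _ => ?_
      unfold tht
      rw [if_neg]
      intro h'
      apply h
      rw [← Units.val_mul, ← Units.val_mul, ← Units.val_mul, ← Units.val_mul, mul_comm a b] at h'
      rw [← um2 s t e, Units.ext h']
  · intro s e
    by_cases h : s * e = c * a * b
    · rw [← zm_aux c a b s e h]
      refine Finset.sum_congr rfl fun t _ => ?_
      unfold tht
      rw [if_pos, dlt]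
      · ring
      rw [← Units.val_mul, ← Units.val_mul, ← Units.val_mul, ← Units.val_mul, mul_comm (a * b) c, ← mul_assoc c a b, ← h]
      rw [um3]
    · refine Finset.sum_eq_zero fun t _ => ?_
      unfold tht
      rw [if_neg]
      intro h'
      apply h
      rw [← Units.val_mul, ← Units.val_mul, ← Units.val_mul, ← Units.val_mul, mul_comm (a * b) c, ← mul_assoc c a b] at h'
      rw [← um3 s t e, Units.ext h']

lemma decomp (a b c : Fˣ) (d : F) (hd : (a : F) * b * c = d) (g : G F) :
    ((Fintype.card F : ℤ) - 1) ^ 2 * phi (dlt a b c) g =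
      phi (tht a b c) g + (phi (fun t1 t2 t3 => if t1 * t2 * t3 = d then xi a t1 else 0) g +
      (phi (fun t1 t2 t3 => if t1 * t2 * t3 = d then xi b t2 else 0) g +
      (phi (fun t1 t2 t3 => if t1 * t2 * t3 = d then xi c t3 else 0) g +
        phi (fun t1 t2 t3 => if t1 * t2 * t3 = d then 1 else 0) g))) := by
  subst hd
  by_cases hg : up g
  · simp only [phi, if_pos hg, tht]
    generalize (g : Matrix (Fin 3) (Fin 3) F) 0 0 = x
    generalize (g : Matrix (Fin 3) (Fin 3) F) 1 1 = y
    generalize (g : Matrix (Fin 3) (Fin 3) F) 2 2 = z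
    by_cases h : x * y * z = a * b * c
    · simp only [if_pos h, xi]; ring
    · simp only [if_neg h]
      have : dlt a b c x y z = 0 := by
        unfold dlt dl
        by_cases h1 : x = a
        · by_cases h2 : y = b
          · by_cases h3 : z = c
            · exact absurd (by rw [h1, h2, h3]) h
            · rw [if_neg h3, mul_zero]
          · rw [if_neg h2, mul_zero, zero_mul]
        · rw [if_neg h1, zero_mul, zero_mul]
      rw [this]; ring
  · simp only [phi, if_neg hg]; ring

lemma xi_swap2 (d : F) (ξ : F → ℤ) (g : G F) :
    Ind (phi (fun t1 t2 t3 => if t1 * t2 * t3 = d then ξ t2 else 0)) g =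
    Ind (phi (fun t1 t2 t3 => if t1 * t2 * t3 = d then ξ t1 else 0)) g := by
  rw [swapA]
  congr 2
  funext t1 t2 t3
  rw [mul_comm t2 t1]

lemma xi_swap3 (d : F) (ξ : F → ℤ) (g : G F) :
    Ind (phi (fun t1 t2 t3 => if t1 * t2 * t3 = d then ξ t3 else 0)) g =
    Ind (phi (fun t1 t2 t3 => if t1 * t2 * t3 = d then ξ t1 else 0)) g := by
  rw [swapB, ← xi_swap2]
  congr 2
  funext t1 t2 t3
  rw [mul_right_comm]

def dtf (d : F) (g : G F) : ℤ := if (g : Matrix (Fin 3) (Fin 3) F).det = d then 1 else 0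

lemma T_dtf (h2 : (2 : F) ≠ 0) (d : F) (g : G F) : T (dtf d) g =
    ((Fintype.card F : ℤ) * ((Fintype.card F : ℤ) - 1) ^ 2 * ((Fintype.card F : ℤ) + 1) * ((Fintype.card F : ℤ) ^ 2 + (Fintype.card F : ℤ) + 1)) * dtf d g := by
  rw [← card_C3 h2, Finset.sum_mul]
  unfold T
  refine Finset.sum_congr rfl fun u _ => ?_
  by_cases hr : regU (u : Matrix (Fin 3) (Fin 3) F)
  · rw [if_pos hr, if_pos hr, one_mul, dtf, dtf, Units.val_mul, Matrix.det_mul, regU_det _ h2 hr, mul_one]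
  · rw [if_neg hr, if_neg hr, zero_mul]

lemma T_congr {f f' : G F → ℤ} (h : ∀ g, f g = f' g) (g : G F) : T f g = T f' g := by
  rw [show f = f' from funext h]

lemma Ind_congr {f f' : G F → ℤ} (h : ∀ g, f g = f' g) (g : G F) : Ind f g = Ind f' g := by
  rw [show f = f' from funext h]

/-- Twofold application of `T` to an induced function, for eigenfunctions. -/
lemma TT_eig (f f' : G F → ℤ) (l m : ℤ) (h : ∀ g, T f g = l * f' g) (h' : ∀ g, T f' g = m * f' g) (g : G F) :
    T (T (Ind f)) g = l * m * Ind f' g := by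
  have e : ∀ g, T (Ind f) g = l * Ind f' g := by
    intro g
    rw [T_Ind, Ind_congr h, Ind_smul]
  rw [T_congr e, T_smul, T_Ind, Ind_congr h', Ind_smul]; ring

lemma TT_sum (f f' : G F → ℤ) (g : G F) : T (T (fun x => f x + f' x)) g = T (T f) g + T (T f') g := by
  rw [T_congr (T_sum f f'), T_sum]

lemma TT_smul (c : ℤ) (f : G F → ℤ) (g : G F) : T (T (fun x => c * f x)) g = c * T (T f) g := by
  rw [T_congr (T_smul c f), T_smul]

lemma Ind_decomp (a b c : Fˣ) (d : F) (hd : (a : F) * b * c = d) (g : G F) :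
    ((Fintype.card F : ℤ) - 1) ^ 2 * Ind (phi (dlt a b c)) g =
      Ind (phi (tht a b c)) g + (Ind (phi (fun t1 t2 t3 => if t1 * t2 * t3 = d then xi a t1 else 0)) g +
      (Ind (phi (fun t1 t2 t3 => if t1 * t2 * t3 = d then xi b t1 else 0)) g +
      (Ind (phi (fun t1 t2 t3 => if t1 * t2 * t3 = d then xi c t1 else 0)) g +
        Ind (phi (fun t1 t2 t3 => if t1 * t2 * t3 = d then 1 else 0)) g))) := by
  rw [← Ind_smul, Ind_congr (decomp a b c d hd), Ind_sum, Ind_sum, Ind_sum, Ind_sum, xi_swap2 d (xi b), xi_swap3 d (xi c)]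

lemma TT_main (h2 : (2 : F) ≠ 0) (a b c b1 b2 b3 : Fˣ)
    (hab : b1 ≠ b2) (hac : b1 ≠ b3) (hbc : b2 ≠ b3) (hd : (b1 : F) * b2 * b3 = a * b * c)
    (n1 : ∀ x ∈ [a, b, c], x ≠ b1 ∧ x ≠ b2 ∧ x ≠ b3) (q : ℤ) (hq : (Fintype.card F : ℤ) = q) :
    (q - 1) ^ 2 * T (T (Ind (phi (dlt a b c)))) (dg b1 b2 b3) =
      (q * (q - 1) ^ 2) * (q * (q - 1) ^ 2) * (2 * (6 * (q ^ 3 * (q - 1) ^ 3)))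
      - 3 * ((q * (q - 1) ^ 2) * (q * (q - 1) ^ 2 * (q + 1)) * (3 * (q ^ 3 * (q - 1) ^ 3 * (q + 1))))
      + (q * (q - 1) ^ 2) * (q * (q - 1) ^ 2 * (q + 1) * (q ^ 2 + q + 1)) *
        (q ^ 3 * (q - 1) ^ 3 * (q + 1) * (q ^ 2 + q + 1)) := by
  have hdl : ∀ x ∈ [a, b, c], dl (x : F) b1 = 0 ∧ dl (x : F) b2 = 0 ∧ dl (x : F) b3 = 0 := by
    intro x hx
    obtain ⟨e1, e2, e3⟩ := n1 x hx
    unfold dl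
    exact ⟨if_neg fun h => e1 (Units.ext h.symm), if_neg fun h => e2 (Units.ext h.symm), if_neg fun h => e3 (Units.ext h.symm)⟩
  have ka := hdl a (by simp)
  have kb := hdl b (by simp)
  have kc := hdl c (by simp)
  have hx : ∀ x ∈ [a, b, c], T (T (Ind (phi (fun t1 t2 t3 => if t1 * t2 * t3 = (b1 : F) * b2 * b3 then xi x t1 else 0)))) (dg b1 b2 b3) =
      - ((q * (q - 1) ^ 2) * (q * (q - 1) ^ 2 * (q + 1)) * (3 * (q ^ 3 * (q - 1) ^ 3 * (q + 1)))) := by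
    intro x hx
    obtain ⟨e1, e2, e3⟩ := hdl x hx
    rw [TT_eig _ _ _ _ (claim3 h2 _ _ (sum_xi x)) (claim4 h2 _ _ (sum_xi x)),
      E3 b1 b2 b3 hab hac hbc _ rfl (xi x) (-1) (by simp [xi, e1]) (by simp [xi, e2]) (by simp [xi, e3]), hq]
    ring
  rw [← TT_smul, ← hq, T_congr (T_congr (Ind_decomp a b c _ hd.symm)), TT_sum, TT_sum, TT_sum, TT_sum,
    hx a (by simp), hx b (by simp), hx c (by simp)]
  rw [TT_eig _ _ _ _ (claim1 h2 _ (zm_tht a b c)) (claim1 h2 _ (zm_tht a b c)),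
    TT_eig _ (dtf ((b1 : F) * b2 * b3)) _ _ (claim2 h2 _) (T_dtf h2 _)]
  have k0 : Ind (dtf ((b1 : F) * b2 * b3)) (dg b1 b2 b3) = q ^ 3 * (q - 1) ^ 3 * (q + 1) * (q ^ 2 + q + 1) := by
    rw [← hq, ← card_G]
    unfold Ind
    have : ∀ p : G F, dtf ((b1 : F) * b2 * b3) (p⁻¹ * dg b1 b2 b3 * p) = 1 := by
      intro p
      rw [dtf, if_pos]
      rw [Units.val_mul, Units.val_mul, Matrix.det_mul, Matrix.det_mul, mul_comm, ← mul_assoc, ← Matrix.det_mul,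
        Units.mul_inv, Matrix.det_one, one_mul, dg, det_tri]
    simp [this]
  rw [k0, E2 b1 b2 b3 hab hac hbc (tht a b c) 2, hq]
  · ring
  · unfold tht; rw [if_pos (by rw [← hd])]; simp [dlt, ka, kb, kc]
  · unfold tht; rw [if_pos (by rw [← hd]; ring)]; simp [dlt, ka, kb, kc]
  · unfold tht; rw [if_pos (by rw [← hd]; ring)]; simp [dlt, ka, kb, kc]
  · unfold tht; rw [if_pos (by rw [← hd]; ring)]; simp [dlt, ka, kb, kc]
  · unfold tht; rw [if_pos (by rw [← hd]; ring)]; simp [dlt, ka, kb, kc]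
  · unfold tht; rw [if_pos (by rw [← hd]; ring)]; simp [dlt, ka, kb, kc]

end
end GL3

namespace GL3
open Matrix
open scoped Classical
noncomputable section
set_option linter.unusedSectionVars false
set_option linter.unusedSimpArgs false

variable {F : Type*} [Field F] [Fintype F]

def cl (a b c : Fˣ) (g : G F) : Prop := ∃ r : G F, g = r * dg a b c * r⁻¹

def clf (a b c : Fˣ) (g : G F) : ℤ := if cl a b c g then 1 else 0

lemma sum_phi_dlt (a b c : Fˣ) : ∑ g : G F, phi (dlt a b c) g = (Fintype.card F : ℤ) ^ 3 := by
  unfold phi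
  rw [sum_up]
  have h : ∀ a' b' c' : Fˣ, ∑ x : F, ∑ y : F, ∑ z : F, dlt a b c ((tri a' b' c' x y z : Matrix (Fin 3) (Fin 3) F) 0 0)
      ((tri a' b' c' x y z : Matrix (Fin 3) (Fin 3) F) 1 1) ((tri a' b' c' x y z : Matrix (Fin 3) (Fin 3) F) 2 2) =
      dl (a : F) a' * (dl (b : F) b' * (dl (c : F) c' * (Fintype.card F : ℤ) ^ 3)) := by
    intro a' b' c'
    simp [tri, dlt]
    ring
  simp only [h]
  simp only [← Finset.mul_sum, ← Finset.sum_mul, sum_dl, one_mul]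

lemma E1c (a b c : Fˣ) (hab : a ≠ b) (hac : a ≠ c) (hbc : b ≠ c) (g : G F) :
    Ind (phi (dlt a b c)) g = (Fintype.card F : ℤ) ^ 3 * ((Fintype.card F : ℤ) - 1) ^ 3 * clf a b c g := by
  rw [E1' a b c hab hac hbc]
  by_cases h : cl a b c g
  · rw [clf, if_pos h]
    unfold cl at h
    rw [if_pos h]
  · rw [clf, if_neg h]
    unfold cl at h
    rw [if_neg h]

lemma card_cl (a b c : Fˣ) (hab : a ≠ b) (hac : a ≠ c) (hbc : b ≠ c) (q : ℤ) (hq : (Fintype.card F : ℤ) = q) :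
    (q ^ 3 * (q - 1) ^ 3) * ∑ g : G F, clf a b c g = q ^ 3 * (q - 1) ^ 3 * (q + 1) * (q ^ 2 + q + 1) * q ^ 3 := by
  rw [← hq, Finset.mul_sum]
  have h : ∀ g : G F, (Fintype.card F : ℤ) ^ 3 * ((Fintype.card F : ℤ) - 1) ^ 3 * clf a b c g = Ind (phi (dlt a b c)) g :=
    fun g => (E1c a b c hab hac hbc g).symm
  rw [Finset.sum_congr rfl fun g _ => h g]
  unfold Ind
  rw [Finset.sum_comm]
  have h' : ∀ p : G F, ∑ g : G F, phi (dlt a b c) (p⁻¹ * g * p) = (Fintype.card F : ℤ) ^ 3 := by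
    intro p
    rw [← sum_phi_dlt a b c, ← Equiv.sum_comp (MulAut.conj p⁻¹).toEquiv (phi (dlt a b c))]
    simp
  rw [Finset.sum_congr rfl fun p _ => h' p, ← card_G]
  simp

lemma clf_conj (a b c : Fˣ) (g r : G F) : clf a b c (r * g * r⁻¹) = clf a b c g := by
  unfold clf
  refine if_congr ⟨?_, ?_⟩ rfl rfl
  · rintro ⟨s, h⟩
    refine ⟨r⁻¹ * s, ?_⟩
    rw [show r⁻¹ * s * dg a b c * (r⁻¹ * s)⁻¹ = r⁻¹ * (s * dg a b c * s⁻¹) * r by group, ← h]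
    group
  · rintro ⟨s, rfl⟩
    exact ⟨r * s, by group⟩

lemma T_class (f : G F → ℤ) (hf : ∀ g r, f (r * g * r⁻¹) = f g) (g r : G F) : T f (r * g * r⁻¹) = T f g := by
  rw [mul_assoc, show r * (g * r⁻¹) = (r * g) * r⁻¹ by group, T_conj]
  unfold T
  refine Finset.sum_congr rfl fun u _ => ?_
  rw [← hf (g * u) r]
  simp only [mul_assoc]

lemma final_count (h2 : (2 : F) ≠ 0) (a b c b1 b2 b3 : Fˣ)
    (hab : a ≠ b) (hac : a ≠ c) (hbc : b ≠ c)
    (hab' : b1 ≠ b2) (hac' : b1 ≠ b3) (hbc' : b2 ≠ b3) (hd : (b1 : F) * b2 * b3 = a * b * c)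
    (n1 : ∀ x ∈ [a, b, c], x ≠ b1 ∧ x ≠ b2 ∧ x ≠ b3) (q : ℤ) (hq : (Fintype.card F : ℤ) = q) :
    ∑ s : G F, clf b1 b2 b3 s * T (T (clf a b c)) s =
      (q ^ 3 * (q - 1) ^ 2 * (q + 1) * (q ^ 2 + q + 1)) *
       (q ^ 2 * (q + 1) ^ 2 * (q ^ 2 + q + 1) ^ 2 - 9 * q ^ 2 * (q + 1) ^ 2 + 12 * q ^ 2) := by
  have h1 : ∀ s : G F, clf b1 b2 b3 s * T (T (clf a b c)) s = clf b1 b2 b3 s * T (T (clf a b c)) (dg b1 b2 b3) := by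
    intro s
    by_cases hs : cl b1 b2 b3 s
    · obtain ⟨r, rfl⟩ := hs
      rw [T_class _ (T_class _ (clf_conj a b c))]
    · rw [clf, if_neg hs, zero_mul, zero_mul]
  rw [Finset.sum_congr rfl fun s _ => h1 s, ← Finset.sum_mul]
  have e1 := card_cl b1 b2 b3 hab' hac' hbc' q hq
  have e2 := TT_main h2 a b c b1 b2 b3 hab' hac' hbc' hd n1 q hq
  have e3 : ∀ g : G F, Ind (phi (dlt a b c)) g = (q ^ 3 * (q - 1) ^ 3) * clf a b c g := by
    intro g; rw [← hq]; exact E1c a b c hab hac hbc g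
  rw [T_congr (T_congr e3), TT_smul] at e2
  generalize ∑ g : G F, clf b1 b2 b3 g = A at *
  generalize T (T (clf a b c)) (dg b1 b2 b3) = B at *
  have hq2 : 2 ≤ q := hq ▸ q_ge
  have n0 : q ≠ 0 := by omega
  have n1 : q - 1 ≠ 0 := by omega
  have hK : (q ^ 3 * (q - 1) ^ 3) * (q ^ 3 * (q - 1) ^ 3) * (q - 1) ^ 2 ≠ 0 := by positivity
  apply mul_left_cancel₀ hK
  linear_combination ((q ^ 3 * (q - 1) ^ 3) * (q - 1) ^ 2 * B) * e1 + (q ^ 3 * (q - 1) ^ 3 * (q + 1) * (q ^ 2 + q + 1) * q ^ 3) * e2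

lemma regU_conj_J (M : Matrix (Fin 3) (Fin 3) F) :
    IsConj (!![1, 1, 0; 0, 1, 1; 0, 0, 1] : Matrix (Fin 3) (Fin 3) F) M ↔ regU M := by
  constructor
  · rintro ⟨c, hc⟩
    have hJ : regU (!![1, 1, 0; 0, 1, 1; 0, 0, 1] : Matrix (Fin 3) (Fin 3) F) := by
      constructor
      · ext i j
        fin_cases i <;> fin_cases j <;> simp [pow_succ, Matrix.mul_apply, Fin.sum_univ_three]
      · intro h
        have := congrFun (congrFun h 0) 2
        simp [pow_succ, Matrix.mul_apply, Fin.sum_univ_three] at this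
    have e : ∀ k : ℕ, (c : Matrix (Fin 3) (Fin 3) F) * (!![1, 1, 0; 0, 1, 1; 0, 0, 1] - 1) ^ k = (M - 1) ^ k * (c : Matrix (Fin 3) (Fin 3) F) := by
      intro k
      have : SemiconjBy (c : Matrix (Fin 3) (Fin 3) F) (!![1, 1, 0; 0, 1, 1; 0, 0, 1] - 1) (M - 1) :=
        hc.sub_right (SemiconjBy.one_right _)
      exact this.pow_right k
    constructor
    · have := e 3
      rw [hJ.1, mul_zero] at this
      exact (Units.mul_left_eq_zero c).1 this.symm
    · intro h
      have := e 2
      rw [h, zero_mul] at this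
      exact hJ.2 ((Units.mul_right_eq_zero c).1 this)
  · rintro ⟨h3, h2⟩
    obtain ⟨v, hv⟩ : ∃ v : Fin 3 → F, (M - 1) ^ 2 *ᵥ v ≠ 0 := by
      by_contra! h
      apply h2
      ext i j
      have := congrFun (h (Pi.single j 1)) i
      simpa using this
    set N := M - 1 with hN
    have hM : M = 1 + N := by rw [hN]; abel
    have hv' : N *ᵥ (N *ᵥ v) ≠ 0 := by rwa [Matrix.mulVec_mulVec, ← pow_two]
    have h3' : N *ᵥ (N *ᵥ (N *ᵥ v)) = 0 := by
      rw [Matrix.mulVec_mulVec, Matrix.mulVec_mulVec, ← pow_two, ← pow_succ, h3, Matrix.zero_mulVec]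
    let P : Matrix (Fin 3) (Fin 3) F := Matrix.of fun i j => ![(N *ᵥ (N *ᵥ v)) i, (N *ᵥ v) i, v i] j
    have hP : P.det ≠ 0 := by
      intro h0
      obtain ⟨w, hw, hw0⟩ := Matrix.exists_mulVec_eq_zero_iff.2 h0
      have e : w 0 • (N *ᵥ (N *ᵥ v)) + w 1 • (N *ᵥ v) + w 2 • v = 0 := by
        rw [← hw0]
        ext i
        have e0 : (P *ᵥ w) i = P i 0 * w 0 + P i 1 * w 1 + P i 2 * w 2 := by
          simp only [Matrix.mulVec, dotProduct, Fin.sum_univ_three]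
        have e1 : P i 0 = (N *ᵥ (N *ᵥ v)) i := rfl
        have e2 : P i 1 = (N *ᵥ v) i := rfl
        have e3 : P i 2 = v i := rfl
        rw [e0, e1, e2, e3]
        simp only [Pi.add_apply, Pi.smul_apply, smul_eq_mul]
        ring
      have e1 := congrArg (fun x => N *ᵥ x) e
      simp only [Matrix.mulVec_add, Matrix.mulVec_smul, h3', smul_zero, zero_add, Matrix.mulVec_zero] at e1
      have e2 := congrArg (fun x => N *ᵥ x) e1
      simp only [Matrix.mulVec_add, Matrix.mulVec_smul, h3', smul_zero, zero_add, Matrix.mulVec_zero] at e2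
      have w2 : w 2 = 0 := (smul_eq_zero.1 e2).resolve_right hv'
      rw [w2, zero_smul, add_zero] at e1
      have w1 : w 1 = 0 := (smul_eq_zero.1 e1).resolve_right hv'
      rw [w2, w1, zero_smul, zero_smul, add_zero, add_zero] at e
      have w0 : w 0 = 0 := (smul_eq_zero.1 e).resolve_right hv'
      apply hw
      ext i
      fin_cases i <;> simp [w0, w1, w2]
    refine ⟨((Matrix.isUnit_iff_isUnit_det P).2 hP.isUnit).unit, ?_⟩
    change P * _ = M * P
    rw [hM, add_mul, one_mul]
    have hNP : ∀ i j, (N * P) i j = ![0, (N *ᵥ (N *ᵥ v)) i, (N *ᵥ v) i] j := by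
      intro i j
      have : (N * P) i j = (N *ᵥ (fun k => P k j)) i := rfl
      rw [this]
      fin_cases j
      · exact congrFun h3' i
      · rfl
      · rfl
    ext i j
    rw [Matrix.add_apply, hNP]
    fin_cases j <;> simp [P, Matrix.mul_apply, Fin.sum_univ_three, add_comm]

lemma conj_diag (a b c : Fˣ) (M : Matrix (Fin 3) (Fin 3) F) :
    IsConj (Matrix.diagonal ![(a : F), (b : F), (c : F)]) M ↔ ∃ g : G F, cl a b c g ∧ M = g := by
  have hdg : ((dg a b c : G F) : Matrix (Fin 3) (Fin 3) F) = Matrix.diagonal ![(a : F), (b : F), (c : F)] := by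
    ext i j
    fin_cases i <;> fin_cases j <;> simp [dg, tri]
  rw [← hdg]
  constructor
  · rintro ⟨r, hr⟩
    refine ⟨r * dg a b c * r⁻¹, ⟨r, rfl⟩, ?_⟩
    rw [Units.val_mul, Units.val_mul, hr.eq, mul_assoc, Units.mul_inv, mul_one]
  · rintro ⟨g, ⟨r, rfl⟩, rfl⟩
    refine ⟨r, ?_⟩
    change (r : Matrix (Fin 3) (Fin 3) F) * _ = _ * (r : Matrix (Fin 3) (Fin 3) F)
    rw [← Units.val_mul, ← Units.val_mul]
    congr 1
    group

lemma dg_inv (a b c : Fˣ) : (dg a b c : G F)⁻¹ = dg a⁻¹ b⁻¹ c⁻¹ := by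
  rw [inv_eq_iff_mul_eq_one]
  ext i j
  fin_cases i <;> fin_cases j <;> simp [dg, tri, Matrix.mul_apply, Fin.sum_univ_three]

lemma cl_inv (a b c : Fˣ) (g : G F) : cl a⁻¹ b⁻¹ c⁻¹ g ↔ cl a b c g⁻¹ := by
  constructor
  · rintro ⟨r, rfl⟩
    refine ⟨r, ?_⟩
    rw [← dg_inv]; group
  · rintro ⟨r, h⟩
    refine ⟨r, ?_⟩
    rw [← dg_inv, ← inv_inv g, h]; group

lemma regU_unit (h2 : (2 : F) ≠ 0) (M : Matrix (Fin 3) (Fin 3) F) (h : regU M) : ∃ g : G F, M = g := by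
  have : IsUnit M := (Matrix.isUnit_iff_isUnit_det M).2 (by rw [regU_det M h2 h]; exact isUnit_one)
  exact ⟨this.unit, rfl⟩

lemma nat_count (h2 : (2 : F) ≠ 0) (a b c b1 b2 b3 : Fˣ) :
    (Nat.card {x : Matrix (Fin 3) (Fin 3) F × Matrix (Fin 3) (Fin 3) F ×
        Matrix (Fin 3) (Fin 3) F × Matrix (Fin 3) (Fin 3) F //
        IsConj (Matrix.diagonal ![(a : F), (b : F), (c : F)]) x.1 ∧
        IsConj (Matrix.diagonal ![(b1 : F), (b2 : F), (b3 : F)]) x.2.1 ∧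
        IsConj (!![1, 1, 0; 0, 1, 1; 0, 0, 1] : Matrix (Fin 3) (Fin 3) F) x.2.2.1 ∧
        IsConj (!![1, 1, 0; 0, 1, 1; 0, 0, 1] : Matrix (Fin 3) (Fin 3) F) x.2.2.2 ∧
        x.1 * x.2.1 * x.2.2.1 * x.2.2.2 = 1} : ℤ) =
    ∑ s : G F, clf b1 b2 b3 s * T (T (clf a⁻¹ b⁻¹ c⁻¹)) s := by
  let Y := {y : G F × G F × G F // cl b1 b2 b3 y.1 ∧ regU (y.2.1 : Matrix (Fin 3) (Fin 3) F) ∧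
    regU (y.2.2 : Matrix (Fin 3) (Fin 3) F) ∧ cl a⁻¹ b⁻¹ c⁻¹ (y.1 * y.2.1 * y.2.2)}
  have hY : (Nat.card Y : ℤ) = ∑ s : G F, clf b1 b2 b3 s * T (T (clf a⁻¹ b⁻¹ c⁻¹)) s := by
    rw [Nat.card_eq_fintype_card, Fintype.card_subtype, Finset.card_filter, Fintype.sum_prod_type]
    push_cast
    refine Finset.sum_congr rfl fun s _ => ?_
    rw [Fintype.sum_prod_type]
    unfold T
    rw [Finset.mul_sum]
    refine Finset.sum_congr rfl fun u _ => ?_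
    by_cases hs : cl b1 b2 b3 s
    · by_cases hu : regU (u : Matrix (Fin 3) (Fin 3) F)
      · rw [if_pos hu, clf, if_pos hs, one_mul]
        refine Finset.sum_congr rfl fun v _ => ?_
        by_cases hv : regU (v : Matrix (Fin 3) (Fin 3) F)
        · simp [hs, hu, hv, clf]
        · simp [hs, hu, hv, clf]
      · simp [hu]
    · simp [clf, hs]
  rw [← hY]
  congr 1
  have hmem : ∀ y : Y, IsConj (Matrix.diagonal ![(a : F), (b : F), (c : F)]) (((y.1.1 * y.1.2.1 * y.1.2.2)⁻¹ : G F) : Matrix (Fin 3) (Fin 3) F) ∧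
        IsConj (Matrix.diagonal ![(b1 : F), (b2 : F), (b3 : F)]) (y.1.1 : Matrix (Fin 3) (Fin 3) F) ∧
        IsConj (!![1, 1, 0; 0, 1, 1; 0, 0, 1] : Matrix (Fin 3) (Fin 3) F) (y.1.2.1 : Matrix (Fin 3) (Fin 3) F) ∧
        IsConj (!![1, 1, 0; 0, 1, 1; 0, 0, 1] : Matrix (Fin 3) (Fin 3) F) (y.1.2.2 : Matrix (Fin 3) (Fin 3) F) ∧
        (((y.1.1 * y.1.2.1 * y.1.2.2)⁻¹ : G F) : Matrix (Fin 3) (Fin 3) F) * (y.1.1 : Matrix (Fin 3) (Fin 3) F) * (y.1.2.1 : Matrix (Fin 3) (Fin 3) F) * (y.1.2.2 : Matrix (Fin 3) (Fin 3) F) = 1 := by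
    rintro ⟨⟨s, u, v⟩, hs, hu, hv, hh⟩
    refine ⟨(conj_diag _ _ _ _).2 ⟨_, (cl_inv _ _ _ _).1 hh, rfl⟩, (conj_diag _ _ _ _).2 ⟨_, hs, rfl⟩, (regU_conj_J _).2 hu, (regU_conj_J _).2 hv, ?_⟩
    dsimp only
    rw [← Units.val_mul, ← Units.val_mul, ← Units.val_mul, ← Units.val_one]
    congr 1
    group
  refine (Nat.card_eq_of_bijective (fun y : Y => ⟨((((y.1.1 * y.1.2.1 * y.1.2.2)⁻¹ : G F) : Matrix (Fin 3) (Fin 3) F), (y.1.1 : Matrix (Fin 3) (Fin 3) F), (y.1.2.1 : Matrix (Fin 3) (Fin 3) F), (y.1.2.2 : Matrix (Fin 3) (Fin 3) F)), hmem y⟩) ⟨?_, ?_⟩).symm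
  · rintro ⟨⟨s, u, v⟩, h⟩ ⟨⟨s', u', v'⟩, h'⟩ he
    simp only [Subtype.mk.injEq, Prod.mk.injEq, Units.val_inj] at he
    obtain ⟨-, rfl, rfl, rfl⟩ := he
    rfl
  · rintro ⟨⟨S1, S2, S3, S4⟩, h1, h2', h3, h4, h5⟩
    dsimp only at h1 h2' h3 h4 h5
    obtain ⟨g, hg, rfl⟩ := (conj_diag _ _ _ _).1 h1
    obtain ⟨s, hs, rfl⟩ := (conj_diag _ _ _ _).1 h2'
    have hu := (regU_conj_J _).1 h3
    have hv := (regU_conj_J _).1 h4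
    obtain ⟨u, rfl⟩ := regU_unit h2 _ hu
    obtain ⟨v, rfl⟩ := regU_unit h2 _ hv
    have h6 : g * (s * u * v) = 1 := by
      rw [← Units.val_mul, ← Units.val_mul, ← Units.val_mul] at h5
      rw [← mul_assoc, ← mul_assoc]
      exact Units.ext h5
    have h7 : g = (s * u * v)⁻¹ := eq_inv_of_mul_eq_one_left h6
    refine ⟨⟨(s, u, v), hs, hu, hv, ?_⟩, ?_⟩
    · rw [cl_inv, ← h7]; exact hg
    · simp only [← h7]

end
end GL3

/-- Genus 0, four punctures, `GL₃`, two generic regular semisimple classes and two regular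
unipotent classes: the number of quadruples `(S₁,S₂,S₃,S₄) ∈ C₁ × C₂ × C₃ × C₄` with
`S₁S₂S₃S₄ = 1` is `(|GL₃(F)|/(q−1))·(q²(q+1)²(q²+q+1)² − 9q²(q+1)² + 12q²)`. -/
theorem GL3_quadruple_count_two_ss_two_unipotent
    {F : Type*} [Field F] [Fintype F] (hchar2 : ringChar F ≠ 2) (hchar3 : ringChar F ≠ 3)
    (q : ℕ) (hq : q = Fintype.card F)
    (a₁ a₂ a₃ b₁ b₂ b₃ : F)
    (ha0 : a₁ ≠ 0) (ha0' : a₂ ≠ 0) (ha0'' : a₃ ≠ 0)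
    (hb0 : b₁ ≠ 0) (hb0' : b₂ ≠ 0) (hb0'' : b₃ ≠ 0)
    (ha : Function.Injective ![a₁, a₂, a₃]) (hb : Function.Injective ![b₁, b₂, b₃])
    (hprod : (a₁ * a₂ * a₃) * (b₁ * b₂ * b₃) = 1)
    (hgen : ∀ i j : Fin 3, ![a₁, a₂, a₃] i * ![b₁, b₂, b₃] j ≠ 1) :
    (Nat.card {x : Matrix (Fin 3) (Fin 3) F × Matrix (Fin 3) (Fin 3) F ×
        Matrix (Fin 3) (Fin 3) F × Matrix (Fin 3) (Fin 3) F //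
        IsConj (Matrix.diagonal ![a₁, a₂, a₃]) x.1 ∧
        IsConj (Matrix.diagonal ![b₁, b₂, b₃]) x.2.1 ∧
        IsConj (!![1, 1, 0; 0, 1, 1; 0, 0, 1] : Matrix (Fin 3) (Fin 3) F) x.2.2.1 ∧
        IsConj (!![1, 1, 0; 0, 1, 1; 0, 0, 1] : Matrix (Fin 3) (Fin 3) F) x.2.2.2 ∧
        x.1 * x.2.1 * x.2.2.1 * x.2.2.2 = 1} : ℤ) =
      ((Nat.card (Matrix (Fin 3) (Fin 3) F)ˣ : ℤ) / ((q : ℤ) - 1)) *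
        ((q : ℤ) ^ 2 * ((q : ℤ) + 1) ^ 2 * ((q : ℤ) ^ 2 + q + 1) ^ 2 -
          9 * (q : ℤ) ^ 2 * ((q : ℤ) + 1) ^ 2 + 12 * (q : ℤ) ^ 2) := by
  classical
  have h2 : (2 : F) ≠ 0 := Ring.two_ne_zero hchar2
  have na : ∀ i j : Fin 3, i ≠ j → ![a₁, a₂, a₃] i ≠ ![a₁, a₂, a₃] j := fun i j h h' => h (ha h')
  have nb : ∀ i j : Fin 3, i ≠ j → ![b₁, b₂, b₃] i ≠ ![b₁, b₂, b₃] j := fun i j h h' => h (hb h')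
  have na01 := na 0 1 (by decide)
  have na02 := na 0 2 (by decide)
  have na12 := na 1 2 (by decide)
  have nb01 := nb 0 1 (by decide)
  have nb02 := nb 0 2 (by decide)
  have nb12 := nb 1 2 (by decide)
  have g00 := hgen 0 0
  have g01 := hgen 0 1
  have g02 := hgen 0 2
  have g10 := hgen 1 0
  have g11 := hgen 1 1
  have g12 := hgen 1 2
  have g20 := hgen 2 0
  have g21 := hgen 2 1
  have g22 := hgen 2 2
  simp at na01 na02 na12 nb01 nb02 nb12 g00 g01 g02 g10 g11 g12 g20 g21 g22
  clear ha hb na nb hgen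
  lift a₁ to Fˣ using isUnit_iff_ne_zero.2 ha0
  lift a₂ to Fˣ using isUnit_iff_ne_zero.2 ha0'
  lift a₃ to Fˣ using isUnit_iff_ne_zero.2 ha0''
  lift b₁ to Fˣ using isUnit_iff_ne_zero.2 hb0
  lift b₂ to Fˣ using isUnit_iff_ne_zero.2 hb0'
  lift b₃ to Fˣ using isUnit_iff_ne_zero.2 hb0''
  rw [GL3.nat_count h2]
  have key : ∀ x y : Fˣ, (x : F) * y ≠ 1 → x⁻¹ ≠ y := by
    rintro x y h rfl
    exact h (by simp)
  have hc : (Fintype.card F : ℤ) = (q : ℤ) := by rw [hq]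
  rw [GL3.final_count h2 _ _ _ _ _ _ (fun h => na01 (by rw [inv_inj.1 h])) (fun h => na02 (by rw [inv_inj.1 h]))
    (fun h => na12 (by rw [inv_inj.1 h])) (fun h => nb01 (by rw [h])) (fun h => nb02 (by rw [h])) (fun h => nb12 (by rw [h]))
    ?_ ?_ q hc]
  · congr 1
    have hG : (Nat.card (Matrix (Fin 3) (Fin 3) F)ˣ : ℤ) = (q : ℤ) ^ 3 * ((q : ℤ) - 1) ^ 3 * ((q : ℤ) + 1) * ((q : ℤ) ^ 2 + q + 1) := by
      rw [← hc, Nat.card_eq_fintype_card]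
      convert GL3.card_G (F := F)
    have hq2 : (2 : ℤ) ≤ q := hc ▸ GL3.q_ge
    symm
    apply Int.ediv_eq_of_eq_mul_left (by omega)
    rw [hG]; ring
  · have e1 := a₁.ne_zero
    have e2 := a₂.ne_zero
    have e3 := a₃.ne_zero
    simp only [Units.val_inv_eq_inv_val]
    field_simp
    linear_combination hprod
  · intro x hx
    simp only [List.mem_cons, List.not_mem_nil, or_false] at hx
    rcases hx with rfl | rfl | rfl
    · exact ⟨key _ _ g00, key _ _ g01, key _ _ g02⟩
    · exact ⟨key _ _ g10, key _ _ g11, key _ _ g12⟩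
    · exact ⟨key _ _ g20, key _ _ g21, key _ _ g22⟩
end
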